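/- arXiv:2506.11872 — 3 statements merged into one kernel-verified Lean document; each statement's English description precedes it below -/
import Mathlib

section
/- Let X be a real Banach space and let Y ⊆ X* be a total linear subspace such that X equipped with the Mackey topology μ(X,Y) is quasi-complete. Let M : Σ → b(X) be a set-valued map defined on a σ-algebra Σ such that: (i) M(A) is relatively σ(X,Y)-compact for every A ∈ Σ; and (ii) the support map s(x*,M) is countably additive for every x* ∈ Y. Then the set ⋃_{A∈Σ} M(A) is relatively σ(X,Y)-compact. -/
/-!
Let `C` be the `σ(X, Y)`-closure of the union of the values of `M`. For `f ∈ Y` the real set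
function `A ↦ s(f, M A)` is a signed measure, so it is maximal at the positive part `P` of a Hahn
decomposition (`CountablyAdditive.exists_max`). As the closure of `M P` is compact, `f` attains its
supremum over `C` there. It remains to prove a version of James' theorem
(`isCompact_of_attains`): if every `f ∈ Y` attains its supremum on the `σ(X, Y)`-closed set `C`, and
`X` is Mackey quasi-complete, then `C` is `σ(X, Y)`-compact.

Since `C` is pointwise bounded on `Y`, it suffices that each pointwise limit `φ : Y → ℝ` of
evaluations at points of `C` is an evaluation at a point of `X`. Let `K ⊆ Y` be absolutely convex
and weak*-compact. By Baire's theorem `K` is uniformly bounded on `C` (`exists_uniform_bound`).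

* If `φ` were not weak*-continuous on `K`, an alternating choice would give `f n ∈ K` and `x n ∈ C`
  with `f i (x n)` large for `i < n` and small for `i > n`. This is excluded by the core of James'
  theorem (`JamesData.no_triangle`), which follows Pryce and Simons: after passing to a filter along
  which `p (h - w)`, with `p` the support function of `C`, is the same for all cluster points `w` of
  `f` (`JamesData.pryce`), near-minimizing convex combinations `g n` of tails of `f` are chosen
  successively (`JamesData.exists_increasing`); at a point of `C` where `∑ r ^ n • (g n - w)`
  attains its supremum, all `g n - w` are bounded below by one positive constant, although `w` is a
  limit of the `g n`.
* As `φ` is continuous on `K`, Sion's minimax theorem makes it a uniform limit on `K` of evaluations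
  at points of the convex hull of `C` (`IsLimitOf.exists_uniform`).

So `φ` is a limit of points of the convex hull of `C` for the uniformity of `μ(X, Y)`. These points
lie in a Mackey-closed bounded set, complete by assumption, and `φ` is an evaluation
(`exists_eval_eq`).
-/

/-- The topology `σ(X, Y)` of pointwise convergence on a set `Y ⊆ X*`. -/
def sigmaTop {X : Type*} [NormedAddCommGroup X] [NormedSpace ℝ X]
    (Y : Set (X →L[ℝ] ℝ)) : TopologicalSpace X :=
  TopologicalSpace.induced (fun x => fun y : Y => (y : X →L[ℝ] ℝ) x) Pi.topologicalSpace

/-- The weak* topology on `X*`: pointwise convergence on `X`. -/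
def weakStarTop (X : Type*) [NormedAddCommGroup X] [NormedSpace ℝ X] :
    TopologicalSpace (X →L[ℝ] ℝ) :=
  TopologicalSpace.induced (fun f : X →L[ℝ] ℝ => fun x : X => f x) Pi.topologicalSpace

/-- The family of absolutely convex, weak*-compact subsets of `Y ⊆ X*`. -/
def mackeyFamily {X : Type*} [NormedAddCommGroup X] [NormedSpace ℝ X]
    (Y : Submodule ℝ (X →L[ℝ] ℝ)) : Set (Set (X →L[ℝ] ℝ)) :=
  {S | S ⊆ (Y : Set (X →L[ℝ] ℝ)) ∧ Convex ℝ S ∧ Balanced ℝ S ∧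
    @IsCompact (X →L[ℝ] ℝ) (weakStarTop X) S}

/-- The Mackey uniformity `μ(X, Y)`: the uniformity on `X` of uniform convergence on
absolutely convex weak*-compact subsets of `Y`. -/
noncomputable def mackeyUniformity {X : Type*} [NormedAddCommGroup X] [NormedSpace ℝ X]
    (Y : Submodule ℝ (X →L[ℝ] ℝ)) : UniformSpace X :=
  UniformSpace.comap
    (fun x => UniformOnFun.ofFun (mackeyFamily Y) (fun f : X →L[ℝ] ℝ => f x))
    (UniformOnFun.uniformSpace (X →L[ℝ] ℝ) ℝ (mackeyFamily Y))

/-- The Mackey topology `μ(X, Y)`. -/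
noncomputable def mackeyTop {X : Type*} [NormedAddCommGroup X] [NormedSpace ℝ X]
    (Y : Submodule ℝ (X →L[ℝ] ℝ)) : TopologicalSpace X :=
  (mackeyUniformity Y).toTopologicalSpace

/-- The support functional `s(x*, C) = sup x*(C)`. -/
noncomputable def supportFn {X : Type*} [NormedAddCommGroup X] [NormedSpace ℝ X]
    (f : X →L[ℝ] ℝ) (C : Set X) : ℝ := sSup (f '' C)

/-- A set function on a σ-algebra, with values in a topological abelian monoid, is
countably additive. -/
def CountablyAdditive {Ω E : Type*} [MeasurableSpace Ω] [AddCommMonoid E]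
    [TopologicalSpace E] (ν : Set Ω → E) : Prop :=
  ∀ A : ℕ → Set Ω, (∀ n, MeasurableSet (A n)) → Pairwise (Function.onFun Disjoint A) →
    HasSum (fun n => ν (A n)) (ν (⋃ n, A n))

open Filter Topology Set
open scoped Pointwise

/-! ### James' theorem: sequences in an absolutely convex set -/

section James

variable {X : Type*} [NormedAddCommGroup X] [NormedSpace ℝ X]

/-- The functionals in `K` lying pointwise between the lower and the upper limit of `f` along `F`.
Only the upper bound is required: the lower one follows by replacing `x` with `-x`. -/
def betweenLimits (K : Set (X →L[ℝ] ℝ)) (f : ℕ → X →L[ℝ] ℝ) (F : Filter ℕ) :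
    Set (X →L[ℝ] ℝ) :=
  {w | w ∈ K ∧ ∀ (x : X) (a : ℝ), (∀ᶠ m in F, f m x ≤ a) → w x ≤ a}

theorem betweenLimits_mono {K : Set (X →L[ℝ] ℝ)} {f : ℕ → X →L[ℝ] ℝ} {F F' : Filter ℕ}
    (h : F ≤ F') : betweenLimits K f F ⊆ betweenLimits K f F' :=
  fun _ hw => ⟨hw.1, fun x a hx => hw.2 x a (hx.filter_mono h)⟩

/-- The setting of James' theorem: `C` is a set on which every functional in the subspace `Y`
attains its supremum `p g`, and `K ⊆ Y` is absolutely convex, uniformly bounded on `C` by `c`, and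
closed under pointwise limits of sequences along a free ultrafilter. -/
structure JamesData (Y : Submodule ℝ (X →L[ℝ] ℝ)) (K : Set (X →L[ℝ] ℝ)) (C : Set X)
    (p : (X →L[ℝ] ℝ) → ℝ) (c : ℝ) : Prop where
  sub : K ⊆ Y
  conv : Convex ℝ K
  bal : Balanced ℝ K
  lim : ∀ u : ℕ → X →L[ℝ] ℝ, (∀ n, u n ∈ K) →
    ∃ G ∈ K, ∀ x, Tendsto (fun n => u n x) (hyperfilter ℕ) (𝓝 (G x))
  le_p : ∀ g ∈ Y, ∀ x ∈ C, g x ≤ p g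
  att : ∀ g ∈ Y, ∃ x ∈ C, g x = p g
  cpos : 0 < c
  bd : ∀ g ∈ K, ∀ x ∈ C, |g x| ≤ c

namespace JamesData

variable {Y : Submodule ℝ (X →L[ℝ] ℝ)} {K : Set (X →L[ℝ] ℝ)} {C : Set X}
  {p : (X →L[ℝ] ℝ) → ℝ} {c : ℝ}

theorem p_le (J : JamesData Y K C p c) {g : X →L[ℝ] ℝ} (hg : g ∈ Y) {a : ℝ}
    (h : ∀ x ∈ C, g x ≤ a) : p g ≤ a := by
  obtain ⟨x, hx, e⟩ := J.att g hg
  rw [← e]; exact h x hx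

theorem p_smul (J : JamesData Y K C p c) {g : X →L[ℝ] ℝ} (hg : g ∈ Y) {b : ℝ} (hb : 0 ≤ b) :
    p (b • g) = b * p g := by
  apply le_antisymm
  · apply J.p_le (Y.smul_mem _ hg)
    intro x hx
    simpa using mul_le_mul_of_nonneg_left (J.le_p g hg x hx) hb
  · obtain ⟨x, hx, e⟩ := J.att g hg
    have := J.le_p (b • g) (Y.smul_mem _ hg) x hx
    simpa [e] using this

theorem p_add (J : JamesData Y K C p c) {g h : X →L[ℝ] ℝ} (hg : g ∈ Y) (hh : h ∈ Y) :
    p (g + h) ≤ p g + p h := by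
  apply J.p_le (Y.add_mem hg hh)
  intro x hx
  simpa using add_le_add (J.le_p g hg x hx) (J.le_p h hh x hx)

/-- One refinement step of Pryce's diagonal argument: cutting `F` by a suitable half-space makes
`p (h - w)` nearly independent of `w ∈ betweenLimits K f F`. -/
theorem pryce_step (J : JamesData Y K C p c) (f : ℕ → X →L[ℝ] ℝ)
    (F : Filter ℕ) [F.NeBot] {h : X →L[ℝ] ℝ} (hh : h ∈ Y) {η : ℝ} (hη : 0 < η) :
    ∃ A : Set ℕ, (F ⊓ 𝓟 A).NeBot ∧ ∀ w ∈ betweenLimits K f F,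
      ∀ w' ∈ betweenLimits K f (F ⊓ 𝓟 A), p (h - w) ≤ p (h - w') + η := by
  by_cases hne : (betweenLimits K f F).Nonempty
  · have hbdd : BddAbove ((fun w => p (h - w)) '' betweenLimits K f F) := by
      refine ⟨p h + c, ?_⟩
      rintro _ ⟨w, hw, rfl⟩
      apply J.p_le (Y.sub_mem hh (J.sub hw.1))
      intro x hx
      have h1 := J.le_p h hh x hx
      have h2 := (abs_le.1 (J.bd w hw.1 x hx)).1
      simp only [sub_apply]; linarith
    obtain ⟨_, ⟨w, hw, rfl⟩, hlt⟩ := exists_lt_of_lt_csSup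
      (hne.image (fun w => p (h - w)))
      (show sSup ((fun w => p (h - w)) '' betweenLimits K f F) - η / 2 < _ by linarith)
    obtain ⟨x, hxC, hx⟩ := J.att (h - w) (Y.sub_mem hh (J.sub hw.1))
    refine ⟨{m | f m x ≤ w x + η / 2}, ?_, ?_⟩
    · rw [← frequently_mem_iff_neBot]
      intro hcon
      have : w (-x) ≤ -(w x + η / 2) := by
        apply hw.2
        filter_upwards [hcon] with m hm
        simp only [not_le] at hm
        simp only [map_neg]; linarith
      simp only [map_neg] at this; linarith
    · intro v hv w' hw'
      have h1 : w' x ≤ w x + η / 2 := by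
        apply hw'.2
        exact mem_inf_of_right (mem_principal_self _)
      have h2 := J.le_p (h - w') (Y.sub_mem hh (J.sub hw'.1)) x hxC
      have h3 : p (h - v) ≤ sSup ((fun w => p (h - w)) '' betweenLimits K f F) :=
        le_csSup hbdd ⟨v, hv, rfl⟩
      simp only [sub_apply] at hx h2
      have hlt' : _ < p (h - w) := hlt
      linarith
  · exact ⟨univ, by simpa using ‹F.NeBot›, fun w hw => (hne ⟨w, hw⟩).elim⟩

/-- Pryce's diagonal argument for countably many functionals `h n` and tolerances `η n`. -/
theorem pryce_seq (J : JamesData Y K C p c) (f : ℕ → X →L[ℝ] ℝ)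
    (h : ℕ → X →L[ℝ] ℝ) (hh : ∀ n, h n ∈ Y) (η : ℕ → ℝ) (hη : ∀ n, 0 < η n) :
    ∃ F : Filter ℕ, F.NeBot ∧ F.IsCountablyGenerated ∧ F ≤ atTop ∧
      ∀ n, ∀ w ∈ betweenLimits K f F, ∀ w' ∈ betweenLimits K f F,
        p (h n - w) ≤ p (h n - w') + η n := by
  have step : ∀ (n : ℕ) (F : {F : Filter ℕ // F.NeBot}), ∃ A : Set ℕ, (F.1 ⊓ 𝓟 A).NeBot ∧
      ∀ w ∈ betweenLimits K f F.1, ∀ w' ∈ betweenLimits K f (F.1 ⊓ 𝓟 A),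
        p (h n - w) ≤ p (h n - w') + η n := by
    rintro n ⟨F, hF⟩
    exact J.pryce_step f F (hh n) (hη n)
  choose A hA1 hA2 using step
  let Φ : ℕ → {F : Filter ℕ // F.NeBot} := fun n =>
    Nat.rec ⟨atTop, inferInstance⟩ (fun n F => ⟨F.1 ⊓ 𝓟 (A n F), hA1 n F⟩) n
  have hΦs : ∀ n, (Φ (n + 1)).1 = (Φ n).1 ⊓ 𝓟 (A n (Φ n)) := fun n => rfl
  have hanti : Antitone (fun n => (Φ n).1) :=
    antitone_nat_of_succ_le fun n => by rw [hΦs]; exact inf_le_left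
  have hcg : ∀ n, (Φ n).1.IsCountablyGenerated := by
    intro n
    induction n with
    | zero => exact inferInstanceAs (atTop : Filter ℕ).IsCountablyGenerated
    | succ n ih => rw [hΦs]; infer_instance
  refine ⟨⨅ n, (Φ n).1, ?_, ?_, iInf_le (fun n => (Φ n).1) 0, ?_⟩
  · exact iInf_neBot_of_directed' hanti.directed_ge (fun n => (Φ n).2)
  · infer_instance
  · intro n w hw w' hw'
    refine hA2 n (Φ n) w (betweenLimits_mono (iInf_le _ n) hw) w' ?_
    rw [← hΦs]
    exact betweenLimits_mono (iInf_le (fun n => (Φ n).1) (n + 1)) hw'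

/-- Pryce's lemma: along a suitable countably generated filter, `p (h - w)` does not depend on
`w ∈ betweenLimits K f F`, for every `h` in the span of the sequence. -/
theorem pryce (J : JamesData Y K C p c) (f : ℕ → X →L[ℝ] ℝ) (hf : ∀ n, f n ∈ K) :
    ∃ F : Filter ℕ, F.NeBot ∧ F.IsCountablyGenerated ∧ F ≤ atTop ∧
      ∀ h ∈ Submodule.span ℝ (range f), ∀ w ∈ betweenLimits K f F,
        ∀ w' ∈ betweenLimits K f F, p (h - w) ≤ p (h - w') := by
  let comb : List (ℚ × ℕ) → X →L[ℝ] ℝ := fun l => (l.map fun t => (t.1 : ℝ) • f t.2).sum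
  -- `comb l` runs over the countable set of rational linear combinations of the sequence.
  have hcombY : ∀ l, comb l ∈ Y := by
    intro l
    apply Y.list_sum_mem
    intro g hg
    obtain ⟨t, -, rfl⟩ := List.mem_map.1 hg
    exact Y.smul_mem _ (J.sub (hf _))
  obtain ⟨T, hT⟩ := exists_surjective_nat (List (ℚ × ℕ) × ℕ)
  obtain ⟨F, h1, h2, h3, h4⟩ := J.pryce_seq f (fun n => comb (T n).1) (fun n => hcombY _)
    (fun n => 1 / ((T n).2 + 1 : ℝ)) (fun n => by positivity)
  have h5 : ∀ l, ∀ w ∈ betweenLimits K f F, ∀ w' ∈ betweenLimits K f F,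
      p (comb l - w) ≤ p (comb l - w') := by
    intro l w hw w' hw'
    apply le_of_forall_pos_le_add
    intro ε hε
    obtain ⟨k, hk⟩ := exists_nat_one_div_lt hε
    obtain ⟨n, hn⟩ := hT (l, k)
    have := h4 n w hw w' hw'
    rw [hn] at this
    exact this.trans (by simpa using hk.le)
  have happ : ∀ h ∈ Submodule.span ℝ (range f), ∀ ε : ℝ, 0 < ε →
      ∃ l, ∀ x ∈ C, |h x - comb l x| ≤ ε := by
    intro h hh
    induction hh using Submodule.span_induction with
    | mem g hg =>
      obtain ⟨n, rfl⟩ := hg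
      intro ε hε
      exact ⟨[(1, n)], fun x _ => by simp [comb, hε.le]⟩
    | zero => exact fun ε hε => ⟨[], fun x _ => by simp [comb, hε.le]⟩
    | add g g' _ _ ihg ihg' =>
      intro ε hε
      obtain ⟨l, hl⟩ := ihg (ε / 2) (by linarith)
      obtain ⟨l', hl'⟩ := ihg' (ε / 2) (by linarith)
      refine ⟨l ++ l', fun x hx => ?_⟩
      have e : comb (l ++ l') = comb l + comb l' := by simp [comb]
      have a1 := abs_le.1 (hl x hx)
      have a2 := abs_le.1 (hl' x hx)
      rw [e, abs_le]
      simp only [add_apply]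
      constructor <;> linarith
    | smul a g hg ihg =>
      intro ε hε
      obtain ⟨l, hl⟩ := ihg (ε / (2 * (|a| + 1))) (by positivity)
      obtain ⟨B, hB0, hB⟩ : ∃ B : ℝ, 0 < B ∧ ∀ x ∈ C, |comb l x| ≤ B := by
        refine ⟨max (p (comb l)) (p (-comb l)) + |p (comb l)| + 1, ?_, fun x hx => ?_⟩
        · have := neg_abs_le (p (comb l))
          have := le_max_left (p (comb l)) (p (-comb l))
          linarith
        · have b1 := J.le_p _ (hcombY l) x hx
          have b2 := J.le_p _ (Y.neg_mem (hcombY l)) x hx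
          have b3 := abs_nonneg (p (comb l))
          have b4 := le_max_left (p (comb l)) (p (-comb l))
          have b5 := le_max_right (p (comb l)) (p (-comb l))
          simp only [neg_apply] at b2
          rw [abs_le]; constructor <;> linarith
      obtain ⟨q, hq1, hq2⟩ := exists_rat_btwn (show a < a + ε / (2 * B) by
        have : 0 < ε / (2 * B) := by positivity
        linarith)
      refine ⟨l.map fun t => (q * t.1, t.2), fun x hx => ?_⟩
      have e : comb (l.map fun t => (q * t.1, t.2)) = (q : ℝ) • comb l := by
        simp only [comb, List.map_map, List.smul_sum]
        congr 1
        apply List.map_congr_left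
        intro t _
        simp [mul_smul]
      have t1 : |a * (g x - comb l x)| ≤ ε / 2 := by
        rw [abs_mul]
        calc |a| * |g x - comb l x| ≤ (|a| + 1) * (ε / (2 * (|a| + 1))) :=
              mul_le_mul (by linarith) (hl x hx) (abs_nonneg _) (by positivity)
          _ = ε / 2 := by field_simp
      have t2 : |(a - q) * comb l x| ≤ ε / 2 := by
        rw [abs_mul]
        have : |a - q| ≤ ε / (2 * B) := by rw [abs_le]; constructor <;> linarith
        calc |a - q| * |comb l x| ≤ ε / (2 * B) * B :=
              mul_le_mul this (hB x hx) (abs_nonneg _) (by positivity)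
          _ = ε / 2 := by field_simp
      rw [e]
      simp only [smul_apply, smul_eq_mul]
      have : a * g x - q * comb l x = a * (g x - comb l x) + (a - q) * comb l x := by ring
      rw [this]
      exact (abs_add_le _ _).trans (by linarith)
  refine ⟨F, h1, h2, h3, fun h hh w hw w' hw' => ?_⟩
  have hhY : h ∈ Y := by
    have : Submodule.span ℝ (range f) ≤ Y :=
      Submodule.span_le.2 (by rintro _ ⟨n, rfl⟩; exact J.sub (hf n))
    exact this hh
  apply le_of_forall_pos_le_add
  intro ε hε
  obtain ⟨l, hl⟩ := happ h hh (ε / 2) (by linarith)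
  have a1 : p (h - w) ≤ p (comb l - w) + ε / 2 := by
    apply J.p_le (Y.sub_mem hhY (J.sub hw.1))
    intro x hx
    have := J.le_p _ (Y.sub_mem (hcombY l) (J.sub hw.1)) x hx
    have := abs_le.1 (hl x hx)
    simp only [sub_apply] at *
    linarith
  have a2 : p (comb l - w') ≤ p (h - w') + ε / 2 := by
    apply J.p_le (Y.sub_mem (hcombY l) (J.sub hw'.1))
    intro x hx
    have := J.le_p _ (Y.sub_mem hhY (J.sub hw'.1)) x hx
    have := abs_le.1 (hl x hx)
    simp only [sub_apply] at *
    linarith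
  have := h5 l w hw w' hw'
  linarith

/-- Limits of sequences taken from the tails of the convex hull of `f` lie between the lower and
upper limits of `f`. -/
theorem exists_limit (J : JamesData Y K C p c) {f : ℕ → X →L[ℝ] ℝ} (hf : ∀ n, f n ∈ K)
    {F : Filter ℕ} {U : ℕ → Set ℕ} (hU : F.HasAntitoneBasis U) {g : ℕ → X →L[ℝ] ℝ}
    (hg : ∀ n, g n ∈ convexHull ℝ (f '' U n)) :
    ∃ w ∈ betweenLimits K f F, ∀ x, Tendsto (fun n => g n x) (hyperfilter ℕ) (𝓝 (w x)) := by
  have hgK : ∀ n, g n ∈ K := fun n =>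
    convexHull_min (by rintro _ ⟨m, -, rfl⟩; exact hf m) J.conv (hg n)
  obtain ⟨w, hwK, hw⟩ := J.lim g hgK
  refine ⟨w, ⟨hwK, fun x a hx => ?_⟩, hw⟩
  obtain ⟨N, -, hN⟩ := hU.1.mem_iff.1 hx
  refine le_of_tendsto (hw x) ?_
  have : ∀ᶠ n in atTop, g n x ≤ a := by
    filter_upwards [eventually_ge_atTop N] with n hn
    have hconv : Convex ℝ {h : X →L[ℝ] ℝ | h x ≤ a} := by
      intro h hh h' hh' s t hs ht hst
      change s * h x + t * h' x ≤ a
      have e1 : s * h x ≤ s * a := mul_le_mul_of_nonneg_left hh hs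
      have e2 : t * h' x ≤ t * a := mul_le_mul_of_nonneg_left hh' ht
      calc s * h x + t * h' x ≤ s * a + t * a := add_le_add e1 e2
        _ = a := by rw [← add_mul, hst, one_mul]
    refine convexHull_min ?_ hconv (hg n)
    rintro _ ⟨m, hm, rfl⟩
    exact hN (hU.2 hn hm)
  exact this.filter_mono Nat.hyperfilter_le_atTop

/-- The inductive construction in James' theorem. Each `g n` nearly minimizes
`p (H n + r ^ n • u - b (n + 1) • w)` over `u ∈ D n`, where `H` and `b` are the partial sums of
`r ^ n • g n` and `r ^ n`; near-minimality forces the values of `p` to increase geometrically. -/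
theorem exists_increasing (J : JamesData Y K C p c) {D : ℕ → Set (X →L[ℝ] ℝ)} (hD : Antitone D)
    (hDc : ∀ n, Convex ℝ (D n)) (hDn : ∀ n, (D n).Nonempty) (hDK : ∀ n, D n ⊆ K)
    {w : X →L[ℝ] ℝ} (hw : w ∈ K) {r δ : ℝ} (hr : 0 < r) (hδ : 0 < δ)
    (hgap : ∀ u ∈ D 0, δ ≤ p (u - w)) :
    ∃ (g H : ℕ → X →L[ℝ] ℝ), (∀ n, g n ∈ D n) ∧ H 0 = 0 ∧ (∀ n, H (n + 1) = H n + r ^ n • g n) ∧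
      ∀ n, p (H n - (∑ k ∈ Finset.range n, r ^ k) • w) + r ^ n * (δ / 2) ≤
        p (H (n + 1) - (∑ k ∈ Finset.range (n + 1), r ^ k) • w) := by
  set b : ℕ → ℝ := fun n => ∑ k ∈ Finset.range n, r ^ k with hb
  have hbs : ∀ n, b (n + 1) = b n + r ^ n := fun n => Finset.sum_range_succ _ _
  have hb0 : ∀ n, 0 ≤ b n := fun n => Finset.sum_nonneg fun k _ => by positivity
  set d : ℕ → ℝ := fun n => δ / 2 + δ / 2 * (1 / 2) ^ n with hd
  have hds : ∀ n, d (n + 1) < d n := by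
    intro n
    have : (0 : ℝ) < (1 / 2) ^ n := by positivity
    simp only [hd, pow_succ]; nlinarith
  have hdh : ∀ n, δ / 2 ≤ d n := by
    intro n
    have : (0 : ℝ) ≤ δ / 2 * (1 / 2) ^ n := by positivity
    simp only [hd]; linarith
  have hwY : w ∈ Y := J.sub hw
  have near : ∀ (n : ℕ) (h : Y), ∃ v ∈ D n, ∀ u ∈ D n,
      p (h + r ^ n • v - b (n + 1) • w) ≤
        p (h + r ^ n • u - b (n + 1) • w) + r ^ (n + 1) * (d n - d (n + 1)) := by
    intro n h
    set Q : (X →L[ℝ] ℝ) → ℝ := fun u => p (h + r ^ n • u - b (n + 1) • w)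
    have hbdd : BddBelow (Q '' D n) := by
      obtain ⟨x, hx, -⟩ := J.att 0 Y.zero_mem
      refine ⟨(h : X →L[ℝ] ℝ) x - r ^ n * c - b (n + 1) * c, ?_⟩
      rintro _ ⟨u, hu, rfl⟩
      have h1 := J.le_p (h + r ^ n • u - b (n + 1) • w)
        (Y.sub_mem (Y.add_mem h.2 (Y.smul_mem _ (J.sub (hDK n hu)))) (Y.smul_mem _ hwY)) x hx
      have h2 := (abs_le.1 (J.bd u (hDK n hu) x hx)).1
      have h3 := (abs_le.1 (J.bd w hw x hx)).2
      have h4 : r ^ n * -c ≤ r ^ n * u x := mul_le_mul_of_nonneg_left h2 (by positivity)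
      have h5 : b (n + 1) * w x ≤ b (n + 1) * c := mul_le_mul_of_nonneg_left h3 (hb0 _)
      simp only [sub_apply, add_apply, smul_apply, smul_eq_mul] at h1
      simp only [Q]; linarith
    have hpos : 0 < r ^ (n + 1) * (d n - d (n + 1)) := mul_pos (by positivity) (by linarith [hds n])
    obtain ⟨_, ⟨v, hv, rfl⟩, hlt⟩ := exists_lt_of_csInf_lt ((hDn n).image Q)
      (show sInf (Q '' D n) < sInf (Q '' D n) + r ^ (n + 1) * (d n - d (n + 1)) by linarith)
    refine ⟨v, hv, fun u hu => ?_⟩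
    have := csInf_le hbdd ⟨u, hu, rfl⟩
    change Q v ≤ Q u + _
    linarith
  choose γ hγD hγ using near
  let HY : ℕ → Y := fun n =>
    Nat.rec 0 (fun n h => h + r ^ n • ⟨γ n h, J.sub (hDK n (hγD n h))⟩) n
  let H : ℕ → X →L[ℝ] ℝ := fun n => (HY n).1
  let g : ℕ → X →L[ℝ] ℝ := fun n => γ n (HY n)
  have hgD : ∀ n, g n ∈ D n := fun n => hγD n _
  have hHs : ∀ n, H (n + 1) = H n + r ^ n • g n := fun n => rfl
  have hgm : ∀ n, ∀ u ∈ D n, p (H (n + 1) - b (n + 1) • w) ≤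
        p (H n + r ^ n • u - b (n + 1) • w) + r ^ (n + 1) * (d n - d (n + 1)) :=
    fun n u hu => hγ n (HY n) u hu
  have hmem : ∀ n, ∀ u ∈ D n, H n + r ^ n • u - b (n + 1) • w ∈ Y :=
    fun n u hu => Y.sub_mem (Y.add_mem (HY n).2 (Y.smul_mem _ (J.sub (hDK n hu)))) (Y.smul_mem _ hwY)
  have hmem' : ∀ n, H n - b n • w ∈ Y :=
    fun n => Y.sub_mem (HY n).2 (Y.smul_mem _ hwY)
  have key : ∀ n, ∀ u ∈ D n, p (H n - b n • w) + r ^ n * d n ≤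
      p (H n + r ^ n • u - b (n + 1) • w) := by
    intro n
    induction n with
    | zero =>
      intro u hu
      have e1 : H 0 - b 0 • w = (0 : ℝ) • w := by simp [H, HY, hb]
      have e2 : H 0 + r ^ 0 • u - b (0 + 1) • w = u - w := by simp [H, HY, hb]
      rw [e1, e2, J.p_smul hwY le_rfl]
      have := hgap u hu
      simp only [hd]; linarith
    | succ n ih =>
      intro u hu
      have hr1 : 0 < 1 + r := by linarith
      have hv : (1 / (1 + r)) • g n + (r / (1 + r)) • u ∈ D n :=
        hDc n (hgD n) (hD (Nat.le_succ n) hu) (by positivity) (by positivity) (by field_simp)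
      have e : H n + r ^ n • ((1 / (1 + r)) • g n + (r / (1 + r)) • u)
            - b (n + 1) • w
          = (1 / (1 + r)) • (H (n + 1) + r ^ (n + 1) • u - b (n + 1 + 1) • w)
            + (r / (1 + r)) • (H n - b n • w) := by
        rw [hHs]
        ext x
        simp only [sub_apply, add_apply, smul_apply, smul_eq_mul, hbs, pow_succ]
        field_simp
        ring
      have h1 := ih _ hv
      have h2 := hgm n _ hv
      have h3 := J.p_add (Y.smul_mem (1 / (1 + r)) (hmem (n + 1) u hu))
        (Y.smul_mem (r / (1 + r)) (hmem' n))
      rw [← e, J.p_smul (hmem (n + 1) u hu) (by positivity),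
        J.p_smul (hmem' n) (by positivity)] at h3
      set y := p (H n + r ^ n • ((1 / (1 + r)) • g n + (r / (1 + r)) • u) - b (n + 1) • w)
      set q := p (H (n + 1) + r ^ (n + 1) • u - b (n + 1 + 1) • w)
      set s := p (H n - b n • w)
      have h4 : (1 + r) * y ≤ q + r * s := by
        calc (1 + r) * y ≤ (1 + r) * (1 / (1 + r) * q + r / (1 + r) * s) :=
              mul_le_mul_of_nonneg_left h3 hr1.le
          _ = q + r * s := by field_simp
      have h5 : r * (s + r ^ n * d n) ≤ r * y := mul_le_mul_of_nonneg_left h1 hr.le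
      have h6 : r * (r ^ n * d n) = r ^ (n + 1) * d n := by ring
      linarith
  refine ⟨g, H, hgD, rfl, hHs, fun n => ?_⟩
  have h1 := key n (g n) (hgD n)
  rw [← hHs] at h1
  have h2 : r ^ n * (δ / 2) ≤ r ^ n * d n := mul_le_mul_of_nonneg_left (hdh n) (by positivity)
  linarith

/-- The core of James' theorem: the sup-attaining hypothesis excludes a triangular double sequence
`f i (x n)` whose upper part stays above `ε / 2` and whose lower part stays below `ε / 4`. -/
theorem no_triangle (J : JamesData Y K C p c) {f : ℕ → X →L[ℝ] ℝ} (hf : ∀ n, f n ∈ K)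
    {x : ℕ → X} (hx : ∀ n, x n ∈ C) {ε : ℝ} (hε : 0 < ε)
    (hup : ∀ i n, i < n → ε / 2 ≤ f i (x n)) (hlow : ∀ i n, i < n → f n (x i) ≤ ε / 4) :
    False := by
  obtain ⟨F, hF1, hF2, hF3, hF⟩ := J.pryce f hf
  obtain ⟨U, hU⟩ := F.exists_antitone_basis
  set D : ℕ → Set (X →L[ℝ] ℝ) := fun n => convexHull ℝ (f '' U n) with hDdef
  have hDK : ∀ n, D n ⊆ K := fun n =>
    convexHull_min (by rintro _ ⟨m, -, rfl⟩; exact hf m) J.conv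
  have hDspan : ∀ n, D n ⊆ Submodule.span ℝ (range f) := fun n =>
    convexHull_min (by rintro _ ⟨m, -, rfl⟩; exact Submodule.subset_span ⟨m, rfl⟩)
      (Submodule.convex _)
  have hDn : ∀ n, (D n).Nonempty := fun n =>
    ((hF1.nonempty_of_mem (hU.1.mem_of_mem trivial)).image f).convexHull
  have hD : Antitone D := fun m n hmn => convexHull_mono (image_mono (hU.2 hmn))
  obtain ⟨w, hw, -⟩ := J.exists_limit hf hU (g := fun n => (hDn n).some) (fun n => (hDn n).some_mem)
  have hgap : ∀ u ∈ D 0, ε / 4 ≤ p (u - w) := by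
    intro u hu
    -- a convex combination of finitely many `f i` is at least `ε / 2` at `x n` for large `n`
    obtain ⟨N, hN⟩ : ∃ N, ∀ n ≥ N, ε / 2 ≤ u (x n) := by
      have hconv : Convex ℝ {h : X →L[ℝ] ℝ | ∃ N, ∀ n ≥ N, ε / 2 ≤ h (x n)} := by
        rintro h ⟨N, hN⟩ h' ⟨N', hN'⟩ s t hs ht hst
        refine ⟨max N N', fun n hn => ?_⟩
        have e1 := mul_le_mul_of_nonneg_left (hN n (le_trans (le_max_left _ _) hn)) hs
        have e2 := mul_le_mul_of_nonneg_left (hN' n (le_trans (le_max_right _ _) hn)) ht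
        change ε / 2 ≤ s * h (x n) + t * h' (x n)
        calc ε / 2 = s * (ε / 2) + t * (ε / 2) := by rw [← add_mul, hst, one_mul]
          _ ≤ _ := add_le_add e1 e2
      refine convexHull_min ?_ hconv hu
      rintro _ ⟨m, -, rfl⟩
      exact ⟨m + 1, fun n hn => hup m n hn⟩
    have h1 := hN N le_rfl
    have h2 : w (x N) ≤ ε / 4 := by
      apply hw.2
      apply hF3
      filter_upwards [eventually_gt_atTop N] with m hm using hlow N m hm
    have h3 := J.le_p (u - w) (Y.sub_mem (J.sub (hDK 0 hu)) (J.sub hw.1)) (x N) (hx N)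
    simp only [sub_apply] at h3
    linarith
  set δ := ε / 4 with hδdef
  have hδ : 0 < δ := by positivity
  have hc := J.cpos
  obtain ⟨r, hr, hr2, hrδ⟩ : ∃ r : ℝ, 0 < r ∧ r ≤ 1 / 2 ∧ r * (32 * c) ≤ δ := by
    refine ⟨min (1 / 2) (δ / (32 * c)), lt_min (by norm_num) (by positivity), min_le_left _ _, ?_⟩
    rw [← le_div_iff₀ (by positivity)]
    exact min_le_right _ _
  obtain ⟨g, H, hgD, hH0, hHs, hinc⟩ := J.exists_increasing hD (fun n => convex_convexHull ℝ _)
    hDn hDK hw.1 hr hδ hgap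
  obtain ⟨w', hw', hlim⟩ := J.exists_limit hf hU hgD
  have hw'Y := J.sub hw'.1
  set b : ℕ → ℝ := fun n => ∑ k ∈ Finset.range n, r ^ k with hb
  have hbs : ∀ n, b (n + 1) = b n + r ^ n := fun n => Finset.sum_range_succ _ _
  have hb0 : ∀ n, 0 ≤ b n := fun n => Finset.sum_nonneg fun k _ => by positivity
  have hgeom : ∀ n, (1 - r) * b n = 1 - r ^ n := by
    intro n
    induction n with
    | zero => simp [hb]
    | succ n ih => rw [hbs, mul_add, ih, pow_succ]; ring
  have hHspan : ∀ n, H n ∈ Submodule.span ℝ (range f) := by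
    intro n
    induction n with
    | zero => rw [hH0]; exact Submodule.zero_mem _
    | succ n ih =>
      rw [hHs]; exact Submodule.add_mem _ ih (Submodule.smul_mem _ _ (hDspan n (hgD n)))
  have hspanY : Submodule.span ℝ (range f) ≤ Y :=
    Submodule.span_le.2 (by rintro _ ⟨n, rfl⟩; exact J.sub (hf n))
  have hHY : ∀ n, H n ∈ Y := fun n => hspanY (hHspan n)
  have hswap : ∀ n, p (H n - b n • w) = p (H n - b n • w') := by
    intro n
    rcases (hb0 n).eq_or_lt with h0 | hpos
    · rw [← h0]; simp
    · have e : ∀ v, H n - b n • v = b n • ((b n)⁻¹ • H n - v) := by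
        intro v
        rw [smul_sub, smul_smul, mul_inv_cancel₀ hpos.ne', one_smul]
      have hsp := Submodule.smul_mem _ (b n)⁻¹ (hHspan n)
      rw [e, e, J.p_smul (Y.sub_mem (hspanY hsp) (J.sub hw.1)) hpos.le,
        J.p_smul (Y.sub_mem (hspanY hsp) hw'Y) hpos.le]
      congr 1
      exact le_antisymm (hF _ hsp _ hw _ hw') (hF _ hsp _ hw' _ hw)
  have hHK : ∀ n, ∃ v ∈ K, H n = b n • v := by
    intro n
    induction n with
    | zero => exact ⟨w, hw.1, by simp [hH0, hb]⟩
    | succ n ih =>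
      obtain ⟨v, hv, e⟩ := ih
      have hpos : 0 < b (n + 1) := by
        have : 0 < r ^ n := by positivity
        rw [hbs]; linarith [hb0 n]
      refine ⟨(b n / b (n + 1)) • v + (r ^ n / b (n + 1)) • g n,
        J.conv hv (hDK n (hgD n)) (div_nonneg (hb0 n) hpos.le) (by positivity) ?_, ?_⟩
      · rw [← add_div, ← hbs, div_self hpos.ne']
      · rw [hHs, e, smul_add, smul_smul, smul_smul, mul_div_cancel₀ _ hpos.ne',
          mul_div_cancel₀ _ hpos.ne']
  obtain ⟨G', hG'K, hG'⟩ := J.lim (fun n => (1 - r) • H n) (by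
    intro n
    obtain ⟨v, hv, e⟩ := hHK n
    rw [e, smul_smul, hgeom]
    refine J.bal.smul_mem ?_ hv
    have h1 : 0 < r ^ n := by positivity
    have h2 : r ^ n ≤ 1 := pow_le_one₀ hr.le (by linarith)
    rw [Real.norm_eq_abs, abs_le]; constructor <;> linarith)
  have hr1 : 0 < 1 - r := by linarith
  set B := (1 - r)⁻¹ with hB
  have hBpos : 0 < B := inv_pos.2 hr1
  have hBb : ∀ n, B - b n = r ^ n * B := by
    intro n
    have := hgeom n
    rw [hB]; field_simp; linarith
  set G : X →L[ℝ] ℝ := B • G' with hG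
  have hGY : G ∈ Y := Y.smul_mem _ (J.sub hG'K)
  have hGlim : ∀ y, Tendsto (fun n => H n y) (hyperfilter ℕ) (𝓝 (G y)) := by
    intro y
    have := (hG' y).const_mul B
    refine this.congr fun n => ?_
    simp only [smul_apply, smul_eq_mul]
    rw [← mul_assoc, hB, inv_mul_cancel₀ hr1.ne', one_mul]
  have hGH : ∀ y ∈ C, ∀ m, |G y - H m y| ≤ c * (B - b m) := by
    intro y hy m
    have hfin : ∀ n, m ≤ n → |H n y - H m y| ≤ c * (b n - b m) := by
      intro n hn
      induction n, hn using Nat.le_induction with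
      | base => simp
      | succ n hn ih =>
        have e : H (n + 1) y - H m y = (H n y - H m y) + r ^ n * g n y := by
          rw [hHs]; simp only [add_apply, smul_apply, smul_eq_mul]; ring
        have h2 : |r ^ n * g n y| ≤ r ^ n * c := by
          rw [abs_mul, abs_of_pos (by positivity : 0 < r ^ n)]
          exact mul_le_mul_of_nonneg_left (J.bd _ (hDK n (hgD n)) y hy) (by positivity)
        rw [e, hbs]
        calc _ ≤ _ := abs_add_le _ _
          _ ≤ c * (b n - b m) + r ^ n * c := add_le_add ih h2
          _ = _ := by ring
    have hle : ∀ᶠ n in (hyperfilter ℕ : Filter ℕ), |H n y - H m y| ≤ c * (B - b m) := by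
      refine Filter.Eventually.filter_mono Nat.hyperfilter_le_atTop ?_
      filter_upwards [eventually_ge_atTop m] with n hn
      refine (hfin n hn).trans (mul_le_mul_of_nonneg_left ?_ hc.le)
      have := hBb n
      have : 0 < r ^ n * B := by positivity
      linarith
    exact le_of_tendsto ((hGlim y).sub_const _).abs hle
  obtain ⟨y, hyC, hy⟩ := J.att (G - B • w') (Y.sub_mem hGY (Y.smul_mem _ hw'Y))
  have hB2 : B ≤ 2 := by
    rw [hB, inv_le_comm₀ hr1 (by norm_num)]; linarith
  have hsep : ∀ n, δ / 4 ≤ g n y - w' y := by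
    intro n
    have hrn : 0 < r ^ n := by positivity
    have hbound : ∀ z ∈ C, |(G z - B * w' z) - (H (n + 1) z - b (n + 1) * w' z)|
        ≤ 2 * c * (B - b (n + 1)) := by
      intro z hz
      have h1 := hGH z hz (n + 1)
      have h0 : 0 ≤ B - b (n + 1) := by rw [hBb]; positivity
      have h2 : |(B - b (n + 1)) * w' z| ≤ (B - b (n + 1)) * c := by
        rw [abs_mul, abs_of_nonneg h0]
        exact mul_le_mul_of_nonneg_left (J.bd _ hw'.1 z hz) h0
      have e : (G z - B * w' z) - (H (n + 1) z - b (n + 1) * w' z)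
          = (G z - H (n + 1) z) - (B - b (n + 1)) * w' z := by ring
      rw [e]
      calc _ ≤ _ := abs_sub _ _
        _ ≤ c * (B - b (n + 1)) + (B - b (n + 1)) * c := add_le_add h1 h2
        _ = _ := by ring
    have hS1 : p (H (n + 1) - b (n + 1) • w') ≤ p (G - B • w') + 2 * c * (B - b (n + 1)) := by
      apply J.p_le (Y.sub_mem (hHY _) (Y.smul_mem _ hw'Y))
      intro z hz
      have h1 := J.le_p (G - B • w') (Y.sub_mem hGY (Y.smul_mem _ hw'Y)) z hz
      have h2 := (abs_le.1 (hbound z hz)).1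
      simp only [sub_apply, smul_apply, smul_eq_mul] at h1 ⊢
      linarith
    have hS0 := J.le_p (H n - b n • w') (Y.sub_mem (hHY _) (Y.smul_mem _ hw'Y)) y hyC
    have hy' := (abs_le.1 (hbound y hyC)).2
    have hi := hinc n
    have hsw0 := hswap n
    have hsw1 := hswap (n + 1)
    simp only [hb] at hsw0 hsw1
    rw [hsw0, hsw1] at hi
    change p (H n - b n • w') + _ ≤ p (H (n + 1) - b (n + 1) • w') at hi
    simp only [sub_apply, smul_apply, smul_eq_mul] at hy hS0
    have hHe : H (n + 1) y = H n y + r ^ n * g n y := by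
      rw [hHs]; simp only [add_apply, smul_apply, smul_eq_mul]
    rw [hHe] at hy'
    rw [hbs] at hy'
    have herr : 4 * c * (B - b (n + 1)) ≤ r ^ n * (δ / 4) := by
      rw [hBb, pow_succ]
      have : r * (4 * c) * B ≤ δ / 4 := by
        calc r * (4 * c) * B ≤ r * (4 * c) * 2 := mul_le_mul_of_nonneg_left hB2 (by positivity)
          _ ≤ δ / 4 := by linarith
      calc 4 * c * (r ^ n * r * B) = r ^ n * (r * (4 * c) * B) := by ring
        _ ≤ _ := mul_le_mul_of_nonneg_left this hrn.le
    rw [hbs] at herr hS1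
    have : r ^ n * (δ / 4) ≤ r ^ n * (g n y - w' y) := by
      have e1 : r ^ n * (δ / 2) = r ^ n * (δ / 4) + r ^ n * (δ / 4) := by ring
      have e2 : r ^ n * (g n y - w' y) = r ^ n * g n y - r ^ n * w' y := by ring
      have e3 : (b n + r ^ n) * w' y = b n * w' y + r ^ n * w' y := by ring
      rw [← hbs] at *
      linarith
    exact le_of_mul_le_mul_left this hrn
  have h0 : Tendsto (fun n => g n y - w' y) (hyperfilter ℕ) (𝓝 0) := by
    simpa using (hlim y).sub_const (w' y)
  have := ge_of_tendsto h0 (Filter.Eventually.of_forall hsep)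
  linarith

end JamesData

end James

/-! ### Pointwise limits of evaluations -/

section Limits

variable {X : Type*} [NormedAddCommGroup X] [NormedSpace ℝ X]

theorem isCompact_weakStar_iff {K : Set (X →L[ℝ] ℝ)} :
    @IsCompact (X →L[ℝ] ℝ) (weakStarTop X) K ↔
      IsCompact ((fun (f : X →L[ℝ] ℝ) (x : X) => f x) '' K) :=
  @Topology.IsInducing.isCompact_iff _ _ (weakStarTop X) _ _ _
    (@Topology.IsInducing.mk _ _ (weakStarTop X) _ _ rfl)

/-- A weak*-compact set is closed under pointwise limits along the free ultrafilter on `ℕ`. -/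
theorem exists_weakStar_limit {K : Set (X →L[ℝ] ℝ)}
    (hK : @IsCompact (X →L[ℝ] ℝ) (weakStarTop X) K) (u : ℕ → X →L[ℝ] ℝ) (hu : ∀ n, u n ∈ K) :
    ∃ G ∈ K, ∀ x, Tendsto (fun n => u n x) (hyperfilter ℕ) (𝓝 (G x)) := by
  obtain ⟨_, ⟨G, hG, rfl⟩, h⟩ := (isCompact_weakStar_iff.1 hK).ultrafilter_le_nhds'
    ((hyperfilter ℕ).map fun n => fun x => u n x)
    (Eventually.of_forall (f := (hyperfilter ℕ : Filter ℕ)) fun n => ⟨u n, hu n, rfl⟩)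
  exact ⟨G, hG, tendsto_pi_nhds.1 h⟩

/-- The Banach–Mackey theorem: an absolutely convex weak*-compact set is uniformly bounded on any
set on which each of its members is bounded. -/
theorem exists_uniform_bound {K : Set (X →L[ℝ] ℝ)} (hconv : Convex ℝ K)
    (hK : @IsCompact (X →L[ℝ] ℝ) (weakStarTop X) K) {C : Set X}
    (hC : ∀ f ∈ K, ∃ a : ℝ, ∀ x ∈ C, |f x| ≤ a) :
    ∃ c : ℝ, 0 < c ∧ ∀ f ∈ K, ∀ x ∈ C, |f x| ≤ c := by
  rcases K.eq_empty_or_nonempty with rfl | hKne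
  · exact ⟨1, one_pos, by simp⟩
  set K' : Set (X → ℝ) := (fun (f : X →L[ℝ] ℝ) (x : X) => f x) '' K with hK'def
  have hK' : IsCompact K' := isCompact_weakStar_iff.1 hK
  have hconv' : Convex ℝ K' := by
    rintro _ ⟨f, hf, rfl⟩ _ ⟨g, hg, rfl⟩ a b ha hb hab
    exact ⟨a • f + b • g, hconv hf hg ha hb hab, rfl⟩
  have : CompactSpace K' := isCompact_iff_compactSpace.1 hK'
  have : Nonempty K' := (hKne.image _).to_subtype
  let S : ℕ → Set K' := fun n => {f | ∀ x ∈ C, |f.1 x| ≤ n}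
  have hScl : ∀ n, IsClosed (S n) := by
    intro n
    have : S n = ⋂ x ∈ C, {f : K' | |f.1 x| ≤ n} := by ext; simp [S]
    rw [this]
    refine isClosed_biInter fun x _ => isClosed_le ?_ continuous_const
    exact ((continuous_apply x).comp continuous_subtype_val).abs
  have hSU : ⋃ n, S n = univ := by
    refine eq_univ_of_forall ?_
    rintro ⟨_, f, hf, rfl⟩
    obtain ⟨a, ha⟩ := hC f hf
    obtain ⟨n, hn⟩ := exists_nat_ge a
    exact mem_iUnion.2 ⟨n, fun x hx => (ha x hx).trans hn⟩
  obtain ⟨n, f₀, hf₀⟩ := nonempty_interior_of_iUnion_of_closed hScl hSU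
  obtain ⟨O, hO, hOS⟩ := mem_nhds_subtype _ _ _ |>.1 (mem_interior_iff_mem_nhds.1 hf₀)
  -- homotheties with centre `f₀` and small ratio map all of `K'` into the neighbourhood `O`
  have htube : ∀ᶠ t : ℝ in 𝓝 0, ∀ f ∈ K', (f₀.1 + t • (f - f₀.1)) ∈ O := by
    refine hK'.eventually_forall_of_forall_eventually fun f _ => ?_
    have hcont : Continuous fun z : ℝ × (X → ℝ) => f₀.1 + z.1 • (z.2 - f₀.1) := by fun_prop
    have h := hcont.tendsto (0, f)
    simp only [zero_smul, add_zero] at h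
    exact h hO
  obtain ⟨t, ht, ht0, ht1⟩ := ((htube.filter_mono nhdsWithin_le_nhds).and
    (Ioo_mem_nhdsGT (show (0 : ℝ) < 1 by norm_num))).exists
  have hmain : ∀ g ∈ K', g ∈ O → ∀ x ∈ C, |g x| ≤ n := fun g hg hgO => by
    have : (⟨g, hg⟩ : K') ∈ S n := hOS hgO
    exact this
  refine ⟨2 * n / t + 1, by positivity, fun f hf x hx => ?_⟩
  have hfK : (fun x => f x) ∈ K' := ⟨f, hf, rfl⟩
  have h1 := hmain _ (hconv'.add_smul_sub_mem f₀.2 hfK ⟨ht0.le, ht1.le⟩) (ht _ hfK) x hx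
  have h2 := hmain _ f₀.2 (mem_of_mem_nhds hO) x hx
  simp only [Pi.add_apply, Pi.smul_apply, Pi.sub_apply, smul_eq_mul] at h1
  have h3 : |t * f x| ≤ 2 * n := by
    have e : t * f x = (f₀.1 x + t * (f x - f₀.1 x)) - (1 - t) * f₀.1 x := by ring
    have h4 : |(1 - t) * f₀.1 x| ≤ n := by
      rw [abs_mul, abs_of_pos (by linarith)]
      calc (1 - t) * |f₀.1 x| ≤ 1 * n := mul_le_mul (by linarith) h2 (abs_nonneg _) (by norm_num)
        _ = n := one_mul _
    rw [e]
    exact (abs_sub _ _).trans (by linarith)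
  rw [abs_mul, abs_of_pos ht0] at h3
  have : |f x| ≤ 2 * n / t := by rw [le_div_iff₀ ht0]; linarith
  linarith

/-- `φ` is a pointwise limit on `Y` of evaluations at points of `C`. -/
def IsLimitOf (Y : Submodule ℝ (X →L[ℝ] ℝ)) (C : Set X) (φ : (X →L[ℝ] ℝ) → ℝ) : Prop :=
  ∀ s : Finset (X →L[ℝ] ℝ), (∀ f ∈ s, f ∈ Y) → ∀ η : ℝ, 0 < η →
    ∃ x ∈ C, ∀ f ∈ s, |f x - φ f| < η

variable {Y : Submodule ℝ (X →L[ℝ] ℝ)} {C : Set X} {φ : (X →L[ℝ] ℝ) → ℝ}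

theorem IsLimitOf.map_comb (h : IsLimitOf Y C φ) {f g : X →L[ℝ] ℝ} (hf : f ∈ Y) (hg : g ∈ Y)
    (a b : ℝ) : φ (a • f + b • g) = a * φ f + b * φ g := by
  classical
  have key : ∀ η : ℝ, 0 < η → |φ (a • f + b • g) - (a * φ f + b * φ g)| ≤ η * (1 + |a| + |b|) := by
    intro η hη
    obtain ⟨x, -, hx⟩ := h {f, g, a • f + b • g} (by
      simp only [Finset.mem_insert, Finset.mem_singleton]
      rintro _ (rfl | rfl | rfl)
      exacts [hf, hg, Y.add_mem (Y.smul_mem _ hf) (Y.smul_mem _ hg)]) η hη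
    have h1 := (hx f (by simp)).le
    have h2 := (hx g (by simp)).le
    have h3 := (hx (a • f + b • g) (by simp)).le
    simp only [add_apply, smul_apply, smul_eq_mul] at h3
    have e : φ (a • f + b • g) - (a * φ f + b * φ g)
        = -(a * f x + b * g x - φ (a • f + b • g)) + (a * (f x - φ f) + b * (g x - φ g)) := by ring
    rw [e]
    calc _ ≤ _ := abs_add_le _ _
      _ ≤ η + (|a| * η + |b| * η) := by
        rw [abs_neg]
        refine add_le_add h3 ((abs_add_le _ _).trans ?_)
        rw [abs_mul, abs_mul]
        gcongr
      _ = _ := by ring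
  have h0 : ∀ ε : ℝ, 0 < ε → |φ (a • f + b • g) - (a * φ f + b * φ g)| ≤ 0 + ε := by
    intro ε hε
    have := key (ε / (1 + |a| + |b|)) (by positivity)
    rwa [div_mul_cancel₀ _ (by positivity), ← zero_add ε] at this
  have := abs_nonpos_iff.1 (le_of_forall_pos_le_add h0)
  linarith

theorem IsLimitOf.map_neg (h : IsLimitOf Y C φ) {f : X →L[ℝ] ℝ} (hf : f ∈ Y) :
    φ (-f) = - φ f := by
  have e : -f = (-1 : ℝ) • f + (0 : ℝ) • f := by ext x; simp
  rw [e, h.map_comb hf hf]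
  ring

/-- James' theorem forces `φ` to be small on those members of `K` that are small on a suitable
finite subset of `X`; otherwise one could build a forbidden triangular double sequence. -/
theorem IsLimitOf.exists_finset (h : IsLimitOf Y C φ) {K : Set (X →L[ℝ] ℝ)}
    {p : (X →L[ℝ] ℝ) → ℝ} {c : ℝ} (J : JamesData Y K C p c) {ε : ℝ} (hε : 0 < ε) :
    ∃ I : Finset X, ∀ f ∈ K, (∀ x ∈ I, |f x| ≤ ε / 4) → |φ f| < ε := by
  classical
  by_contra! hcon
  have hcon' : ∀ I : Finset X, ∃ f ∈ K, (∀ x ∈ I, f x ≤ ε / 4) ∧ ε ≤ φ f := by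
    intro I
    obtain ⟨f, hf, hI, hφ⟩ := hcon I
    rcases le_abs.1 hφ with h1 | h1
    · exact ⟨f, hf, fun x hx => (abs_le.1 (hI x hx)).2, h1⟩
    · refine ⟨-f, J.bal.neg_mem_iff.2 hf, fun x hx => ?_, by rwa [h.map_neg (J.sub hf)]⟩
      have := (abs_le.1 (hI x hx)).1
      simp only [neg_apply]; linarith
  obtain ⟨z, hz, hzr⟩ := exists_seq_of_forall_finset_exists
    (α := (X →L[ℝ] ℝ) × X) (fun z => z.1 ∈ K ∧ ε ≤ φ z.1 ∧ z.2 ∈ C)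
    (fun z z' => ε / 2 ≤ z.1 z'.2 ∧ z'.1 z.2 ≤ ε / 4) (by
      intro s hs
      obtain ⟨f, hf, hI, hφ⟩ := hcon' (s.image Prod.snd)
      obtain ⟨x, hx, hxs⟩ := h (s.image Prod.fst) (by
        intro g hg
        obtain ⟨z, hz, rfl⟩ := Finset.mem_image.1 hg
        exact J.sub (hs z hz).1) (ε / 2) (by linarith)
      refine ⟨(f, x), ⟨hf, hφ, hx⟩, fun z hz => ⟨?_, hI _ (Finset.mem_image_of_mem _ hz)⟩⟩
      have h1 := (abs_lt.1 (hxs _ (Finset.mem_image_of_mem _ hz))).1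
      have h2 := (hs z hz).2.1
      simp only
      linarith)
  exact J.no_triangle (f := fun n => (z n).1) (fun n => (hz n).1) (x := fun n => (z n).2)
    (fun n => (hz n).2.2) hε (fun i n hin => (hzr i n hin).1) (fun i n hin => (hzr i n hin).2)

theorem IsLimitOf.continuousOn (h : IsLimitOf Y C φ) {K : Set (X →L[ℝ] ℝ)}
    {p : (X →L[ℝ] ℝ) → ℝ} {c : ℝ} (J : JamesData Y K C p c) :
    @ContinuousOn (WeakDual ℝ X) ℝ _ _ φ K := by
  intro f₀ hf₀
  refine Metric.tendsto_nhds.2 ?_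
  intro ε hε
  obtain ⟨I, hI⟩ := h.exists_finset J (show 0 < ε / 2 by linarith)
  have hev : ∀ x ∈ I, ∀ᶠ f : WeakDual ℝ X in @nhdsWithin (WeakDual ℝ X) _ f₀ K,
      |f x - f₀ x| ≤ ε / 4 := by
    intro x _
    have hc : Continuous fun f : WeakDual ℝ X => f x := WeakDual.eval_continuous x
    have := Metric.tendsto_nhds.1 (hc.tendsto f₀) (ε / 4) (by linarith)
    filter_upwards [nhdsWithin_le_nhds this] with f hf
    exact (Real.dist_eq _ _ ▸ hf).le
  filter_upwards [(Filter.eventually_all_finset I).2 hev, self_mem_nhdsWithin] with f hf hfK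
  let f' : X →L[ℝ] ℝ := f
  let g' : X →L[ℝ] ℝ := f₀
  have hmem : (1 / 2 : ℝ) • f' + (1 / 2 : ℝ) • (-g') ∈ K :=
    J.conv hfK (J.bal.neg_mem_iff.2 hf₀) (by norm_num) (by norm_num) (by norm_num)
  have h1 := hI _ hmem (fun x hx => by
    have e : ((1 / 2 : ℝ) • f' + (1 / 2 : ℝ) • (-g')) x = (1 / 2) * (f x - f₀ x) := by
      change (1 / 2 : ℝ) * f x + (1 / 2) * (-(f₀ x)) = _
      ring
    rw [e, abs_mul, abs_of_pos (by norm_num)]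
    have := hf x hx
    linarith)
  rw [h.map_comb (J.sub hfK) (Y.neg_mem (J.sub hf₀)), h.map_neg (J.sub hf₀)] at h1
  have e : 1 / 2 * φ f' + 1 / 2 * -φ g' = 1 / 2 * (φ f' - φ g') := by ring
  rw [e, abs_mul, abs_of_pos (by norm_num)] at h1
  rw [Real.dist_eq]
  change |φ f' - φ g'| < ε
  linarith

/-- By the minimax theorem, `φ` is a uniform limit on `K` of evaluations at points of the convex
hull of `C`. -/
theorem IsLimitOf.exists_uniform (h : IsLimitOf Y C φ) {K : Set (X →L[ℝ] ℝ)}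
    {p : (X →L[ℝ] ℝ) → ℝ} {c : ℝ} (J : JamesData Y K C p c)
    (hK : @IsCompact (X →L[ℝ] ℝ) (weakStarTop X) K) {ε : ℝ} (hε : 0 < ε) :
    ∃ x ∈ convexHull ℝ C, ∀ f ∈ K, |f x - φ f| < ε := by
  rcases K.eq_empty_or_nonempty with rfl | hKne
  · obtain ⟨x, hx, -⟩ := J.att 0 Y.zero_mem
    exact ⟨x, subset_convexHull ℝ C hx, by simp⟩
  let KW : Set (WeakDual ℝ X) := K
  have hK' : IsCompact KW := hK
  have hcont : ContinuousOn (fun f : WeakDual ℝ X => φ f) KW := h.continuousOn J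
  let Ψ : WeakDual ℝ X → X → ℝ := fun f x => f x - φ f
  have hfy : ∀ x : X, ContinuousOn (fun f => Ψ f x) KW := fun x =>
    (WeakDual.eval_continuous x).continuousOn.sub hcont
  have hone : ∀ f ∈ K, ∃ x ∈ C, |f x - φ f| < ε := by
    intro f hf
    obtain ⟨x, hx, hx'⟩ := h {f} (by simpa using J.sub hf) ε hε
    exact ⟨x, hx, hx' f (by simp)⟩
  choose! ξ hξC hξ using hone
  obtain ⟨s, hsK, hs⟩ := hK'.elim_nhdsWithin_subcover (fun f => {g | -ε < Ψ g (ξ f)}) (by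
    intro f hf
    exact (hfy (ξ f) f hf).eventually (lt_mem_nhds (abs_lt.1 (hξ f hf)).1))
  obtain ⟨x, hx, hx'⟩ := Sion.exists_lt_iInf_of_lt_iInf_of_finite (E := WeakDual ℝ X) (F := X)
    (X := KW) (Y := convexHull ℝ C) (f := Ψ) hKne hK'
    (fun x _ => (hfy x).lowerSemicontinuousOn)
    (fun x _ => by
      refine ConvexOn.quasiconvexOn ⟨J.conv, fun f hf g hg a b ha hb hab => ?_⟩
      change (a * f x + b * g x) - φ _ ≤ a * (f x - φ f) + b * (g x - φ g)
      have := h.map_comb (J.sub hf) (J.sub hg) a b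
      rw [show φ (a • f + b • g) = a * φ f + b * φ g from this]
      linarith)
    (convex_convexHull ℝ C)
    (fun f _ => by
      refine Continuous.upperSemicontinuous ?_ |>.upperSemicontinuousOn _
      have : Continuous fun x => (f : X →L[ℝ] ℝ) x := (f : X →L[ℝ] ℝ).continuous
      exact this.sub continuous_const)
    (fun f _ => by
      refine ConcaveOn.quasiconcaveOn ⟨convex_convexHull ℝ C, fun x _ y _ a b ha hb hab => ?_⟩
      change a * (f x - φ f) + b * (f y - φ f) ≤ f (a • x + b • y) - φ f
      have e : f (a • x + b • y) = a * f x + b * f y := by simp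
      have : a * φ f + b * φ f = φ f := by rw [← add_mul, hab, one_mul]
      rw [e]; linarith)
    J.conv (s.finite_toSet.image ξ) (t := -ε)
    (by rintro _ ⟨f, hf, rfl⟩; exact subset_convexHull ℝ C (hξC f (hsK f hf)))
    (by
      intro g hg
      obtain ⟨f, hf, hgf⟩ := mem_iUnion₂.1 (hs hg)
      exact ⟨ξ f, ⟨f, hf, rfl⟩, hgf⟩)
  refine ⟨x, hx, fun f hf => abs_lt.2 ⟨hx' f hf, ?_⟩⟩
  have := hx' (-f : X →L[ℝ] ℝ) (J.bal.neg_mem_iff.2 hf)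
  change -ε < -(f x) - φ (-f) at this
  rw [h.map_neg (J.sub hf)] at this
  linarith

end Limits

/-! ### Completeness for uniform convergence and the Mackey topology -/

section UniformConvergence

variable {Z α : Type*} (𝔖 : Set (Set α)) (e : Z → α → ℝ)

/-- The uniformity on `Z` of uniform convergence of `e` on the members of `𝔖`; the Mackey uniformity
is the case where `e` is the evaluation. -/
@[reducible]
def unifOn : UniformSpace Z :=
  UniformSpace.comap (fun x => UniformOnFun.ofFun 𝔖 (e x)) (UniformOnFun.uniformSpace α ℝ 𝔖)

theorem continuous_unifOn {K : Set α} (hK : K ∈ 𝔖) {f : α} (hf : f ∈ K) :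
    @Continuous Z ℝ (unifOn 𝔖 e).toTopologicalSpace _ (fun x => e x f) := by
  let _ : UniformSpace Z := unifOn 𝔖 e
  have h1 : UniformContinuous fun x => UniformOnFun.ofFun 𝔖 (e x) := uniformContinuous_comap
  exact ((UniformOnFun.uniformContinuous_eval_of_mem ℝ 𝔖 hf hK).comp h1).continuous

theorem isClosed_unifOn (c : Set α → ℝ) :
    @IsClosed Z (unifOn 𝔖 e).toTopologicalSpace {x | ∀ K ∈ 𝔖, ∀ f ∈ K, |e x f| ≤ c K} := by
  let _ : UniformSpace Z := unifOn 𝔖 e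
  have : {x | ∀ K ∈ 𝔖, ∀ f ∈ K, |e x f| ≤ c K}
      = ⋂ K ∈ 𝔖, ⋂ f ∈ K, {x | |e x f| ≤ c K} := by ext; simp
  rw [this]
  refine isClosed_biInter fun K hK => isClosed_biInter fun f hf => ?_
  exact isClosed_le (continuous_unifOn 𝔖 e hK hf).abs continuous_const

theorem hasBasis_comap_unifOn (hn : 𝔖.Nonempty) (hd : DirectedOn (· ⊆ ·) 𝔖) (φ : α → ℝ) :
    (comap (fun x => UniformOnFun.ofFun 𝔖 (e x)) (𝓝 (UniformOnFun.ofFun 𝔖 φ))).HasBasis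
      (fun i : Set α × ℝ => i.1 ∈ 𝔖 ∧ 0 < i.2) fun i => {x | ∀ f ∈ i.1, |e x f - φ f| < i.2} :=
  (UniformOnFun.hasBasis_nhds_of_basis α ℝ 𝔖 (UniformOnFun.ofFun 𝔖 φ) hn hd
    Metric.uniformity_basis_dist).comap _

/-- A function that can be approximated uniformly on the members of `𝔖` by members of a complete set
is represented by a member of that set. -/
theorem exists_eq_of_isComplete (hn : 𝔖.Nonempty) (hd : DirectedOn (· ⊆ ·) 𝔖) {S : Set Z}
    (hS : @IsComplete Z (unifOn 𝔖 e) S) {φ : α → ℝ}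
    (hφ : ∀ K ∈ 𝔖, ∀ ε : ℝ, 0 < ε → ∃ x ∈ S, ∀ f ∈ K, |e x f - φ f| < ε) :
    ∃ x ∈ S, ∀ K ∈ 𝔖, ∀ f ∈ K, e x f = φ f := by
  let _ : UniformSpace Z := unifOn 𝔖 e
  let ι : Z → UniformOnFun α ℝ 𝔖 := fun x => UniformOnFun.ofFun 𝔖 (e x)
  let φ' : UniformOnFun α ℝ 𝔖 := UniformOnFun.ofFun 𝔖 φ
  have hl : (comap ι (𝓝 φ') ⊓ 𝓟 S).NeBot := by
    rw [((hasBasis_comap_unifOn 𝔖 e hn hd φ).inf_principal S).neBot_iff]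
    rintro ⟨K, ε⟩ ⟨hK, hε⟩
    obtain ⟨x, hxS, hx⟩ := hφ K hK ε hε
    exact ⟨x, hx, hxS⟩
  have hl' : (comap ι (𝓝 φ')).NeBot := hl.mono inf_le_left
  have hc : Cauchy (comap ι (𝓝 φ')) := cauchy_nhds.comap' (le_of_eq rfl) hl'
  obtain ⟨x, hxS, hx⟩ := hS _ (hc.mono inf_le_left) inf_le_right
  refine ⟨x, hxS, fun K hK f hf => ?_⟩
  have h1 : Tendsto (fun z => e z f) (comap ι (𝓝 φ') ⊓ 𝓟 S) (𝓝 (e x f)) :=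
    ((continuous_unifOn 𝔖 e hK hf).tendsto x).mono_left hx
  have h2 : Tendsto (fun z => e z f) (comap ι (𝓝 φ') ⊓ 𝓟 S) (𝓝 (φ f)) :=
    (((UniformOnFun.uniformContinuous_eval_of_mem ℝ 𝔖 hf hK).continuous.tendsto φ').comp
      tendsto_comap).mono_left inf_le_left
  exact tendsto_nhds_unique h1 h2

end UniformConvergence

section Mackey

variable {X : Type*} [NormedAddCommGroup X] [NormedSpace ℝ X] {Y : Submodule ℝ (X →L[ℝ] ℝ)}

theorem mackeyFamily_nonempty : (mackeyFamily Y).Nonempty :=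
  ⟨∅, empty_subset _, convex_empty, fun a _ => by simp,
    isCompact_weakStar_iff.2 (by simp)⟩

theorem mackeyFamily_directed : DirectedOn (· ⊆ ·) (mackeyFamily Y) := by
  rintro K hK L hL
  rcases K.eq_empty_or_nonempty with rfl | hKn
  · exact ⟨L, hL, empty_subset _, subset_rfl⟩
  rcases L.eq_empty_or_nonempty with rfl | hLn
  · exact ⟨K, hK, subset_rfl, empty_subset _⟩
  obtain ⟨hK1, hK2, hK3, hK4⟩ := hK
  obtain ⟨hL1, hL2, hL3, hL4⟩ := hL
  have h0 : ∀ {S : Set (X →L[ℝ] ℝ)}, Balanced ℝ S → S.Nonempty → (0 : X →L[ℝ] ℝ) ∈ S := by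
    rintro S hS ⟨g, hg⟩
    have := hS.smul_mem (a := (0 : ℝ)) (by simp) hg
    rwa [zero_smul] at this
  refine ⟨K + L, ⟨?_, hK2.add hL2, hK3.add hL3, ?_⟩, fun f hf => ?_, fun f hf => ?_⟩
  · rintro _ ⟨f, hf, g, hg, rfl⟩
    exact Y.add_mem (hK1 hf) (hL1 hg)
  · rw [isCompact_weakStar_iff] at *
    have e : (fun (f : X →L[ℝ] ℝ) (x : X) => f x) '' (K + L)
        = (fun (f : X →L[ℝ] ℝ) (x : X) => f x) '' K + (fun (f : X →L[ℝ] ℝ) (x : X) => f x) '' L :=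
      image_image2_distrib fun _ _ => rfl
    rw [e]
    exact hK4.add hL4
  · exact ⟨f, hf, 0, h0 hL3 hLn, add_zero f⟩
  · exact ⟨0, h0 hK3 hKn, f, hf, zero_add f⟩

theorem exists_mem_mackeyFamily {f : X →L[ℝ] ℝ} (hf : f ∈ Y) : ∃ K ∈ mackeyFamily Y, f ∈ K := by
  refine ⟨(fun t : ℝ => t • f) '' Icc (-1) 1, ⟨?_, ?_, ?_, ?_⟩, 1, by norm_num, by simp⟩
  · rintro _ ⟨t, -, rfl⟩
    exact Y.smul_mem _ hf
  · exact (convex_Icc (-1 : ℝ) 1).is_linear_image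
      ⟨fun a b => add_smul a b f, fun a b => mul_smul a b f⟩
  · rintro a ha _ ⟨_, ⟨t, ht, rfl⟩, rfl⟩
    refine ⟨a * t, ?_, mul_smul a t f⟩
    rw [mem_Icc, ← abs_le] at ht ⊢
    rw [abs_mul]
    exact mul_le_one₀ ha (abs_nonneg _) ht
  · rw [isCompact_weakStar_iff, image_image]
    refine isCompact_Icc.image ?_
    refine continuous_pi fun x => ?_
    exact continuous_id.mul continuous_const

theorem isVonNBounded_mackey (c : Set (X →L[ℝ] ℝ) → ℝ) :
    @Bornology.IsVonNBounded ℝ X _ _ _ (mackeyTop Y)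
      {x | ∀ K ∈ mackeyFamily Y, ∀ f ∈ K, |f x| ≤ c K} := by
  intro V hV
  have hb := hasBasis_comap_unifOn (mackeyFamily Y) (fun (x : X) (f : X →L[ℝ] ℝ) => f x)
    mackeyFamily_nonempty mackeyFamily_directed (fun f => f 0)
  have hV' : V ∈ comap (fun x : X => UniformOnFun.ofFun (mackeyFamily Y)
      (fun f : X →L[ℝ] ℝ => f x)) (𝓝 (UniformOnFun.ofFun (mackeyFamily Y) fun f => f 0)) := by
    rwa [← nhds_induced]
  obtain ⟨⟨K, ε⟩, ⟨hK, hε⟩, hsub⟩ := hb.mem_iff.1 hV'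
  simp only [map_zero, sub_zero] at hε hsub
  rw [absorbs_iff_eventually_cobounded_mapsTo]
  have hlarge : ∀ᶠ a : ℝ in Bornology.cobounded ℝ, (|c K| + 1) / ε < ‖a‖ :=
    tendsto_norm_cobounded_atTop.eventually (eventually_gt_atTop _)
  filter_upwards [hlarge] with a ha x hx
  refine hsub fun f hf => ?_
  have hapos : 0 < |a| := lt_of_le_of_lt (by positivity) ha
  have h1 : |f x| < |a| * ε := by
    rw [div_lt_iff₀ hε] at ha
    exact lt_of_le_of_lt ((hx K hK f hf).trans ((le_abs_self _).trans (by linarith))) ha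
  simp only [map_smul, smul_eq_mul, abs_mul, abs_inv]
  rw [inv_mul_lt_iff₀ hapos]
  exact h1

/-- If `X` is Mackey quasi-complete, then every pointwise limit on `Y` of evaluations at points of
`C` is itself an evaluation, provided that functionals in `Y` attain their suprema on `C`. -/
theorem exists_eval_eq
    (hqc : ∀ S : Set X, @IsClosed X (mackeyTop Y) S →
      @Bornology.IsVonNBounded ℝ X _ _ _ (mackeyTop Y) S →
      @IsComplete X (mackeyUniformity Y) S)
    {C : Set X} {p : (X →L[ℝ] ℝ) → ℝ} (hJ : ∀ K ∈ mackeyFamily Y, ∃ c, JamesData Y K C p c)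
    {φ : (X →L[ℝ] ℝ) → ℝ} (hφ : IsLimitOf Y C φ) : ∃ x : X, ∀ f ∈ Y, f x = φ f := by
  choose! c hc using hJ
  set S : Set X := {x | ∀ K ∈ mackeyFamily Y, ∀ f ∈ K, |f x| ≤ c K} with hSdef
  have hSconv : Convex ℝ S := by
    intro x hx y hy a b ha hb hab K hK f hf
    have h1 := mul_le_mul_of_nonneg_left (hx K hK f hf) ha
    have h2 := mul_le_mul_of_nonneg_left (hy K hK f hf) hb
    rw [map_add, map_smul, map_smul, smul_eq_mul, smul_eq_mul]
    calc _ ≤ _ := abs_add_le _ _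
      _ = a * |f x| + b * |f y| := by rw [abs_mul, abs_mul, abs_of_nonneg ha, abs_of_nonneg hb]
      _ ≤ a * c K + b * c K := add_le_add h1 h2
      _ = c K := by rw [← add_mul, hab, one_mul]
  have hCS : convexHull ℝ C ⊆ S :=
    convexHull_min (fun x hx K hK f hf => (hc K hK).bd f hf x hx) hSconv
  have hS := hqc S (isClosed_unifOn (mackeyFamily Y) (fun x f => f x) c) (isVonNBounded_mackey c)
  obtain ⟨x, -, hx⟩ := exists_eq_of_isComplete (mackeyFamily Y)
    (fun (x : X) (f : X →L[ℝ] ℝ) => f x) mackeyFamily_nonempty mackeyFamily_directed hS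
    (φ := φ) (fun K hK ε hε => by
      obtain ⟨x, hx, h⟩ := hφ.exists_uniform (hc K hK) hK.2.2.2 hε
      exact ⟨x, hCS hx, h⟩)
  refine ⟨x, fun f hf => ?_⟩
  obtain ⟨K, hK, hfK⟩ := exists_mem_mackeyFamily hf
  exact hx K hK f hfK

end Mackey

/-! ### Compactness for `σ(X, Y)` and additive support functions -/

section SigmaTop

variable {X : Type*} [NormedAddCommGroup X] [NormedSpace ℝ X] {Y : Submodule ℝ (X →L[ℝ] ℝ)}

theorem continuous_sigmaTop {f : X →L[ℝ] ℝ} (hf : f ∈ Y) :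
    @Continuous X ℝ (sigmaTop (Y : Set (X →L[ℝ] ℝ))) _ f :=
  continuous_iff_le_induced.2 <| by
    refine le_trans (induced_mono (continuous_iff_le_induced.1
      (continuous_apply (A := fun _ => ℝ) (⟨f, hf⟩ : (Y : Set (X →L[ℝ] ℝ)))))) ?_
    rw [induced_compose]
    exact le_rfl

/-- James' theorem for `σ(X, Y)` when `X` is Mackey quasi-complete: a `σ(X, Y)`-closed set on which
every functional in `Y` attains its supremum is `σ(X, Y)`-compact. -/
theorem isCompact_of_attains
    (hqc : ∀ S : Set X, @IsClosed X (mackeyTop Y) S →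
      @Bornology.IsVonNBounded ℝ X _ _ _ (mackeyTop Y) S →
      @IsComplete X (mackeyUniformity Y) S)
    {C : Set X} (hC : @IsClosed X (sigmaTop (Y : Set (X →L[ℝ] ℝ))) C)
    (hatt : ∀ g ∈ Y, ∃ x ∈ C, ∀ z ∈ C, g z ≤ g x) :
    @IsCompact X (sigmaTop (Y : Set (X →L[ℝ] ℝ))) C := by
  classical
  choose! m hmC hm using hatt
  have hbd : ∀ g ∈ Y, ∀ x ∈ C, |g x| ≤ max (g (m g)) (-(g (m (-g)))) := by
    intro g hg x hx
    have h1 := hm g hg x hx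
    have h2 := hm (-g) (Y.neg_mem hg) x hx
    simp only [neg_apply] at h2
    exact abs_le'.2 ⟨h1.trans (le_max_left _ _), h2.trans (le_max_right _ _)⟩
  have hJ : ∀ K ∈ mackeyFamily Y, ∃ c, JamesData Y K C (fun g => g (m g)) c := by
    rintro K ⟨hKY, hKc, hKb, hKk⟩
    obtain ⟨c, hc0, hc⟩ := exists_uniform_bound hKc hKk (C := C)
      (fun f hf => ⟨_, hbd f (hKY hf)⟩)
    exact ⟨c, hKY, hKc, hKb, exists_weakStar_limit hKk, hm, fun g hg => ⟨m g, hmC g hg, rfl⟩,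
      hc0, hc⟩
  let ι : X → ((Y : Set (X →L[ℝ] ℝ)) : Type _) → ℝ := fun x y => y.1 x
  have hind : @Topology.IsInducing X _ (sigmaTop (Y : Set (X →L[ℝ] ℝ))) _ ι :=
    @Topology.IsInducing.mk _ _ (sigmaTop (Y : Set (X →L[ℝ] ℝ))) _ _ rfl
  rw [@Topology.IsInducing.isCompact_iff _ _ (sigmaTop (Y : Set (X →L[ℝ] ℝ))) _ _ _ hind]
  have hbox : IsCompact (univ.pi fun g : (Y : Set (X →L[ℝ] ℝ)) =>
      Icc (-(max (g.1 (m g.1)) (-(g.1 (m (-g.1)))))) (max (g.1 (m g.1)) (-(g.1 (m (-g.1)))))) :=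
    isCompact_univ_pi fun _ => isCompact_Icc
  refine hbox.of_isClosed_subset (isClosed_of_closure_subset fun ψ hψ => ?_) ?_
  · have hlim : IsLimitOf Y C (fun f => if h : f ∈ Y then ψ ⟨f, h⟩ else 0) := by
      intro s hs η hη
      have hev : ∀ f ∈ s, ∀ᶠ θ in 𝓝 ψ, ∀ h : f ∈ Y, |θ ⟨f, h⟩ - ψ ⟨f, h⟩| < η := by
        intro f hf
        have hc := (continuous_apply (⟨f, hs f hf⟩ : (Y : Set (X →L[ℝ] ℝ)))
          (A := fun _ => ℝ)).tendsto ψ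
        filter_upwards [Metric.tendsto_nhds.1 hc η hη] with θ hθ h
        rwa [Real.dist_eq] at hθ
      obtain ⟨_, ⟨x, hx, rfl⟩, hθ⟩ := ((mem_closure_iff_frequently.1 hψ).and_eventually
        ((Filter.eventually_all_finset s).2 hev)).exists
      refine ⟨x, hx, fun f hf => ?_⟩
      simp only [dif_pos (hs f hf)]
      exact hθ f hf (hs f hf)
    obtain ⟨x, hx⟩ := exists_eval_eq hqc hJ hlim
    have hxψ : ι x = ψ := by
      funext ⟨f, hf⟩
      have := hx f hf
      have hf' : f ∈ Y := hf
      simpa only [dif_pos hf'] using this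
    obtain ⟨T, hT, hTC⟩ := isClosed_induced_iff.1 hC
    refine ⟨x, ?_, hxψ⟩
    rw [← hTC]
    change ι x ∈ T
    rw [hxψ]
    exact closure_minimal (by rintro _ ⟨z, hz, rfl⟩; rw [← hTC] at hz; exact hz) hT hψ
  · rintro _ ⟨x, hx, rfl⟩ g -
    exact abs_le.1 (hbd g.1 g.2 x hx)

end SigmaTop

/-- A countably additive real set function attains its maximum over the measurable sets, namely at
the positive part of a Hahn decomposition. -/
theorem CountablyAdditive.exists_max {Ω : Type*} [MeasurableSpace Ω] {ν : Set Ω → ℝ}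
    (h : CountablyAdditive ν) :
    ∃ P : Set Ω, MeasurableSet P ∧ ∀ A, MeasurableSet A → ν A ≤ ν P := by
  classical
  have h0 : ν ∅ = 0 := by
    have := h (fun _ => ∅) (fun _ => MeasurableSet.empty) (fun _ _ _ => disjoint_bot_left)
    exact (summable_const_iff _).1 this.summable
  let s : MeasureTheory.SignedMeasure Ω :=
    { measureOf' := fun A => if MeasurableSet A then ν A else 0
      empty' := by simp [h0]
      not_measurable' := fun A hA => if_neg hA
      m_iUnion' := fun A hA hd => by
        simp only [hA, MeasurableSet.iUnion hA, if_true]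
        exact h A hA hd }
  have hs : ∀ A, MeasurableSet A → s A = ν A := fun A hA => if_pos hA
  obtain ⟨P, hP, hpos, hneg⟩ := s.exists_compl_positive_negative
  refine ⟨P, hP, fun A hA => ?_⟩
  have h1 := MeasureTheory.VectorMeasure.subset_le_of_restrict_le_restrict _ _ hP hpos
    (j := P \ A) sdiff_subset
  have h2 := MeasureTheory.VectorMeasure.subset_le_of_restrict_le_restrict _ _ hP.compl hneg
    (j := A \ P) (fun _ hx => hx.2)
  have h3 := s.of_add_of_sdiff (hA.inter hP) hA inter_subset_left
  have h4 := s.of_add_of_sdiff (hA.inter hP) hP inter_subset_right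
  rw [sdiff_self_inter] at h3
  rw [inter_comm, sdiff_self_inter, inter_comm] at h4
  rw [← hs A hA, ← hs P hP]
  simp only [FunLike.coe_zero, Pi.zero_apply] at h1 h2
  linarith

/-- Let `X` be a Banach space and `Y ⊆ X*` a total linear subspace
such that `(X, μ(X,Y))` is quasi-complete (every `μ(X,Y)`-closed, `μ(X,Y)`-bounded set
is complete). If `M : Σ → b(X)` has relatively `σ(X,Y)`-compact values and `s(x*, M)`
is countably additive for every `x* ∈ Y`, then `⋃_{A ∈ Σ} M(A)` is relatively
`σ(X,Y)`-compact. -/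
theorem statement11 {Ω X : Type*} [MeasurableSpace Ω]
    [NormedAddCommGroup X] [NormedSpace ℝ X] [CompleteSpace X]
    (Y : Submodule ℝ (X →L[ℝ] ℝ))
    (hYtotal : ∀ x : X, (∀ f ∈ Y, f x = 0) → x = 0)
    (hqc : ∀ S : Set X, @IsClosed X (mackeyTop Y) S →
      @Bornology.IsVonNBounded ℝ X _ _ _ (mackeyTop Y) S →
      @IsComplete X (mackeyUniformity Y) S)
    (M : Set Ω → Set X)
    (hne : ∀ A : Set Ω, MeasurableSet A → (M A).Nonempty)
    (hbd : ∀ A : Set Ω, MeasurableSet A → Bornology.IsBounded (M A))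
    (hcpt : ∀ A : Set Ω, MeasurableSet A →
      @IsCompact X (sigmaTop (Y : Set (X →L[ℝ] ℝ)))
        (@closure X (sigmaTop (Y : Set (X →L[ℝ] ℝ))) (M A)))
    (hca : ∀ f ∈ Y, CountablyAdditive (fun A => supportFn f (M A))) :
    @IsCompact X (sigmaTop (Y : Set (X →L[ℝ] ℝ)))
      (@closure X (sigmaTop (Y : Set (X →L[ℝ] ℝ)))
        (⋃ (A : Set Ω) (_ : MeasurableSet A), M A)) := by
  refine isCompact_of_attains hqc (@isClosed_closure X (sigmaTop (Y : Set (X →L[ℝ] ℝ))) _)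
    fun f hf => ?_
  obtain ⟨P, hP, hmax⟩ := (hca f hf).exists_max
  have hcont := continuous_sigmaTop hf
  obtain ⟨x, hx, hxmax⟩ := @IsCompact.exists_isMaxOn ℝ X _ _ (sigmaTop (Y : Set (X →L[ℝ] ℝ))) _ _
    (hcpt P hP) ((hne P hP).mono (@subset_closure X (sigmaTop (Y : Set (X →L[ℝ] ℝ))) _)) f
    (@Continuous.continuousOn X ℝ (sigmaTop (Y : Set (X →L[ℝ] ℝ))) _ _ _ hcont)
  refine ⟨x, (@closure_mono X (sigmaTop (Y : Set (X →L[ℝ] ℝ))) _ _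
    (subset_biUnion_of_mem (u := M) (s := {A | MeasurableSet A}) hP)) hx, ?_⟩
  refine @closure_minimal X (sigmaTop (Y : Set (X →L[ℝ] ℝ))) _ {z | f z ≤ f x} ?_
    (@isClosed_le ℝ X _ _ _ (sigmaTop (Y : Set (X →L[ℝ] ℝ))) _ _ hcont
      (@continuous_const X ℝ (sigmaTop (Y : Set (X →L[ℝ] ℝ))) _ _))
  intro z hz
  obtain ⟨A, hA, hzA⟩ := mem_iUnion₂.1 hz
  obtain ⟨R, hR⟩ := (hbd A hA).exists_norm_le
  have hbdd : BddAbove (f '' M A) := by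
    refine ⟨‖f‖ * R, ?_⟩
    rintro _ ⟨y, hy, rfl⟩
    exact (le_abs_self _).trans ((f.le_opNorm y).trans
      (mul_le_mul_of_nonneg_left (hR y hy) (norm_nonneg f)))
  calc f z ≤ supportFn f (M A) := le_csSup hbdd ⟨z, hzA, rfl⟩
    _ ≤ supportFn f (M P) := hmax A hA
    _ ≤ f x := by
      refine csSup_le ((hne P hP).image f) ?_
      rintro _ ⟨y, hy, rfl⟩
      exact hxmax (@subset_closure X (sigmaTop (Y : Set (X →L[ℝ] ℝ))) _ _ hy)
end

section
/- Let X be a real Banach space and let M be a multimeasure defined on a σ-algebra Σ such that M(A) is a relatively weakly compact non-empty subset of X for every A ∈ Σ. Then the set ⋃_{A∈Σ} M(A) is relatively weakly compact. -/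
/-!
Let `S` be the union of the values of `M`. It is bounded by the uniform boundedness principle,
since every support measure `s(p, M)` is bounded. If `S` were not relatively weakly compact, the
double-limit criterion (`exists_array_of_not_compact`) would give `δ > 0`, points `x n ∈ M (A n)` and
functionals `f m` in the dual unit ball with `f m (x n) = 0` for `n < m` and `f m (x n) ≥ δ` for
`m ≤ n`.

Choose a finite measure `μ` controlling the support measures of all `± f m`, let `g` be a weak* limit
of the indicators of the `A n` (`exists_indicator_limit`), and put `B k = {N g ≥ k + 1}` for `k < N`.
The averaged indicators of the `B k` approximate `g` uniformly within `1 / N`. The sum `T` of the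
weak closures of the `M (B k)`, `k < N`, is weakly compact, so some weak* cluster point `F` of the
`f m` is approximated, uniformly on `T`, by convex combinations `h` of the `f m`
(`exists_cluster_approx`).

Now `F (x n) = 0` for all `n`, hence `(h - F) (x n) ≥ δ` for large `n`, and so
`s(h - F, M (A n)) ≥ δ`. The support measure of `h - F` has a `μ`-density, so passing to the limit in
`n` and replacing `g` by its layers gives `∑ k < N, s(h - F, M (B k)) ≥ N δ - O(1)`
(`exists_layer_points`). The left-hand side is a value of `h - F` on `T`, which may be taken at most
`N δ / 2`; for large `N` this is a contradiction.
-/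

/-- The weak topology on `X`: the topology of pointwise convergence on `X*`. -/
def weakTop (X : Type*) [NormedAddCommGroup X] [NormedSpace ℝ X] : TopologicalSpace X :=
  TopologicalSpace.induced (fun x => fun f : X →L[ℝ] ℝ => f x) Pi.topologicalSpace

open Filter Topology MeasureTheory Set

/-! ### The double-limit criterion -/

/-- Banach–Alaoglu for ultrafilters. -/
lemma dual_ultrafilter_limit {E ι : Type*} [NormedAddCommGroup E] [NormedSpace ℝ E]
    (U : Ultrafilter ι) (f : ι → E →L[ℝ] ℝ) (C : ℝ) (hf : ∀ᶠ i in (U : Filter ι), ‖f i‖ ≤ C) :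
    ∃ F : E →L[ℝ] ℝ, ‖F‖ ≤ C ∧ ∀ x, Tendsto (fun i => f i x) U (𝓝 (F x)) := by
  have hc := WeakDual.isCompact_closedBall (𝕜 := ℝ) (E := E) 0 C
  have hU : ((U.map (fun i => StrongDual.toWeakDual (f i)) : Ultrafilter (WeakDual ℝ E)) :
      Filter (WeakDual ℝ E)) ≤
      𝓟 (WeakDual.toStrongDual ⁻¹' Metric.closedBall (0 : StrongDual ℝ E) C) := by
    rw [Ultrafilter.coe_map, le_principal_iff, mem_map]
    filter_upwards [hf] with i hi
    simpa using hi
  obtain ⟨F, hF, hlim⟩ := hc.ultrafilter_le_nhds _ hU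
  refine ⟨WeakDual.toStrongDual F, by simpa using hF, fun x => ?_⟩
  have h2 : Tendsto (fun G : WeakDual ℝ E => G x) (𝓝 F) (𝓝 (F x)) :=
    (WeakDual.eval_continuous x).tendsto F
  exact h2.comp (show Tendsto (fun i => StrongDual.toWeakDual (f i)) U (𝓝 F) from hlim)

/-- Helly's lemma: a functional at distance at least `d` from the span of finitely many functionals
`L i` exceeds any `c < d` somewhere on the unit ball of the common kernel of the `L i`. -/
lemma exists_mem_ker_large {E ι : Type*} [NormedAddCommGroup E] [NormedSpace ℝ E] [Finite ι]
    (L : ι → StrongDual ℝ E) (ψ : StrongDual ℝ E) (d c : ℝ) (hc : 0 ≤ c) (hcd : c < d)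
    (hd : ∀ w ∈ Submodule.span ℝ (range L), d ≤ ‖ψ - w‖) :
    ∃ e : E, ‖e‖ ≤ 1 ∧ (∀ i, L i e = 0) ∧ c < ψ e := by
  by_contra! hcon
  let L' : ι → E →ₗ[ℝ] ℝ := fun i => (L i : E →ₗ[ℝ] ℝ)
  let p : Submodule ℝ E := ⨅ i, LinearMap.ker (L' i)
  have hp : ∀ e ∈ p, ∀ i, L i e = 0 := by
    intro e he i
    have := (Submodule.mem_iInf _).1 he i
    simpa [L'] using this
  let ψp : StrongDual ℝ p := ψ.comp p.subtypeL
  have hψp : ‖ψp‖ ≤ c := by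
    refine ContinuousLinearMap.opNorm_le_of_unit_norm hc fun e he => ?_
    have he' : ‖(e : E)‖ ≤ 1 := he.le
    rw [Real.norm_eq_abs, abs_le]
    have h1 := hcon e he' (hp e e.2)
    have h2 := hcon (-e) (by simpa using he') (by simpa using hp e e.2)
    rw [map_neg] at h2
    exact ⟨by change -c ≤ ψ e; linarith, h1⟩
  obtain ⟨z, hz, hzn⟩ := exists_extension_norm_eq p ψp
  have hspan : ((ψ - z : StrongDual ℝ E) : E →ₗ[ℝ] ℝ) ∈ Submodule.span ℝ (range L') := by
    refine mem_span_of_iInf_ker_le_ker fun f hf => ?_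
    have : z f = ψ f := hz ⟨f, hf⟩
    simp [this]
  have hrange : Submodule.span ℝ (range L') =
      (Submodule.span ℝ (range L)).map (ContinuousLinearMap.coeLM ℝ) := by
    rw [Submodule.map_span, ← range_comp]; rfl
  rw [hrange] at hspan
  obtain ⟨w, hw, hwz⟩ := hspan
  have hw' : w = ψ - z := ContinuousLinearMap.coe_injective hwz
  have := hd w hw
  rw [hw', sub_sub_cancel, hzn] at this
  linarith

/-- Grothendieck's double-limit criterion: a bounded set which is not relatively weakly compact
carries a triangular array of values with separated iterated limits. -/
lemma exists_array_of_not_compact {X : Type*} [NormedAddCommGroup X] [NormedSpace ℝ X]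
    [CompleteSpace X] (S : Set X) (R : ℝ) (hR : ∀ x ∈ S, ‖x‖ ≤ R)
    (hS : ¬ @IsCompact X (weakTop X) (@closure X (weakTop X) S)) :
    ∃ (δ : ℝ) (f : ℕ → X →L[ℝ] ℝ) (x : ℕ → X), 0 < δ ∧ (∀ m, ‖f m‖ ≤ 1) ∧ (∀ n, x n ∈ S) ∧
      (∀ n m, n < m → f m (x n) = 0) ∧ ∀ n m, m ≤ n → δ ≤ f m (x n) := by
  let J : X → (X →L[ℝ] ℝ) → ℝ := fun x f => f x
  have hJ : @Topology.IsInducing X _ (weakTop X) _ J := @Topology.IsInducing.mk _ _ (weakTop X) _ _ rfl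
  have hcomp : IsCompact (closure (J '' S)) := by
    have hbox : IsCompact (Set.univ.pi fun f : X →L[ℝ] ℝ => Icc (-(‖f‖ * R)) (‖f‖ * R)) :=
      isCompact_univ_pi fun f => isCompact_Icc
    refine hbox.of_isClosed_subset isClosed_closure (closure_minimal ?_ hbox.isClosed)
    rintro _ ⟨x, hx, rfl⟩ f -
    exact abs_le.1 ((f.le_opNorm x).trans (by gcongr; exact hR x hx))
  have hex : ∃ φ ∈ closure (J '' S), φ ∉ range J := by
    by_contra! h
    apply hS
    refine (@Topology.IsInducing.isCompact_iff _ _ (weakTop X) _ _ J hJ).2 ?_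
    rw [@Topology.IsInducing.closure_eq_preimage_closure_image _ _ J _ (weakTop X) hJ S,
      image_preimage_eq_of_subset h]
    exact hcomp
  obtain ⟨φ, hφ, hφJ⟩ := hex
  have hφ' : MapClusterPt φ (𝓟 S) J := by
    rw [mem_closure_iff_clusterPt, ← map_principal] at hφ
    exact hφ
  obtain ⟨U, hUS, hU⟩ := mapClusterPt_iff_ultrafilter.1 hφ'
  obtain ⟨ψ, -, hψ⟩ := dual_ultrafilter_limit U (NormedSpace.inclusionInDoubleDual ℝ X) R (by
    filter_upwards [le_principal_iff.1 hUS] with x hx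
    exact (NormedSpace.double_dual_bound ℝ X x).trans (hR x hx))
  have hψφ : ∀ f, ψ f = φ f := fun f =>
    tendsto_nhds_unique (hψ f) ((tendsto_pi_nhds.1 hU) f)
  let K := range (NormedSpace.inclusionInDoubleDualLi (E := X) ℝ)
  have hK : IsClosed K := by
    have := (NormedSpace.inclusionInDoubleDualLi (E := X) ℝ).isometry.isUniformInducing
    exact this.isComplete_range.isClosed
  have hψK : ψ ∉ K := by
    rintro ⟨x, hx⟩
    apply hφJ
    refine ⟨x, funext fun f => ?_⟩
    rw [← hψφ, ← hx]; rfl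
  have hd : 0 < Metric.infDist ψ K :=
    (hK.notMem_iff_infDist_pos (range_nonempty _)).1 hψK
  set d := Metric.infDist ψ K with hdd
  have hd' : ∀ x : X, d ≤ ‖ψ - NormedSpace.inclusionInDoubleDual ℝ X x‖ := fun x => by
    rw [← dist_eq_norm]
    exact Metric.infDist_le_dist_of_mem ⟨x, rfl⟩
  -- Build the pairs `(f m, x m)` recursively: `f m` comes from Helly's lemma applied to the earlier
  -- points, and `x m ∈ S` is close to `ψ` on `f 0, …, f m`.
  obtain ⟨q, hq, hq'⟩ := exists_seq_of_forall_finset_exists (α := (X →L[ℝ] ℝ) × X)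
    (fun a => ‖a.1‖ ≤ 1 ∧ d / 2 < ψ a.1 ∧ a.2 ∈ S ∧ d / 2 ≤ a.1 a.2)
    (fun a b => b.1 a.2 = 0 ∧ d / 2 ≤ a.1 b.2) (by
      intro s hs
      obtain ⟨f, hf1, hf0, hfψ⟩ := exists_mem_ker_large
        (fun a : s => NormedSpace.inclusionInDoubleDual ℝ X a.1.2) ψ d (d / 2) (by linarith)
        (by linarith) (by
          intro w hw
          have hle : Submodule.span ℝ
              (range fun a : s => NormedSpace.inclusionInDoubleDual ℝ X a.1.2) ≤
              LinearMap.range (NormedSpace.inclusionInDoubleDual ℝ X : X →ₗ[ℝ] _) := by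
            rw [Submodule.span_le]
            rintro _ ⟨a, rfl⟩
            exact ⟨a.1.2, rfl⟩
          obtain ⟨x, rfl⟩ := hle hw
          exact hd' x)
      have h1 : ∀ᶠ x in (U : Filter X), d / 2 ≤ f x :=
        ((hψ f).eventually (lt_mem_nhds hfψ)).mono fun x hx => hx.le
      have h2 : ∀ᶠ x in (U : Filter X), ∀ a ∈ s, d / 2 ≤ a.1 x :=
        (Filter.eventually_all_finset s).2 fun a ha =>
          ((hψ a.1).eventually (lt_mem_nhds (hs a ha).2.1)).mono fun x hx => hx.le
      obtain ⟨x, hx1, hx2, hxS⟩ := (h1.and (h2.and (le_principal_iff.1 hUS))).exists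
      exact ⟨(f, x), ⟨hf1, hfψ, hxS, hx1⟩, fun a ha =>
        ⟨hf0 ⟨a, ha⟩, hx2 a ha⟩⟩)
  refine ⟨d / 2, fun m => (q m).1, fun n => (q n).2, by linarith, fun m => (hq m).1,
    fun n => (hq n).2.2.1, fun n m h => (hq' n m h).1, fun n m h => ?_⟩
  rcases h.eq_or_lt with rfl | h
  · exact (hq m).2.2.2
  · exact (hq' m n h).2

/-! ### Uniform approximation by convex combinations -/

/-- Bounded pointwise convergence to zero of nonnegative continuous functions on a compact space is
uniform along suitable convex combinations: otherwise Hahn–Banach separation produces a positive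
functional bounded below on the sequence, and its representing measure contradicts dominated
convergence. -/
lemma exists_convexHull_lt {Y : Type*} [TopologicalSpace Y] [CompactSpace Y] [T2Space Y]
    (g : ℕ → C(Y, ℝ)) (C : ℝ) (h0 : ∀ k y, 0 ≤ g k y) (hC : ∀ k y, g k y ≤ C)
    (hg : ∀ y, Tendsto (fun k => g k y) atTop (𝓝 0)) (η : ℝ) (hη : 0 < η) :
    ∃ h ∈ convexHull ℝ (range g), ∀ y, h y < η := by
  by_contra! hcon
  let B : Set C(Y, ℝ) := {h | ∀ y, h y < η}
  have hBopen : IsOpen B := by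
    have := ContinuousMap.isOpen_setOfPred_mapsTo (X := Y) isCompact_univ (isOpen_Iio (a := η))
    convert this using 1
    ext h
    simp [B, MapsTo]
  have hBconv : Convex ℝ B := by
    intro p hp q hq a b ha hb hab y
    have h1 := hp y
    have h2 := hq y
    have := (convex_Iio (𝕜 := ℝ) η) h1 h2 ha hb hab
    simpa using this
  have hdisj : Disjoint B (convexHull ℝ (range g)) := by
    rw [Set.disjoint_left]
    intro h hB hh
    obtain ⟨y, hy⟩ := hcon h hh
    exact absurd (hB y) (not_lt.2 hy)
  obtain ⟨Λ, u, hΛB, hΛg⟩ :=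
    geometric_hahn_banach_open hBconv hBopen (convex_convexHull ℝ _) hdisj
  have hu : 0 < u := by simpa using hΛB 0 (fun y => by simpa using hη)
  have hpos : ∀ h : C(Y, ℝ), (∀ y, 0 ≤ h y) → 0 ≤ Λ h := by
    intro h hh
    by_contra! hneg
    have := hΛB ((u / Λ h) • h) (fun y => by
      have : u / Λ h * h y ≤ 0 :=
        mul_nonpos_of_nonpos_of_nonneg (div_nonpos_of_nonneg_of_nonpos hu.le hneg.le) (hh y)
      simpa using this.trans_lt hη)
    rw [map_smul, smul_eq_mul, div_mul_cancel₀ _ hneg.ne] at this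
    exact lt_irrefl _ this
  let Λ' : CompactlySupportedContinuousMap Y ℝ →ₚ[ℝ] ℝ :=
  { toFun := fun p => Λ p.toContinuousMap
    map_add' := fun p q => map_add Λ p.toContinuousMap q.toContinuousMap
    map_smul' := fun c p => map_smul Λ c p.toContinuousMap
    monotone' := fun p q hpq => by
      have := hpos (q.toContinuousMap - p.toContinuousMap) (fun y => sub_nonneg.2 (hpq y))
      rw [map_sub] at this
      exact sub_nonneg.1 this }
  let _ : MeasurableSpace Y := borel Y
  have : BorelSpace Y := ⟨rfl⟩
  let μ := RealRMK.rieszMeasure Λ'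
  have hμ : ∀ k, ∫ y, g k y ∂μ = Λ (g k) := fun k =>
    RealRMK.integral_rieszMeasure Λ'
      ⟨g k, HasCompactSupport.of_compactSpace _⟩
  have hlim : Tendsto (fun k => ∫ y, g k y ∂μ) atTop (𝓝 (∫ _, 0 ∂μ)) := by
    refine tendsto_integral_of_dominated_convergence (fun _ => C)
      (fun k => (g k).continuous.aestronglyMeasurable) (integrable_const C) ?_ ?_
    · intro k
      refine Eventually.of_forall fun y => ?_
      rw [Real.norm_of_nonneg (h0 k y)]
      exact hC k y
    · exact Eventually.of_forall hg
  have : u ≤ ∫ _, (0 : ℝ) ∂μ := ge_of_tendsto' hlim fun k => by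
    rw [hμ]
    exact hΛg _ (subset_convexHull ℝ _ ⟨k, rfl⟩)
  simp at this
  linarith

/-- Grothendieck's extraction argument. A bounded sequence of functionals has a subsequence
converging pointwise on a given weakly compact set, so one of its weak* cluster points is
approximated by convex combinations of the sequence, uniformly on that set. The compact set is given
as the image of a weakly continuous map `e`. -/
lemma exists_cluster_approx {X Y : Type*} [NormedAddCommGroup X] [NormedSpace ℝ X]
    [TopologicalSpace Y] [CompactSpace Y] [T2Space Y] [Nonempty Y]
    (f : ℕ → X →L[ℝ] ℝ) (hf : ∀ m, ‖f m‖ ≤ 1)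
    (e : Y → X) (he : ∀ p : X →L[ℝ] ℝ, Continuous fun y => p (e y)) :
    ∃ F : X →L[ℝ] ℝ, ‖F‖ ≤ 1 ∧
      (∀ x c, Tendsto (fun m => f m x) atTop (𝓝 c) → F x = c) ∧
      ∀ η > 0, ∃ h ∈ convexHull ℝ (range f), ∀ y, |h (e y) - F (e y)| ≤ η := by
  let π : Y → ℕ → ℝ := fun y m => f m (e y)
  have hπ : Continuous π := continuous_pi fun m => he (f m)
  choose yy hyy using fun i => (TopologicalSpace.denseSeq (range π) i).2
  obtain ⟨a, -, φ, hφ, ha⟩ :=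
    (isCompact_univ_pi (fun i => isCompact_Icc (a := -‖e (yy i)‖) (b := ‖e (yy i)‖))).tendsto_subseq
      (x := fun m i => f m (e (yy i))) (fun m i _ => abs_le.1 (by
        have := (f m).le_of_opNorm_le (hf m) (e (yy i))
        simpa using this))
  have ha' : ∀ i, Tendsto (fun k => f (φ k) (e (yy i))) atTop (𝓝 (a i)) :=
    fun i => (tendsto_pi_nhds.1 ha) i
  have hlimit : ∀ U : Ultrafilter ℕ, ∃ F : X →L[ℝ] ℝ, ‖F‖ ≤ 1 ∧
      ∀ x, Tendsto (fun k => f (φ k) x) U (𝓝 (F x)) := fun U =>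
    dual_ultrafilter_limit U (fun k => f (φ k)) 1 (Eventually.of_forall fun k => hf _)
  choose G hG1 hG using hlimit
  -- A cluster point is constant on the fibres of `π` and determined by its values at the `yy i`.
  have hkey : ∀ U V : Ultrafilter ℕ, (U : Filter ℕ) ≤ atTop → (V : Filter ℕ) ≤ atTop →
      ∀ y, G U (e y) = G V (e y) := by
    intro U V hU hV y
    have hi : ∀ i, G U (e (yy i)) = G V (e (yy i)) := fun i =>
      (tendsto_nhds_unique (hG U _) ((ha' i).mono_left hU)).trans
        (tendsto_nhds_unique (hG V _) ((ha' i).mono_left hV)).symm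
    have hcl : MapClusterPt (⟨π y, mem_range_self y⟩ : range π) ⊤
        (TopologicalSpace.denseSeq (range π)) := by
      have := TopologicalSpace.denseRange_denseSeq (range π) ⟨π y, mem_range_self y⟩
      rw [mem_closure_iff_clusterPt, ← map_top] at this
      exact this
    obtain ⟨W, -, hW⟩ := mapClusterPt_iff_ultrafilter.1 hcl
    obtain ⟨y', -, hy'⟩ := isCompact_univ.ultrafilter_le_nhds (W.map yy) (by simp)
    have hy'' : Tendsto yy W (𝓝 y') := hy'
    have hπy : π y' = π y := by
      refine tendsto_nhds_unique ((hπ.tendsto y').comp hy'') ?_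
      have := (continuous_subtype_val.tendsto _).comp hW
      refine this.congr fun i => ?_
      exact (hyy i).symm
    have hfib : ∀ T : Ultrafilter ℕ, G T (e y') = G T (e y) := fun T =>
      tendsto_nhds_unique (hG T (e y')) ((hG T (e y)).congr fun k =>
        (congrFun hπy (φ k)).symm)
    rw [← hfib U, ← hfib V]
    refine tendsto_nhds_unique (((he (G U)).tendsto y').comp hy'') ?_
    exact (((he (G V)).tendsto y').comp hy'').congr fun i => (hi i).symm
  let U : Ultrafilter ℕ := hyperfilter ℕ
  have hU : (U : Filter ℕ) ≤ atTop := Nat.hyperfilter_le_atTop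
  have hconv : ∀ y, Tendsto (fun k => f (φ k) (e y)) atTop (𝓝 (G U (e y))) := by
    intro y
    rw [tendsto_iff_ultrafilter]
    intro V hV
    rw [hkey U V hU hV y]
    exact hG V (e y)
  obtain ⟨C, hC⟩ : ∃ C, ∀ y, ‖e y‖ ≤ C := by
    obtain ⟨C, hC⟩ := banach_steinhaus
      (g := fun y => NormedSpace.inclusionInDoubleDual ℝ X (e y)) (fun p => by
        obtain ⟨C, hC⟩ := isCompact_univ.exists_bound_of_continuousOn (he p).continuousOn
        exact ⟨C, fun y => hC y trivial⟩)
    refine ⟨C, fun y => ?_⟩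
    rw [← (NormedSpace.inclusionInDoubleDualLi (E := X) ℝ).norm_map]
    exact hC y
  refine ⟨G U, hG1 U, fun x c hx => ?_, fun η hη => ?_⟩
  · exact tendsto_nhds_unique (hG U x) ((hx.comp hφ.tendsto_atTop).mono_left hU)
  let g : ℕ → C(Y, ℝ) := fun k =>
    ⟨fun y => |f (φ k) (e y) - G U (e y)|, ((he _).sub (he _)).abs⟩
  obtain ⟨h0, hh0, hlt⟩ := exists_convexHull_lt g (2 * C) (fun k y => abs_nonneg _)
    (fun k y => by
      have h1 := (f (φ k)).le_of_opNorm_le (hf _) (e y)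
      have h2 := (G U).le_of_opNorm_le (hG1 U) (e y)
      have h3 := norm_sub_le (f (φ k) (e y)) (G U (e y))
      have := hC y
      change ‖f (φ k) (e y) - G U (e y)‖ ≤ 2 * C
      linarith)
    (fun y => by
      have := ((hconv y).sub_const (G U (e y))).abs
      rw [sub_self, abs_zero] at this
      exact this) η hη
  have hsub : convexHull ℝ (range g) ⊆ {q : C(Y, ℝ) | ∃ h ∈ convexHull ℝ (range f),
      ∀ y, |h (e y) - G U (e y)| ≤ q y} := by
    refine convexHull_min ?_ ?_
    · rintro _ ⟨k, rfl⟩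
      exact ⟨f (φ k), subset_convexHull ℝ _ ⟨_, rfl⟩, fun y => le_rfl⟩
    · rintro q ⟨h, hh, hq⟩ q' ⟨h', hh', hq'⟩ s t hs ht hst
      refine ⟨s • h + t • h', convex_convexHull ℝ _ hh hh' hs ht hst, fun y => ?_⟩
      have e1 : (s • h + t • h') (e y) - G U (e y) =
          s * (h (e y) - G U (e y)) + t * (h' (e y) - G U (e y)) := by
        simp only [_root_.add_apply, _root_.smul_apply, smul_eq_mul]
        linear_combination (G U (e y)) * hst
      rw [e1]
      refine (abs_add_le _ _).trans ?_
      rw [abs_mul, abs_mul, abs_of_nonneg hs, abs_of_nonneg ht]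
      have := mul_le_mul_of_nonneg_left (hq y) hs
      have := mul_le_mul_of_nonneg_left (hq' y) ht
      simp only [ContinuousMap.add_apply, ContinuousMap.smul_apply, smul_eq_mul]
      linarith
  obtain ⟨h, hh, hle⟩ := hsub hh0
  exact ⟨h, hh, fun y => (hle y).trans (hlt y).le⟩

/-! ### Weak* limits of indicators and their layers -/

/-- Weak* compactness of the unit ball of `L^∞` along an ultrafilter, for indicator functions: the
limit is found in `L²` and tested against integrable functions by density. -/
lemma exists_indicator_limit {Ω : Type*} [MeasurableSpace Ω] (μ : Measure Ω) [IsFiniteMeasure μ]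
    (A : ℕ → Set Ω) (hA : ∀ n, MeasurableSet (A n)) (U : Ultrafilter ℕ) :
    ∃ g : Ω → ℝ, Measurable g ∧ (∀ ω, 0 ≤ g ω) ∧ (∀ ω, g ω ≤ 1) ∧
      ∀ h : Ω → ℝ, Integrable h μ →
        Tendsto (fun n => ∫ ω in A n, h ω ∂μ) U (𝓝 (∫ ω, g ω * h ω ∂μ)) := by
  let I : ∀ {B : Set Ω}, MeasurableSet B → Lp ℝ 2 μ := fun hB =>
    indicatorConstLp 2 hB (measure_ne_top μ _) (1 : ℝ)
  obtain ⟨F, -, hF⟩ := dual_ultrafilter_limit U (fun n => innerSL ℝ (I (hA n)))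
    (μ.real univ ^ (1 / (2 : ENNReal).toReal)) (Eventually.of_forall fun n => by
      rw [innerSL_apply_norm]
      refine (norm_indicatorConstLp_le).trans ?_
      rw [norm_one, one_mul]
      gcongr
      · simp
      · exact subset_univ _)
  let G : Lp ℝ 2 μ := (InnerProductSpace.toDual ℝ _).symm F
  have hGint : Integrable G μ := (Lp.memLp G).integrable (by norm_num)
  have hGB : ∀ B, MeasurableSet B →
      Tendsto (fun n => μ.real (A n ∩ B)) U (𝓝 (∫ ω in B, G ω ∂μ)) := by
    intro B hB
    have h1 := hF (I hB)
    have h2 : F (I hB) = ∫ ω in B, G ω ∂μ := by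
      rw [← L2.inner_indicatorConstLp_one (𝕜 := ℝ) hB (measure_ne_top μ _) G, real_inner_comm]
      exact (InnerProductSpace.toDual_symm_apply).symm
    rw [h2] at h1
    refine h1.congr fun n => ?_
    rw [innerSL_apply_apply]
    refine (L2.inner_indicatorConstLp_one (𝕜 := ℝ) (hA n) (measure_ne_top μ _) (I hB)).trans ?_
    rw [setIntegral_congr_ae (g := B.indicator fun _ => (1 : ℝ)) (hA n)
      (indicatorConstLp_coeFn.mono fun ω hω _ => hω), setIntegral_indicator hB]
    simp
  have hG0 : 0 ≤ᵐ[μ] G := ae_nonneg_of_forall_setIntegral_nonneg hGint fun B hB _ =>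
    ge_of_tendsto' (hGB B hB) fun n => measureReal_nonneg
  have hG1 : G ≤ᵐ[μ] fun _ => (1 : ℝ) :=
    ae_le_of_forall_setIntegral_le hGint (integrable_const 1) fun B hB _ => by
      refine (le_of_tendsto' (hGB B hB) fun n => measureReal_mono inter_subset_right).trans ?_
      simp
  let g : Ω → ℝ := fun ω => max 0 (min 1 (G ω))
  have hgm : Measurable g :=
    measurable_const.max (measurable_const.min (Lp.stronglyMeasurable G).measurable)
  have hg0 : ∀ ω, 0 ≤ g ω := fun ω => le_max_left _ _
  have hg1 : ∀ ω, g ω ≤ 1 := fun ω => max_le zero_le_one (min_le_left _ _)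
  have hgG : g =ᵐ[μ] G := by
    filter_upwards [hG0, hG1] with ω h0 h1
    simp only [g]
    rw [min_eq_right h1]
    exact max_eq_right h0
  refine ⟨g, hgm, hg0, hg1, ?_⟩
  have hgi : ∀ h : Ω → ℝ, Integrable h μ → Integrable (fun ω => g ω * h ω) μ := fun h hh =>
    hh.bdd_mul (c := 1) hgm.aestronglyMeasurable (Eventually.of_forall fun ω => by
      rw [Real.norm_of_nonneg (hg0 ω)]; exact hg1 ω)
  intro h hh
  refine Integrable.induction (fun h : Ω → ℝ => Tendsto (fun n => ∫ ω in A n, h ω ∂μ) U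
    (𝓝 (∫ ω, g ω * h ω ∂μ))) ?_ ?_ ?_ ?_ hh
  · intro c B hs _
    have h1 := (hGB B hs).mul_const c
    have h2 : ∫ ω, g ω * B.indicator (fun _ => c) ω ∂μ = (∫ ω in B, G ω ∂μ) * c := by
      rw [← integral_mul_const, ← integral_indicator hs]
      refine integral_congr_ae ?_
      filter_upwards [hgG] with ω hω
      by_cases hωB : ω ∈ B <;> simp [hωB, hω]
    rw [h2]
    refine h1.congr fun n => ?_
    rw [setIntegral_indicator hs]
    simp
  · intro f f' _ hf hf' h1 h2
    have h3 := h1.add h2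
    have h4 : ∫ ω, g ω * (f + f') ω ∂μ = ∫ ω, g ω * f ω ∂μ + ∫ ω, g ω * f' ω ∂μ := by
      rw [← integral_add (hgi _ hf) (hgi _ hf')]
      simp [mul_add]
    rw [h4]
    refine h3.congr fun n => ?_
    exact (integral_add hf.integrableOn hf'.integrableOn).symm
  · refine isClosed_of_closure_subset fun q hq => ?_
    rw [Set.mem_ofPred_eq, Metric.tendsto_nhds]
    intro ε hε
    obtain ⟨q', hq', hd⟩ := Metric.mem_closure_iff.1 hq (ε / 3) (by linarith)
    have hdist : ∫ ω, ‖q ω - q' ω‖ ∂μ < ε / 3 := by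
      rw [L1.dist_eq_integral_dist] at hd
      simpa [dist_eq_norm] using hd
    have hqi := L1.integrable_coeFn q
    have hqi' := L1.integrable_coeFn q'
    have hlim : ∀ᶠ n in (U : Filter ℕ),
        dist (∫ ω in A n, q' ω ∂μ) (∫ ω, g ω * q' ω ∂μ) < ε / 3 :=
      Metric.tendsto_nhds.1 hq' _ (by linarith)
    have hb : |∫ ω, g ω * q ω ∂μ - ∫ ω, g ω * q' ω ∂μ| < ε / 3 := by
      rw [← integral_sub (hgi _ hqi) (hgi _ hqi')]
      rw [← Real.norm_eq_abs]
      refine (norm_integral_le_integral_norm _).trans_lt (lt_of_le_of_lt ?_ hdist)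
      refine integral_mono ((hgi _ hqi).sub (hgi _ hqi')).norm (hqi.sub hqi').norm fun ω => ?_
      simp only
      rw [← mul_sub, norm_mul, Real.norm_of_nonneg (hg0 ω)]
      exact mul_le_of_le_one_left (norm_nonneg _) (hg1 ω)
    filter_upwards [hlim] with n hn
    have ha : |∫ ω in A n, q ω ∂μ - ∫ ω in A n, q' ω ∂μ| < ε / 3 := by
      rw [← integral_sub hqi.integrableOn hqi'.integrableOn]
      rw [← Real.norm_eq_abs]
      refine (norm_integral_le_integral_norm _).trans_lt (lt_of_le_of_lt ?_ hdist)
      exact setIntegral_le_integral (hqi.sub hqi').norm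
        (Eventually.of_forall fun ω => norm_nonneg _)
    rw [Real.dist_eq] at hn ⊢
    rw [abs_lt] at *
    constructor <;> linarith [ha.1, ha.2, hb.1, hb.2, hn.1, hn.2]
  · intro f f' hff hf h1
    have h2 : ∫ ω, g ω * f' ω ∂μ = ∫ ω, g ω * f ω ∂μ :=
      integral_congr_ae (hff.mono fun ω hω => by simp [hω])
    rw [h2]
    refine h1.congr fun n => ?_
    exact integral_congr_ae (ae_restrict_of_ae hff)

/-- The averaged layers `{g ≥ (k+1)/N}` approximate a function `0 ≤ g ≤ 1` within `1/N`; here in the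
scaled form `t = N g`. -/
lemma abs_sub_layers_le (N : ℕ) (t : ℝ) (h0 : 0 ≤ t) (h1 : t ≤ N) :
    |t - ∑ k ∈ Finset.range N, (if ((k : ℝ) + 1 ≤ t) then (1 : ℝ) else 0)| ≤ 1 := by
  have hset : (Finset.range N).filter (fun k : ℕ => (k : ℝ) + 1 ≤ t) = Finset.range ⌊t⌋₊ := by
    ext k
    have hfl : k < ⌊t⌋₊ ↔ (k : ℝ) + 1 ≤ t := by
      rw [← Nat.succ_le_iff, Nat.le_floor_iff h0]; push_cast; rfl
    simp only [Finset.mem_filter, Finset.mem_range, hfl]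
    refine ⟨fun h => h.2, fun h => ⟨?_, h⟩⟩
    have : (k : ℝ) < N := by linarith
    exact_mod_cast this
  rw [Finset.sum_boole, hset, Finset.card_range, abs_le]
  have := Nat.floor_le h0
  have := Nat.lt_floor_add_one t
  constructor <;> linarith

/-! ### Support measures -/

open scoped Classical in
/-- A countably additive real set function as a signed measure. -/
noncomputable def CountablyAdditive.toSignedMeasure {Ω : Type*} [MeasurableSpace Ω]
    {ν : Set Ω → ℝ} (hν : CountablyAdditive ν) : SignedMeasure Ω where
  measureOf' A := if MeasurableSet A then ν A else 0
  empty' := by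
    -- The constant series with terms `ν ∅` converges only if `ν ∅ = 0`.
    have h := hν (fun _ => ∅) (fun _ => MeasurableSet.empty) (fun _ _ _ => disjoint_bot_left)
    have h2 := h.summable.tendsto_atTop_zero
    have := tendsto_nhds_unique h2 tendsto_const_nhds
    simp [← this]
  not_measurable' A hA := by simp [hA]
  m_iUnion' A hA hd := by
    have := hν A hA hd
    simpa [hA, MeasurableSet.iUnion hA] using this

lemma CountablyAdditive.toSignedMeasure_apply {Ω : Type*} [MeasurableSpace Ω]
    {ν : Set Ω → ℝ} (hν : CountablyAdditive ν) {A : Set Ω} (hA : MeasurableSet A) :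
    hν.toSignedMeasure A = ν A := if_pos hA

lemma CountablyAdditive.exists_bound {Ω : Type*} [MeasurableSpace Ω]
    {ν : Set Ω → ℝ} (hν : CountablyAdditive ν) : ∃ C, ∀ A, MeasurableSet A → ν A ≤ C := by
  refine ⟨hν.toSignedMeasure.toJordanDecomposition.posPart.real univ, fun A hA => ?_⟩
  rw [← hν.toSignedMeasure_apply hA,
    SignedMeasure.apply_eq_posPart_real_sub_negPart_real _ hA]
  have h1 : hν.toSignedMeasure.toJordanDecomposition.posPart.real A ≤
      hν.toSignedMeasure.toJordanDecomposition.posPart.real univ :=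
    measureReal_mono (subset_univ A)
  have h2 : 0 ≤ hν.toSignedMeasure.toJordanDecomposition.negPart.real A := measureReal_nonneg
  linarith

/-- Radon–Nikodym for countably additive real set functions. -/
lemma CountablyAdditive.exists_density {Ω : Type*} [MeasurableSpace Ω]
    {ν : Set Ω → ℝ} (hν : CountablyAdditive ν) (μ : Measure Ω) [IsFiniteMeasure μ]
    (hac : ∀ A, MeasurableSet A → μ A = 0 → ν A = 0) :
    ∃ h : Ω → ℝ, Measurable h ∧ Integrable h μ ∧
      ∀ A, MeasurableSet A → ν A = ∫ ω in A, h ω ∂μ := by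
  let s := hν.toSignedMeasure
  have hs : s ≪ᵥ μ.toENNRealVectorMeasure := by
    refine VectorMeasure.AbsolutelyContinuous.mk fun A hA h0 => ?_
    rw [Measure.toENNRealVectorMeasure_apply_measurable hA] at h0
    rw [hν.toSignedMeasure_apply hA, hac A hA h0]
  refine ⟨s.rnDeriv μ, SignedMeasure.measurable_rnDeriv s μ, SignedMeasure.integrable_rnDeriv s μ,
    fun A hA => ?_⟩
  rw [← withDensityᵥ_apply (SignedMeasure.integrable_rnDeriv s μ) hA,
    SignedMeasure.withDensityᵥ_rnDeriv_eq s μ hs, hν.toSignedMeasure_apply hA]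

/-- Countably many signed measures have a common finite control measure. -/
lemma exists_control {Ω : Type*} [MeasurableSpace Ω] (s : ℕ → SignedMeasure Ω) :
    ∃ μ : Measure Ω, IsFiniteMeasure μ ∧
      ∀ A, MeasurableSet A → μ A = 0 → ∀ m, s m A = 0 := by
  have : ∀ m, IsFiniteMeasure (s m).totalVariation := fun m => by
    unfold SignedMeasure.totalVariation; infer_instance
  refine ⟨(Measure.sum fun m => (s m).totalVariation).toFinite, inferInstance,
    fun A hA h0 m => ?_⟩
  have h1 : Measure.sum (fun m => (s m).totalVariation) A = 0 := absolutelyContinuous_toFinite _ h0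
  rw [Measure.sum_apply _ hA, ENNReal.tsum_eq_zero] at h1
  exact SignedMeasure.null_of_totalVariation_zero _ (h1 m)

/-- The embedding of `X` into `ℝ^{X*}` which induces the weak topology. -/
def weakEval (X : Type*) [NormedAddCommGroup X] [NormedSpace ℝ X] : X → (X →L[ℝ] ℝ) → ℝ :=
  fun x f => f x

lemma isCompact_weakEval_image {X : Type*} [NormedAddCommGroup X] [NormedSpace ℝ X] {T : Set X}
    (hT : @IsCompact X (weakTop X) T) : IsCompact (weakEval X '' T) :=
  @IsCompact.image _ _ (weakTop X) _ T (weakEval X) hT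
    (@continuous_induced_dom _ _ (weakEval X) _)

lemma supportFn_bounds {X : Type*} [NormedAddCommGroup X] [NormedSpace ℝ X] {C : Set X}
    (hne : C.Nonempty) (hC : @IsCompact X (weakTop X) (@closure X (weakTop X) C))
    (p : X →L[ℝ] ℝ) :
    (∀ x ∈ C, p x ≤ supportFn p C) ∧
      ∃ z ∈ @closure X (weakTop X) C, supportFn p C ≤ p z := by
  have hsub : C ⊆ @closure X (weakTop X) C := @subset_closure X (weakTop X) C
  obtain ⟨_, ⟨z, hz, rfl⟩, hmax⟩ := (isCompact_weakEval_image hC).exists_isMaxOn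
    ((hne.mono hsub).image _) (continuous_apply p).continuousOn
  have hle : ∀ x ∈ C, p x ≤ p z := fun x hx => hmax (mem_image_of_mem _ (hsub hx))
  refine ⟨fun x hx => le_csSup ⟨p z, ?_⟩ (mem_image_of_mem p hx), z, hz, ?_⟩
  · rintro _ ⟨x, hx, rfl⟩
    exact hle x hx
  · refine csSup_le (hne.image p) ?_
    rintro _ ⟨x, hx, rfl⟩
    exact hle x hx

/-- The union of the values of the multimeasure is bounded, by the uniform boundedness principle. -/
lemma exists_norm_bound {Ω X : Type*} [MeasurableSpace Ω]
    [NormedAddCommGroup X] [NormedSpace ℝ X] (M : Set Ω → Set X)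
    (hne : ∀ A : Set Ω, MeasurableSet A → (M A).Nonempty)
    (hcpt : ∀ A : Set Ω, MeasurableSet A →
      @IsCompact X (weakTop X) (@closure X (weakTop X) (M A)))
    (hca : ∀ f : X →L[ℝ] ℝ, CountablyAdditive (fun A => supportFn f (M A))) :
    ∃ R, ∀ A, MeasurableSet A → ∀ x ∈ M A, ‖x‖ ≤ R := by
  obtain ⟨R, hR⟩ := banach_steinhaus
    (g := fun x : {x : X // ∃ A, MeasurableSet A ∧ x ∈ M A} =>
      NormedSpace.inclusionInDoubleDual ℝ X x.1) (fun p => by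
    obtain ⟨C, hC⟩ := (hca p).exists_bound
    obtain ⟨C', hC'⟩ := (hca (-p)).exists_bound
    refine ⟨max C C', ?_⟩
    rintro ⟨x, A, hA, hx⟩
    have h1 := (supportFn_bounds (hne A hA) (hcpt A hA) p).1 x hx
    have h2 := (supportFn_bounds (hne A hA) (hcpt A hA) (-p)).1 x hx
    have h3 := hC A hA
    have h4 := hC' A hA
    rw [_root_.neg_apply] at h2
    simp only [NormedSpace.dual_def, Real.norm_eq_abs]
    refine abs_le'.2 ⟨?_, ?_⟩
    · exact (h1.trans h3).trans (le_max_left _ _)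
    · exact (h2.trans h4).trans (le_max_right _ _))
  refine ⟨R, fun A hA x hx => ?_⟩
  rw [← (NormedSpace.inclusionInDoubleDualLi (E := X) ℝ).norm_map]
  exact hR ⟨x, A, hA, hx⟩

/-- If the functional `p` is controlled by `μ` and `p (x n) ≥ δ` along `U` with `x n ∈ M (A n)`, then
the average of `s(p, M (B k))` over the layers `B k = {N g ≥ k + 1}` of the weak* limit `g` of the
indicators of `A n` is at least `δ` up to `O(1/N)`, and each of these suprema is attained on the weak
closure of `M (B k)`. The sums below are not divided by `N`. -/
lemma exists_layer_points {Ω X : Type*} [MeasurableSpace Ω]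
    [NormedAddCommGroup X] [NormedSpace ℝ X] (M : Set Ω → Set X)
    (hne : ∀ A : Set Ω, MeasurableSet A → (M A).Nonempty)
    (hcpt : ∀ A : Set Ω, MeasurableSet A →
      @IsCompact X (weakTop X) (@closure X (weakTop X) (M A)))
    (p : X →L[ℝ] ℝ) (hca : CountablyAdditive (fun A => supportFn p (M A)))
    (R : ℝ) (hR : ∀ A, MeasurableSet A → ∀ x ∈ M A, ‖x‖ ≤ R)
    (μ : Measure Ω) [IsFiniteMeasure μ]
    (hp : ∀ A, MeasurableSet A → μ A = 0 → ∀ x ∈ M A, p x = 0)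
    (A : ℕ → Set Ω) (hA : ∀ n, MeasurableSet (A n)) (x : ℕ → X) (hx : ∀ n, x n ∈ M (A n))
    (U : Ultrafilter ℕ) (δ : ℝ) (hδ : ∀ᶠ n in (U : Filter ℕ), δ ≤ p (x n))
    (g : Ω → ℝ) (hgm : Measurable g) (hg0 : ∀ ω, 0 ≤ g ω) (hg1 : ∀ ω, g ω ≤ 1)
    (hg : ∀ h : Ω → ℝ, Integrable h μ →
        Tendsto (fun n => ∫ ω in A n, h ω ∂μ) U (𝓝 (∫ ω, g ω * h ω ∂μ))) (N : ℕ) :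
    ∃ z : ℕ → X, (∀ k : ℕ, z k ∈ @closure X (weakTop X) (M {ω | (k : ℝ) + 1 ≤ N * g ω})) ∧
      N * δ - 2 * R * ‖p‖ ≤ ∑ k ∈ Finset.range N, p (z k) := by
  have hBm : ∀ k : ℕ, MeasurableSet {ω | (k : ℝ) + 1 ≤ N * g ω} := fun k =>
    measurableSet_le measurable_const (hgm.const_mul _)
  choose z hz hzle using fun k : ℕ => (supportFn_bounds (hne _ (hBm k)) (hcpt _ (hBm k)) p).2
  refine ⟨z, hz, le_trans ?_ (Finset.sum_le_sum fun k _ => hzle k)⟩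
  obtain ⟨h, hhm, hhi, hh⟩ := hca.exists_density μ (fun B hB h0 => by
    have himg : p '' M B = {0} := by
      refine Subset.antisymm ?_ ?_
      · rintro _ ⟨y, hy, rfl⟩
        exact hp B hB h0 y hy
      · rintro _ rfl
        obtain ⟨y, hy⟩ := hne B hB
        exact ⟨y, hy, hp B hB h0 y hy⟩
    simp [supportFn, himg])
  have hδg : δ ≤ ∫ ω, g ω * h ω ∂μ := by
    refine ge_of_tendsto (hg h hhi) ?_
    filter_upwards [hδ] with n hn
    rw [← hh _ (hA n)]
    exact hn.trans ((supportFn_bounds (hne _ (hA n)) (hcpt _ (hA n)) p).1 _ (hx n))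
  have habs : ∀ B, MeasurableSet B → |supportFn p (M B)| ≤ R * ‖p‖ := by
    intro B hB
    have hb : ∀ y ∈ M B, |p y| ≤ R * ‖p‖ := fun y hy => by
      have h1 := p.le_opNorm y
      have h2 := mul_le_mul_of_nonneg_left (hR B hB y hy) (norm_nonneg p)
      rw [Real.norm_eq_abs] at h1
      linarith
    obtain ⟨y, hy⟩ := hne B hB
    refine abs_le.2 ⟨(abs_le.1 (hb y hy)).1.trans
      ((supportFn_bounds (hne B hB) (hcpt B hB) p).1 y hy), ?_⟩
    refine csSup_le ⟨_, mem_image_of_mem p hy⟩ ?_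
    rintro _ ⟨y, hy, rfl⟩
    exact (abs_le.1 (hb y hy)).2
  have hL1 : ∫ ω, |h ω| ∂μ ≤ 2 * R * ‖p‖ := by
    have hP : MeasurableSet {ω | 0 ≤ h ω} := measurableSet_le measurable_const hhm
    rw [← integral_add_compl hP hhi.abs,
      setIntegral_congr_fun (g := h) hP (fun ω hω => abs_of_nonneg hω),
      setIntegral_congr_fun (g := fun ω => - h ω) hP.compl
        (fun ω hω => abs_of_neg (not_le.1 hω)), integral_neg, ← hh _ hP, ← hh _ hP.compl]
    have h1 := (abs_le.1 (habs _ hP)).2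
    have h2 := (abs_le.1 (habs _ hP.compl)).1
    linarith
  let σ : Ω → ℝ := fun ω =>
    ∑ k ∈ Finset.range N, (if ((k : ℝ) + 1 ≤ N * g ω) then (1 : ℝ) else 0)
  have hterm : ∀ k : ℕ, (fun ω => (if ((k : ℝ) + 1 ≤ N * g ω) then (1 : ℝ) else 0) * h ω) =
      {ω | (k : ℝ) + 1 ≤ N * g ω}.indicator h := fun k => by
    ext ω
    by_cases hω : (k : ℝ) + 1 ≤ N * g ω <;> simp [hω]
  have hσ : (fun ω => σ ω * h ω) = fun ω => ∑ k ∈ Finset.range N,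
      {ω | (k : ℝ) + 1 ≤ N * g ω}.indicator h ω := by
    ext ω
    simp only [σ, Finset.sum_mul]
    exact Finset.sum_congr rfl fun k _ => congrFun (hterm k) ω
  have hσi : Integrable (fun ω => σ ω * h ω) μ := by
    rw [hσ]
    exact integrable_finsetSum _ fun k _ => hhi.indicator (hBm k)
  have hσint : ∫ ω, σ ω * h ω ∂μ =
      ∑ k ∈ Finset.range N, supportFn p (M {ω | (k : ℝ) + 1 ≤ N * g ω}) := by
    rw [hσ, integral_finsetSum _ fun k _ => hhi.indicator (hBm k)]
    exact Finset.sum_congr rfl fun k _ => by rw [integral_indicator (hBm k), hh _ (hBm k)]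
  have hgi : Integrable (fun ω => g ω * h ω) μ :=
    hhi.bdd_mul (c := 1) hgm.aestronglyMeasurable (Eventually.of_forall fun ω => by
      rw [Real.norm_of_nonneg (hg0 ω)]; exact hg1 ω)
  have hdiff : N * ∫ ω, g ω * h ω ∂μ - ∫ ω, σ ω * h ω ∂μ ≤ ∫ ω, |h ω| ∂μ := by
    rw [← integral_const_mul, ← integral_sub (hgi.const_mul _) hσi]
    refine integral_mono ((hgi.const_mul _).sub hσi) hhi.abs fun ω => ?_
    have := abs_sub_layers_le N (N * g ω) (mul_nonneg N.cast_nonneg (hg0 ω))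
      (mul_le_of_le_one_right N.cast_nonneg (hg1 ω))
    calc (N : ℝ) * (g ω * h ω) - σ ω * h ω = (N * g ω - σ ω) * h ω := by ring
      _ ≤ |(N * g ω - σ ω) * h ω| := le_abs_self _
      _ = |N * g ω - σ ω| * |h ω| := abs_mul _ _
      _ ≤ |h ω| := mul_le_of_le_one_left (abs_nonneg _) this
  rw [← hσint]
  have := mul_le_mul_of_nonneg_left hδg (N.cast_nonneg (α := ℝ))
  linarith

/-! ### Relative weak compactness of the range -/

/-- Let `X` be a Banach space and `M` a multimeasure on a σ-algebra
`Σ` whose values are relatively weakly compact non-empty subsets of `X`. Then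
`⋃_{A ∈ Σ} M(A)` is relatively weakly compact. -/
theorem statement12 {Ω X : Type*} [MeasurableSpace Ω]
    [NormedAddCommGroup X] [NormedSpace ℝ X] [CompleteSpace X]
    (M : Set Ω → Set X)
    (hne : ∀ A : Set Ω, MeasurableSet A → (M A).Nonempty)
    (hcpt : ∀ A : Set Ω, MeasurableSet A →
      @IsCompact X (weakTop X) (@closure X (weakTop X) (M A)))
    (hca : ∀ f : X →L[ℝ] ℝ, CountablyAdditive (fun A => supportFn f (M A))) :
    @IsCompact X (weakTop X)
      (@closure X (weakTop X) (⋃ (A : Set Ω) (_ : MeasurableSet A), M A)) := by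
  obtain ⟨R, hR⟩ := exists_norm_bound M hne hcpt hca
  by_contra hnot
  obtain ⟨δ, f, x, hδ, hf, hxS, hzero, hlow⟩ := exists_array_of_not_compact _ R (by
    intro x hx
    simp only [mem_iUnion] at hx
    obtain ⟨A, hA, hx⟩ := hx
    exact hR A hA x hx) hnot
  simp only [mem_iUnion] at hxS
  choose A hA hx using hxS
  -- A control measure for the support measures of all `f m` and `-f m`.
  obtain ⟨μ, _, hμ⟩ := exists_control fun m =>
    if Even m then (hca (f (m / 2))).toSignedMeasure else (hca (-f (m / 2))).toSignedMeasure
  have hfμ : ∀ B, MeasurableSet B → μ B = 0 → ∀ m, ∀ y ∈ M B, f m y = 0 := by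
    intro B hB h0 m y hy
    have h1 := hμ B hB h0 (2 * m)
    have h2 := hμ B hB h0 (2 * m + 1)
    rw [if_pos (even_two_mul m), Nat.mul_div_cancel_left m two_pos,
      CountablyAdditive.toSignedMeasure_apply _ hB] at h1
    rw [if_neg (by simp), show (2 * m + 1) / 2 = m by lia,
      CountablyAdditive.toSignedMeasure_apply _ hB] at h2
    have h3 := (supportFn_bounds (hne B hB) (hcpt B hB) (f m)).1 y hy
    have h4 := (supportFn_bounds (hne B hB) (hcpt B hB) (-f m)).1 y hy
    rw [_root_.neg_apply] at h4
    linarith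
  let U : Ultrafilter ℕ := hyperfilter ℕ
  have hU : (U : Filter ℕ) ≤ atTop := Nat.hyperfilter_le_atTop
  obtain ⟨g, hgm, hg0, hg1, hg⟩ := exists_indicator_limit μ A hA U
  -- `N` layers approximate `g` well enough for functionals of norm at most `2`.
  obtain ⟨N, hN⟩ := exists_nat_gt (2 * (4 * |R|) / δ)
  have hNδ : 2 * (4 * |R|) < N * δ := (div_lt_iff₀ hδ).1 hN
  have hNpos : (0 : ℝ) < N := lt_of_le_of_lt (by positivity) hN
  have hBm : ∀ k : ℕ, MeasurableSet {ω | (k : ℝ) + 1 ≤ N * g ω} := fun k =>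
    measurableSet_le measurable_const (hgm.const_mul _)
  let T : ℕ → Set X := fun k => @closure X (weakTop X) (M {ω | (k : ℝ) + 1 ≤ N * g ω})
  have hT : ∀ k, IsCompact (weakEval X '' T k) := fun k =>
    isCompact_weakEval_image (hcpt _ (hBm k))
  -- `Y` parametrizes the weakly compact sum of the closures of the `M (B k)`, through the map `e`.
  let Y := ∀ k : Fin N, (weakEval X '' T k : Set ((X →L[ℝ] ℝ) → ℝ))
  have : ∀ k : Fin N, CompactSpace (weakEval X '' T k) := fun k =>
    isCompact_iff_compactSpace.1 (hT k)
  have : Nonempty Y := ⟨fun k => ⟨_, mem_image_of_mem _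
    (@subset_closure X (weakTop X) _ _ (hne _ (hBm k)).some_mem)⟩⟩
  let e : Y → X := fun y => ∑ k : Fin N, (y k).2.choose
  have he : ∀ (p : X →L[ℝ] ℝ) (y : Y), p (e y) = ∑ k : Fin N, (y k).1 p := by
    intro p y
    simp only [e, map_sum]
    exact Finset.sum_congr rfl fun k _ => congrFun (y k).2.choose_spec.2 p
  obtain ⟨F, hF1, hF, happrox⟩ := exists_cluster_approx f hf e (fun p => by
    simp only [he]
    exact continuous_finsetSum _ fun k _ =>
      (continuous_apply p).comp (continuous_subtype_val.comp (continuous_apply k)))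
  obtain ⟨h, hh, hclose⟩ := happrox (N * δ / 2) (by positivity)
  have hFx : ∀ n, F (x n) = 0 := fun n => hF _ _ (tendsto_const_nhds.congr' (by
    filter_upwards [eventually_gt_atTop n] with m hm using (hzero n m hm).symm))
  have hh1 : ‖h‖ ≤ 1 := by
    have : convexHull ℝ (range f) ⊆ Metric.closedBall 0 1 :=
      convexHull_min (by rintro _ ⟨m, rfl⟩; simpa using hf m) (convex_closedBall 0 1)
    simpa using this hh
  have hhx : ∀ᶠ n in atTop, δ ≤ h (x n) := by
    have : convexHull ℝ (range f) ⊆ {p | ∀ᶠ n in atTop, δ ≤ p (x n)} := by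
      refine convexHull_min ?_ ?_
      · rintro _ ⟨m, rfl⟩
        filter_upwards [eventually_ge_atTop m] with n hn using hlow n m hn
      · intro p hp q hq s t hs ht hst
        filter_upwards [hp, hq] with n h1 h2
        exact (convex_Ici (𝕜 := ℝ) δ) h1 h2 hs ht hst
    exact this hh
  have hhμ : ∀ B, MeasurableSet B → μ B = 0 → ∀ y ∈ M B, h y = 0 := by
    intro B hB h0 y hy
    have : convexHull ℝ (range f) ⊆ {p | p y = 0} := by
      refine convexHull_min ?_ ?_
      · rintro _ ⟨m, rfl⟩
        exact hfμ B hB h0 m y hy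
      · intro p hp q hq s t hs ht hst
        have h1 : p y = 0 := hp
        have h2 : q y = 0 := hq
        simp [h1, h2]
    exact this hh
  obtain ⟨z, hz, hsum⟩ := exists_layer_points M hne hcpt (h - F) (hca _) R hR μ
    (by
      intro B hB h0 y hy
      have h1 : F y = 0 := hF _ _ (tendsto_const_nhds.congr fun m => (hfμ B hB h0 m y hy).symm)
      simp [hhμ B hB h0 y hy, h1])
    A hA x hx U δ (by
      filter_upwards [hU hhx] with n hn
      simpa [hFx n] using hn)
    g hgm hg0 hg1 hg N
  let y : Y := fun k => ⟨_, mem_image_of_mem (weakEval X) (hz k)⟩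
  have h1 := hclose y
  have h2 : ∑ k ∈ Finset.range N, (h - F) (z k) ≤ N * δ / 2 := by
    have h4 : ∑ k ∈ Finset.range N, (h - F) (z k) = (h - F) (e y) := by
      rw [he, ← Fin.sum_univ_eq_sum_range (fun k => (h - F) (z k))]
      rfl
    rw [h4, _root_.sub_apply]
    exact (le_abs_self _).trans h1
  have h3 : 2 * R * ‖h - F‖ ≤ 4 * |R| := by
    have : ‖h - F‖ ≤ 2 := (norm_sub_le _ _).trans (by linarith)
    have h4 := mul_le_mul (le_abs_self R) this (norm_nonneg _) (abs_nonneg R)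
    linarith
  linarith
end

section
/- Let X be a real Banach space and let Y ⊆ X* be a total linear subspace having the Orlicz-Thomas property such that X equipped with the Mackey topology μ(X,Y) is quasi-complete. Let M : Σ → b(X) be a set-valued map defined on a σ-algebra Σ such that: (i) M(A) is relatively σ(X,Y)-compact for every A ∈ Σ; (ii) the support map s(x*,M) is countably additive for every x* ∈ Y; and (iii) s(x*,M) is finitely additive for every x* ∈ X*. Then M is a multimeasure, i.e., s(x*,M) is countably additive for every x* ∈ X*. -/
/-- A set `W ⊆ X*` has the Orlicz–Thomas property. -/
def HasOrliczThomas {X : Type*} [NormedAddCommGroup X] [NormedSpace ℝ X]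
    (W : Set (X →L[ℝ] ℝ)) : Prop :=
  ∀ (Ω : Type) (_ : MeasurableSpace Ω) (ν : Set Ω → X),
    (∀ f ∈ W, CountablyAdditive (fun A => f (ν A))) → CountablyAdditive ν

/-- A real set function on a σ-algebra is finitely additive. -/
def FinitelyAdditive {Ω : Type*} [MeasurableSpace Ω] (μ : Set Ω → ℝ) : Prop :=
  ∀ A B : Set Ω, MeasurableSet A → MeasurableSet B → Disjoint A B →
    μ (A ∪ B) = μ A + μ B

open Filter Topology Set
open scoped Pointwise

/-! ### Support functions -/

lemma supportFn_le {X : Type*} [NormedAddCommGroup X] [NormedSpace ℝ X] {C : Set X}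
    (hC : C.Nonempty) {f : X →L[ℝ] ℝ} {c : ℝ} (h : ∀ x ∈ C, f x ≤ c) : supportFn f C ≤ c :=
  csSup_le (hC.image _) (by rintro _ ⟨x, hx, rfl⟩; exact h x hx)

lemma le_supportFn {X : Type*} [NormedAddCommGroup X] [NormedSpace ℝ X] {C : Set X}
    (hC : Bornology.IsBounded C) (f : X →L[ℝ] ℝ) {x : X} (hx : x ∈ C) :
    f x ≤ supportFn f C := by
  refine le_csSup ?_ ⟨x, hx, rfl⟩
  obtain ⟨R, hR⟩ := hC.exists_norm_le
  refine ⟨‖f‖ * R, ?_⟩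
  rintro _ ⟨z, hz, rfl⟩
  calc f z ≤ ‖f z‖ := le_abs_self _
    _ ≤ ‖f‖ * ‖z‖ := f.le_opNorm z
    _ ≤ ‖f‖ * R := by gcongr; exact hR z hz

lemma supportFn_add_le {X : Type*} [NormedAddCommGroup X] [NormedSpace ℝ X] {C : Set X}
    (hne : C.Nonempty) (hC : Bornology.IsBounded C) (f g : X →L[ℝ] ℝ) :
    supportFn (f + g) C ≤ supportFn f C + supportFn g C :=
  supportFn_le hne fun _ hx => add_le_add (le_supportFn hC f hx) (le_supportFn hC g hx)

lemma supportFn_smul {X : Type*} [NormedAddCommGroup X] [NormedSpace ℝ X] {C : Set X}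
    {c : ℝ} (hc : 0 ≤ c) (f : X →L[ℝ] ℝ) :
    supportFn (c • f) C = c * supportFn f C := by
  have : (c • f : X →L[ℝ] ℝ) '' C = c • (f '' C) := by
    ext t; simp [Set.mem_smul_set]
  unfold supportFn
  rw [this, Real.sSup_smul_of_nonneg hc, smul_eq_mul]

/-! ### Simons' inequality -/

/-- A closed convex set of a normed space contains the infinite convex combinations
`∑ 2⁻⁽ⁱ⁺¹⁾ gᵢ` of its elements. -/
lemma dyadic_sum_mem {E : Type*} [NormedAddCommGroup E] [NormedSpace ℝ E] {C : Set E}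
    (hcl : IsClosed C) (hconv : Convex ℝ C) {g : ℕ → E} (hg : ∀ i, g i ∈ C) {a : E}
    (ha : HasSum (fun i => ((1 / 2 : ℝ) ^ (i + 1)) • g i) a) : a ∈ C := by
  -- The mass missing from the `n`-th partial sum is placed at `g 0`.
  have hmem : ∀ n, ∀ c ∈ C,
      ∑ i ∈ Finset.range n, ((1 / 2 : ℝ) ^ (i + 1)) • g i + ((1 / 2 : ℝ) ^ n) • c ∈ C := by
    intro n
    induction n with
    | zero => intro c hc; simpa using hc
    | succ n ih =>
      intro c hc
      have := ih ((1 / 2 : ℝ) • g n + (1 / 2 : ℝ) • c)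
        (hconv (hg n) hc (by norm_num) (by norm_num) (by norm_num))
      rw [Finset.sum_range_succ]
      convert this using 1
      rw [pow_succ, smul_add, smul_smul, smul_smul, add_assoc]
  have h0 : Tendsto (fun n : ℕ => ((1 / 2 : ℝ) ^ n) • g 0) atTop (𝓝 0) := by
    have := (tendsto_pow_atTop_nhds_zero_of_lt_one (r := (1 / 2 : ℝ)) (by norm_num)
      (by norm_num)).smul_const (g 0)
    simpa using this
  have hlim := ha.tendsto_sum_nat.add h0
  rw [add_zero] at hlim
  exact hcl.mem_of_tendsto hlim (Eventually.of_forall fun n => hmem n _ (hg 0))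

/-- A form of Simons' inequality. If every element of `Y` attains its supremum on `K`, then a
bounded sequence that tends to zero pointwise on `K` has generalized convex combinations whose
supremum over `K` is arbitrarily small. -/
lemma simons {X : Type*} [NormedAddCommGroup X] [NormedSpace ℝ X]
    (Y : Submodule ℝ (X →L[ℝ] ℝ)) {K : Set X}
    (hK : ∀ y ∈ Y, ∃ x ∈ K, ∀ z ∈ K, y z ≤ y x)
    {f : ℕ → X →L[ℝ] ℝ} {B : ℝ} (hB : ∀ k, ‖f k‖ ≤ B)
    (hf : closure (convexHull ℝ (range f)) ⊆ (Y : Set (X →L[ℝ] ℝ)))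
    (hlim : ∀ x ∈ K, Tendsto (fun k => f k x) atTop (𝓝 0)) {δ : ℝ} (hδ : 0 < δ) :
    ∃ v ∈ closure (convexHull ℝ (range f)), ∀ z ∈ K, v z ≤ δ := by
  obtain ⟨z₀, hz₀, -⟩ := hK 0 Y.zero_mem
  have hne : K.Nonempty := ⟨z₀, hz₀⟩
  set P : (X →L[ℝ] ℝ) → ℝ := fun y => supportFn y K with hP
  have hPle : ∀ y ∈ Y, ∀ z ∈ K, y z ≤ P y := by
    intro y hy z hz
    obtain ⟨x, hx, hmax⟩ := hK y hy
    exact le_csSup ⟨y x, by rintro _ ⟨w, hw, rfl⟩; exact hmax w hw⟩ ⟨z, hz, rfl⟩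
  have hPat : ∀ y ∈ Y, ∃ x ∈ K, P y = y x := by
    intro y hy
    obtain ⟨x, hx, hmax⟩ := hK y hy
    exact ⟨x, hx, le_antisymm (supportFn_le hne hmax) (hPle y hy x hx)⟩
  -- `C n` is the set of generalized convex combinations of the tail `f n, f (n + 1), …`.
  set C : ℕ → Set (X →L[ℝ] ℝ) := fun n => closure (convexHull ℝ (f '' Ici n)) with hCdef
  have hCcl : ∀ n, IsClosed (C n) := fun n => isClosed_closure
  have hCconv : ∀ n, Convex ℝ (C n) := fun n => (convex_convexHull ℝ _).closure
  have hCanti : Antitone C := fun m n hmn =>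
    closure_mono (convexHull_mono (image_mono (Ici_subset_Ici.2 hmn)))
  have hC0 : ∀ n, C n ⊆ closure (convexHull ℝ (range f)) := fun n =>
    closure_mono (convexHull_mono (image_subset_range _ _))
  have hCY : ∀ n, C n ⊆ (Y : Set _) := fun n => (hC0 n).trans hf
  have hCf : ∀ n k, n ≤ k → f k ∈ C n := fun n k h =>
    subset_closure (subset_convexHull ℝ _ ⟨k, h, rfl⟩)
  have hCB : ∀ n, ∀ g ∈ C n, ‖g‖ ≤ B := by
    intro n g hg
    have : C n ⊆ Metric.closedBall 0 B := by
      refine closure_minimal (convexHull_min ?_ (convex_closedBall 0 B)) Metric.isClosed_closedBall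
      rintro _ ⟨k, -, rfl⟩
      simpa using hB k
    simpa using this hg
  -- Near-minimizers of `g ↦ P (h + 2¹⁻ⁿ g)` over `C n`.
  have hmin : ∀ (n : ℕ) (h : X →L[ℝ] ℝ), ∃ g, h ∈ Y → g ∈ C n ∧ ∀ g' ∈ C n,
      P (h + (2 * (1 / 2 : ℝ) ^ n) • g) ≤
        P (h + (2 * (1 / 2 : ℝ) ^ n) • g') + (1 / 4 : ℝ) ^ n * (δ / 4) := by
    intro n h
    by_cases hh : h ∈ Y
    swap
    · exact ⟨0, fun H => absurd H hh⟩
    set V : Set ℝ := (fun g => P (h + (2 * (1 / 2 : ℝ) ^ n) • g)) '' C n with hV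
    have hVne : V.Nonempty := ⟨_, f n, hCf n n le_rfl, rfl⟩
    have hVbd : BddBelow V := by
      refine ⟨h z₀ - (2 * (1 / 2 : ℝ) ^ n) * (B * ‖z₀‖), ?_⟩
      rintro _ ⟨g, hg, rfl⟩
      have h1 := hPle (h + (2 * (1 / 2 : ℝ) ^ n) • g)
        (Y.add_mem hh (Y.smul_mem _ (hCY n hg))) z₀ hz₀
      have h2 : -(B * ‖z₀‖) ≤ g z₀ := by
        have h3 : ‖g z₀‖ ≤ B * ‖z₀‖ := (g.le_opNorm z₀).trans (by gcongr; exact hCB n g hg)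
        exact (abs_le.1 h3).1
      refine le_trans ?_ h1
      have h4 : (0 : ℝ) < 2 * (1 / 2 : ℝ) ^ n := by positivity
      simp only [add_apply, smul_apply, smul_eq_mul]
      nlinarith
    have hpos : 0 < (1 / 4 : ℝ) ^ n * (δ / 4) := by positivity
    obtain ⟨_, ⟨g, hg, rfl⟩, hlt⟩ := Real.lt_sInf_add_pos hVne hpos
    refine ⟨g, fun _ => ⟨hg, fun g' hg' => ?_⟩⟩
    have := csInf_le hVbd ⟨g', hg', rfl⟩
    simp only at this hlt
    linarith
  choose G hG using hmin
  let h : ℕ → X →L[ℝ] ℝ := fun n => Nat.rec 0 (fun n h => h + ((1 / 2 : ℝ) ^ n) • G n h) n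
  have hsucc : ∀ n, h (n + 1) = h n + ((1 / 2 : ℝ) ^ n) • G n (h n) := fun n => rfl
  have hzero : h 0 = 0 := rfl
  have hY : ∀ n, h n ∈ Y := by
    intro n
    induction n with
    | zero => rw [hzero]; exact Y.zero_mem
    | succ n ih => rw [hsucc]; exact Y.add_mem ih (Y.smul_mem _ (hCY n (hG n _ ih).1))
  set g : ℕ → X →L[ℝ] ℝ := fun n => G n (h n) with hgdef
  have hgC : ∀ n, g n ∈ C n := fun n => (hG n _ (hY n)).1
  have hsum : ∀ n, Summable (fun i => ((1 / 2 : ℝ) ^ (i + 1)) • g (n + i)) := by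
    intro n
    refine Summable.of_norm_bounded (g := fun i => (1 / 2 : ℝ) ^ (i + 1) * B) ?_ ?_
    · exact ((summable_geometric_of_lt_one (by norm_num) (by norm_num)).comp_injective
        (add_left_injective 1)).mul_right B
    · intro i
      rw [norm_smul]
      have := hCB _ _ (hgC (n + i))
      simp only [norm_pow, norm_div, norm_one, Real.norm_ofNat]
      gcongr
  set c : ℕ → X →L[ℝ] ℝ := fun n => ∑' i, ((1 / 2 : ℝ) ^ (i + 1)) • g (n + i) with hcdef
  have hcC : ∀ n, c n ∈ C n := fun n =>
    dyadic_sum_mem (hCcl n) (hCconv n) (fun i => hCanti (Nat.le_add_right n i) (hgC (n + i)))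
      (hsum n).hasSum
  -- The total `2 • c 0` equals `h n` plus the tail `2¹⁻ⁿ • c n`.
  have hcstep : ∀ n, c n = (1 / 2 : ℝ) • g n + (1 / 2 : ℝ) • c (n + 1) := by
    intro n
    simp only [hcdef]
    rw [(hsum n).tsum_eq_zero_add, ← (hsum (n + 1)).tsum_const_smul]
    congr 1
    · simp
    · refine tsum_congr fun i => ?_
      rw [smul_smul, ← pow_succ', show n + (i + 1) = n + 1 + i by ring]
  have htot : ∀ n, (2 : ℝ) • c 0 = h n + (2 * (1 / 2 : ℝ) ^ n) • c n := by
    intro n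
    induction n with
    | zero => simp [hzero]
    | succ n ih =>
      rw [ih, hsucc, hcstep n]
      simp only [hgdef]
      module
  set p := P ((2 : ℝ) • c 0) with hp
  have hstep : ∀ n, P (h n + (2 * (1 / 2 : ℝ) ^ n) • g n) ≤ p + (1 / 4 : ℝ) ^ n * (δ / 4) := by
    intro n
    have := (hG n _ (hY n)).2 _ (hcC n)
    rwa [← htot n] at this
  have hPh : ∀ n, P (h n) ≤ (1 - (1 / 2 : ℝ) ^ n) * p +
      (1 / 2 : ℝ) ^ n * (2 - 2 * (1 / 2 : ℝ) ^ n) * (δ / 4) := by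
    intro n
    induction n with
    | zero =>
      have : P (h 0) ≤ 0 := supportFn_le hne (by simp [hzero])
      simpa using this
    | succ n ih =>
      refine (supportFn_le (c := (1 / 2) * (p + (1 / 4 : ℝ) ^ n * (δ / 4)) + (1 / 2) * P (h n))
        hne fun z hz => ?_).trans ?_
      · have h1 := (hPle _ (Y.add_mem (hY n) (Y.smul_mem (2 * (1 / 2 : ℝ) ^ n)
          (hCY n (hgC n)))) z hz).trans (hstep n)
        have h2 := hPle _ (hY n) z hz
        rw [hsucc]
        simp only [add_apply, smul_apply, smul_eq_mul,
          hgdef] at h1 h2 ⊢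
        linarith
      · have h4 : (1 / 4 : ℝ) ^ n = (1 / 2 : ℝ) ^ n * (1 / 2 : ℝ) ^ n := by
          rw [← mul_pow]; norm_num
        rw [h4, pow_succ]
        nlinarith
  have hc0 : (2 : ℝ) • c 0 ∈ Y := Y.smul_mem _ (hCY 0 (hcC 0))
  obtain ⟨x, hx, hpx⟩ := hPat _ hc0
  have hcx : ∀ n, p ≤ δ / 2 + 2 * c n x := by
    intro n
    have h1 := hPle _ (hY n) x hx
    have h2 := hPh n
    have h3 : p = h n x + (2 * (1 / 2 : ℝ) ^ n) * c n x := by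
      rw [hp, hpx, htot n]; simp
    have h4 : (0 : ℝ) < (1 / 2 : ℝ) ^ n := by positivity
    have h5 : (1 / 2 : ℝ) ^ n * p ≤ (1 / 2 : ℝ) ^ n * (δ / 2 + 2 * c n x) := by
      nlinarith [mul_pos (mul_pos h4 h4) hδ]
    exact le_of_mul_le_mul_left h5 h4
  obtain ⟨N, hN⟩ := eventually_atTop.1 ((hlim x hx).eventually (gt_mem_nhds (by positivity :
    (0 : ℝ) < δ / 4)))
  have hCN : C N ⊆ {y | y x ≤ δ / 4} := by
    have hlin : Continuous fun y : X →L[ℝ] ℝ => y x := by fun_prop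
    refine closure_minimal (convexHull_min ?_ ?_) (isClosed_le hlin continuous_const)
    · rintro _ ⟨k, hk, rfl⟩
      exact (hN k hk).le
    · intro a ha b hb s t hs ht hst
      simp only [mem_ofPred_eq, add_apply, smul_apply,
        smul_eq_mul] at *
      have : t = 1 - s := by linarith
      subst this
      nlinarith
  refine ⟨c 0, hC0 0 (hcC 0), fun z hz => ?_⟩
  have h1 := hPle _ hc0 z hz
  have h2 := hcx N
  have h3 : c N x ≤ δ / 4 := hCN (hcC N)
  simp only [smul_apply, smul_eq_mul] at h1
  linarith

/-! ### The topologies `σ(X, Y)` and weak* -/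

lemma weakStar_continuous {X : Type*} [NormedAddCommGroup X] [NormedSpace ℝ X] (x : X) :
    @Continuous _ _ (weakStarTop X) _ (fun f : X →L[ℝ] ℝ => f x) := by
  let _ := weakStarTop X
  exact (continuous_apply x).comp continuous_induced_dom

lemma weakStar_ultrafilter {X : Type*} [NormedAddCommGroup X] [NormedSpace ℝ X]
    {S : Set (X →L[ℝ] ℝ)} (hS : @IsCompact _ (weakStarTop X) S)
    (U : Ultrafilter (X →L[ℝ] ℝ)) (hU : S ∈ U) :
    ∃ g ∈ S, ∀ x, Tendsto (fun f : X →L[ℝ] ℝ => f x) U (𝓝 (g x)) := by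
  obtain ⟨g, hg, hle⟩ := (@isCompact_iff_ultrafilter_le_nhds _ (weakStarTop X) S).1 hS U
    (le_principal_iff.2 hU)
  refine ⟨g, hg, fun x => ?_⟩
  exact (@Continuous.tendsto _ _ (weakStarTop X) _ _ (weakStar_continuous x) g).mono_left hle

lemma weakStar_norm_bounded {X : Type*} [NormedAddCommGroup X] [NormedSpace ℝ X]
    [CompleteSpace X] {S : Set (X →L[ℝ] ℝ)} (hS : @IsCompact _ (weakStarTop X) S) :
    ∃ B, ∀ y ∈ S, ‖y‖ ≤ B := by
  have : ∃ B, ∀ y : S, ‖(y : X →L[ℝ] ℝ)‖ ≤ B := by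
    refine banach_steinhaus fun x => ?_
    obtain ⟨R, hR⟩ := (@IsCompact.image _ _ (weakStarTop X) _ _ _ hS
      (weakStar_continuous x)).isBounded.exists_norm_le
    exact ⟨R, fun y => hR _ ⟨y, y.2, rfl⟩⟩
  obtain ⟨B, hB⟩ := this
  exact ⟨B, fun y hy => hB ⟨y, hy⟩⟩

lemma weakStar_norm_closed {X : Type*} [NormedAddCommGroup X] [NormedSpace ℝ X]
    {S : Set (X →L[ℝ] ℝ)} (hS : @IsCompact _ (weakStarTop X) S) : IsClosed S := by
  refine isClosed_iff_ultrafilter.2 fun g U hU hSU => ?_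
  obtain ⟨g', hg', hlim⟩ := weakStar_ultrafilter hS U hSU
  have : g = g' := by
    ext x
    have h1 : Tendsto (fun f : X →L[ℝ] ℝ => f x) U (𝓝 (g x)) :=
      ((by fun_prop : Continuous fun f : X →L[ℝ] ℝ => f x).tendsto g).mono_left hU
    exact tendsto_nhds_unique h1 (hlim x)
  exact this ▸ hg'

lemma sigma_continuous {X : Type*} [NormedAddCommGroup X] [NormedSpace ℝ X]
    {Y : Set (X →L[ℝ] ℝ)} {y : X →L[ℝ] ℝ} (hy : y ∈ Y) :
    @Continuous _ _ (sigmaTop Y) _ (fun x => y x) := by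
  let _ := sigmaTop Y
  have h : Continuous fun g : Y → ℝ => g ⟨y, hy⟩ := continuous_apply _
  exact h.comp (continuous_induced_dom (f := fun (x : X) (y : Y) => y.1 x))

/-! ### Separation in finite dimensions -/

/-- If finitely many points `x ∈ F` are such that every `y ∈ S` satisfies `φ y - y x ≤ ε` for one
of them, then a single point of the convex hull of `F` serves all `y ∈ S`. -/
lemma finite_minimax {X : Type*} [NormedAddCommGroup X] [NormedSpace ℝ X]
    {Y : Submodule ℝ (X →L[ℝ] ℝ)} (φ : Y →ₗ[ℝ] ℝ) {S : Set Y} (hS : Convex ℝ S)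
    (hSne : S.Nonempty) (F : Finset X) {ε : ℝ}
    (h : ∀ y ∈ S, ∃ x ∈ F, φ y - (y : X →L[ℝ] ℝ) x ≤ ε) :
    ∃ x ∈ convexHull ℝ (F : Set X), ∀ y ∈ S, φ y - (y : X →L[ℝ] ℝ) x ≤ ε := by
  classical
  let q : Y →ₗ[ℝ] (F → ℝ) := LinearMap.pi fun x =>
    φ - ((ContinuousLinearMap.apply ℝ ℝ (x : X)).toLinearMap ∘ₗ Y.subtype)
  have hq : ∀ y x, q y x = φ y - (y : X →L[ℝ] ℝ) x := fun y x => rfl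
  let O : Set (F → ℝ) := univ.pi fun _ => Ioi ε
  have hO : IsOpen O := isOpen_set_pi finite_univ fun _ _ => isOpen_Ioi
  have hOc : Convex ℝ O := convex_pi fun _ _ => convex_Ioi ε
  have hdisj : Disjoint O (q '' S) := by
    rw [Set.disjoint_left]
    rintro _ hqO ⟨y, hy, rfl⟩
    obtain ⟨x, hx, hle⟩ := h y hy
    have := hqO ⟨x, hx⟩ (mem_univ _)
    simp only [mem_Ioi, hq] at this
    linarith
  obtain ⟨f, u, hfO, hfQ⟩ := geometric_hahn_banach_open hOc hO (hS.linear_image q) hdisj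
  let e : F → F → ℝ := fun i => Pi.single i 1
  let l : F → ℝ := fun i => -f (e i)
  have hfl : ∀ a : F → ℝ, f a = -∑ i, l i * a i := by
    intro a
    conv_lhs => rw [pi_eq_sum_univ' a]
    rw [map_sum, ← Finset.sum_neg_distrib]
    refine Finset.sum_congr rfl fun i _ => ?_
    rw [map_smul, smul_eq_mul]
    simp only [l, e]
    ring
  have hl0 : ∀ i, 0 ≤ l i := by
    intro i
    by_contra hneg
    push Not at hneg
    have hpos : 0 < f (e i) := by simp only [l] at hneg; linarith
    obtain ⟨n, hn⟩ := exists_nat_gt ((u - f (fun _ => ε + 1)) / f (e i))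
    have hmem : (fun _ => ε + 1) + (n : ℝ) • e i ∈ O := by
      intro j _
      have : 0 ≤ (n : ℝ) * e i j := by
        refine mul_nonneg (Nat.cast_nonneg _) ?_
        simp only [e, Pi.single_apply]; split_ifs <;> norm_num
      simp only [Pi.add_apply, Pi.smul_apply, smul_eq_mul, mem_Ioi]
      linarith
    have h1 := hfO _ hmem
    rw [map_add, map_smul, smul_eq_mul] at h1
    rw [div_lt_iff₀ hpos] at hn
    linarith
  have hsum0 : 0 ≤ ∑ i, l i := Finset.sum_nonneg fun i _ => hl0 i
  have hsum : 0 < ∑ i, l i := by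
    refine lt_of_le_of_ne hsum0 fun h0 => ?_
    have hz : ∀ i, l i = 0 := fun i =>
      (Finset.sum_eq_zero_iff_of_nonneg fun i _ => hl0 i).1 h0.symm i (Finset.mem_univ i)
    have hf0 : ∀ a, f a = 0 := fun a => by rw [hfl]; simp [hz]
    have h1 := hfO (fun _ => ε + 1) (fun _ _ => by simp)
    obtain ⟨y, hy⟩ := hSne
    have h2 := hfQ _ ⟨y, hy, rfl⟩
    rw [hf0] at h1 h2
    linarith
  have hu : -u ≤ ε * ∑ i, l i := by
    refine le_of_forall_pos_le_add fun η hη => ?_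
    have h1 := hfO (fun _ => ε + η / ∑ i, l i) (fun _ _ => by
      simp only [mem_Ioi]; have := div_pos hη hsum; linarith)
    rw [hfl, ← Finset.sum_mul, mul_add, mul_div_cancel₀ _ hsum.ne'] at h1
    linarith
  refine ⟨∑ i : F, (l i / ∑ j, l j) • (i : X), ?_, fun y hy => ?_⟩
  · refine (convex_convexHull ℝ _).sum_mem (fun i _ => div_nonneg (hl0 i) hsum0) ?_ ?_
    · rw [← Finset.sum_div, div_self hsum.ne']
    · intro i _
      exact subset_convexHull ℝ _ i.2
  · have h1 := hfQ _ ⟨y, hy, rfl⟩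
    rw [hfl] at h1
    have h2 : ∑ i, l i * q y i = (∑ i, l i) * φ y - ∑ i, l i * (y : X →L[ℝ] ℝ) i := by
      simp only [hq, mul_sub, Finset.sum_sub_distrib, Finset.sum_mul]
    have h3 : (y : X →L[ℝ] ℝ) (∑ i : F, (l i / ∑ j, l j) • (i : X)) =
        (∑ i, l i * (y : X →L[ℝ] ℝ) i) / ∑ j, l j := by
      rw [map_sum, Finset.sum_div]
      refine Finset.sum_congr rfl fun i _ => ?_
      rw [map_smul, smul_eq_mul]; ring
    rw [h3, sub_le_iff_le_add, ← sub_le_iff_le_add', le_div_iff₀ hsum]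
    linarith

/-- A functional dominated by the support function of `C` is approximated by points of the convex
hull of `C`, uniformly on finite sets. -/
lemma finite_approx {X : Type*} [NormedAddCommGroup X] [NormedSpace ℝ X]
    {Y : Submodule ℝ (X →L[ℝ] ℝ)} (φ : Y →ₗ[ℝ] ℝ) {C : Set X} (hne : C.Nonempty)
    (hφ : ∀ y : Y, φ y ≤ supportFn (y : X →L[ℝ] ℝ) C) (s : Finset Y) {δ : ℝ} (hδ : 0 < δ) :
    ∃ x ∈ convexHull ℝ C, ∀ y ∈ s, |φ y - (y : X →L[ℝ] ℝ) x| ≤ δ := by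
  classical
  let T : X →ₗ[ℝ] (s → ℝ) := LinearMap.pi fun y => ((y : Y) : X →L[ℝ] ℝ).toLinearMap
  have hT : ∀ x y, T x y = ((y : Y) : X →L[ℝ] ℝ) x := fun _ _ => rfl
  let p : s → ℝ := fun y => φ y
  have hconv : Convex ℝ (T '' convexHull ℝ C) := (convex_convexHull ℝ C).linear_image T
  have hmem : p ∈ closure (T '' convexHull ℝ C) := by
    by_contra hnot
    obtain ⟨f, u, hfa, hfp⟩ := geometric_hahn_banach_closed_point hconv.closure isClosed_closure
      hnot
    let l : s → ℝ := fun i => f (Pi.single i 1)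
    have hfl : ∀ a : s → ℝ, f a = ∑ i, l i * a i := by
      intro a
      conv_lhs => rw [pi_eq_sum_univ' a]
      rw [map_sum]
      refine Finset.sum_congr rfl fun i _ => ?_
      rw [map_smul, smul_eq_mul, mul_comm]
    let y : Y := ∑ i : s, l i • (i : Y)
    have h1 : φ y = f p := by
      rw [hfl]; simp [y, p, map_sum]
    have h2 : ∀ x, (y : X →L[ℝ] ℝ) x = f (T x) := by
      intro x
      rw [hfl]
      simp only [y, hT, Submodule.coe_sum, Submodule.coe_smul, sum_apply, smul_apply, smul_eq_mul]
    have h3 : supportFn (y : X →L[ℝ] ℝ) C ≤ u := supportFn_le hne fun x hx => by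
      rw [h2]
      exact (hfa _ (subset_closure ⟨x, subset_convexHull ℝ C hx, rfl⟩)).le
    have := hφ y
    linarith
  obtain ⟨_, ⟨x, hx, rfl⟩, hd⟩ := Metric.mem_closure_iff.1 hmem δ hδ
  refine ⟨x, hx, fun y hy => ?_⟩
  have := (dist_le_pi_dist p (T x) ⟨y, hy⟩).trans hd.le
  rwa [Real.dist_eq] at this

/-! ### Krein's theorem for Mackey quasi-complete spaces -/

set_option maxHeartbeats 1000000 in
/-- A functional dominated by the support function of a relatively `σ(X, Y)`-compact set `C` is
approximated by points of the convex hull of `C`, uniformly on absolutely convex weak*-compact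
subsets of `Y`. -/
lemma krein_approx {X : Type*} [NormedAddCommGroup X] [NormedSpace ℝ X] [CompleteSpace X]
    {Y : Submodule ℝ (X →L[ℝ] ℝ)} {C : Set X} (hne : C.Nonempty) (hbd : Bornology.IsBounded C)
    (hcpt : @IsCompact X (sigmaTop (Y : Set (X →L[ℝ] ℝ)))
        (@closure X (sigmaTop (Y : Set (X →L[ℝ] ℝ))) C))
    (φ : Y →ₗ[ℝ] ℝ) (hφ : ∀ y : Y, φ y ≤ supportFn (y : X →L[ℝ] ℝ) C)
    {S : Set (X →L[ℝ] ℝ)} (hS : S ∈ mackeyFamily Y) {ε : ℝ} (hε : 0 < ε) :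
    ∃ x ∈ convexHull ℝ C, ∀ y : Y, (y : X →L[ℝ] ℝ) ∈ S → |φ y - (y : X →L[ℝ] ℝ) x| ≤ ε := by
  classical
  obtain ⟨hSY, hSconv, hSbal, hScpt⟩ := hS
  by_contra hcon
  push Not at hcon
  obtain ⟨R₀, hR₀⟩ := hbd.exists_norm_le
  set R := max R₀ 0 with hRdef
  have hR0 : 0 ≤ R := le_max_right _ _
  have hR : ∀ x ∈ convexHull ℝ C, ‖x‖ ≤ R := by
    have : convexHull ℝ C ⊆ Metric.closedBall 0 R :=
      convexHull_min (fun x hx => mem_closedBall_zero_iff.2 ((hR₀ x hx).trans (le_max_left _ _)))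
        (convex_closedBall 0 R)
    intro x hx
    simpa using this hx
  obtain ⟨B₀, hB₀⟩ := weakStar_norm_bounded hScpt
  set B := max B₀ 0 with hBdef
  have hB0 : 0 ≤ B := le_max_right _ _
  have hB : ∀ y ∈ S, ‖y‖ ≤ B := fun y hy => (hB₀ y hy).trans (le_max_left _ _)
  have hφle : ∀ y : Y, φ y ≤ ‖(y : X →L[ℝ] ℝ)‖ * R := fun y =>
    (hφ y).trans (supportFn_le hne fun x hx =>
      (le_abs_self _).trans (((y : X →L[ℝ] ℝ).le_opNorm x).trans (by
        gcongr; exact hR x (subset_convexHull ℝ C hx))))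
  have hneg : ∀ y : Y, φ (-y) = -φ y := fun y => φ.map_neg y
  have hφabs : ∀ y : Y, (y : X →L[ℝ] ℝ) ∈ S → |φ y| ≤ B * R := by
    intro y hy
    have h1 := hφle y
    have h2 := hφle (-y)
    have h3 : ‖(y : X →L[ℝ] ℝ)‖ * R ≤ B * R := by gcongr; exact hB _ hy
    rw [hneg, Submodule.coe_neg, norm_neg] at h2
    exact abs_le.2 ⟨by linarith, by linarith⟩
  have hSne : ∃ y : Y, (y : X →L[ℝ] ℝ) ∈ S := by
    obtain ⟨x, hx⟩ := hne
    obtain ⟨y, hy, -⟩ := hcon x (subset_convexHull ℝ C hx)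
    exact ⟨y, hy⟩
  have hSconv' : Convex ℝ {y : Y | (y : X →L[ℝ] ℝ) ∈ S} := hSconv.linear_preimage Y.subtype
  -- The minimax lemma turns the failure of approximation into a failure on finite sets.
  have hfail : ∀ F : Finset X, (F : Set X) ⊆ C → ∃ y : Y, (y : X →L[ℝ] ℝ) ∈ S ∧
      ∀ x ∈ F, ε < φ y - (y : X →L[ℝ] ℝ) x := by
    intro F hF
    by_contra hcF
    push Not at hcF
    obtain ⟨x, hx, hxS⟩ := finite_minimax φ hSconv' hSne F hcF
    obtain ⟨y, hy, hlt⟩ := hcon x (convexHull_mono hF hx)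
    have hny : ((-y : Y) : X →L[ℝ] ℝ) ∈ S := hSbal.neg_mem_iff.2 hy
    have h1 := hxS y hy
    have h2 := hxS (-y) hny
    rw [hneg, Submodule.coe_neg, neg_apply] at h2
    exact absurd (abs_le.2 ⟨by linarith, h1⟩) (not_le.2 hlt)
  -- Alternate choice of functionals `y`, points `x` and finite sets `F` carrying these points.
  obtain ⟨a, haP, har⟩ := exists_seq_of_forall_finset_exists
    (α := Y × X × Finset X)
    (fun a => (a.1 : X →L[ℝ] ℝ) ∈ S ∧ (a.2.2 : Set X) ⊆ C ∧
      a.2.1 ∈ convexHull ℝ (a.2.2 : Set X))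
    (fun a b => (∀ z ∈ a.2.2, ε < φ b.1 - (b.1 : X →L[ℝ] ℝ) z) ∧
      |φ a.1 - (a.1 : X →L[ℝ] ℝ) b.2.1| ≤ ε / 8) (by
    intro s hs
    obtain ⟨y, hyS, hy⟩ := hfail (s.biUnion fun a => a.2.2) (by
      intro z hz
      simp only [Finset.coe_biUnion, mem_iUnion] at hz
      obtain ⟨a, ha, hz⟩ := hz
      exact (hs a ha).2.1 hz)
    obtain ⟨x, hx, hxs⟩ := finite_approx φ hne hφ (s.image fun a => a.1)
      (δ := ε / 8) (by positivity)
    rw [convexHull_eq_union_convexHull_finite_subsets] at hx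
    simp only [mem_iUnion] at hx
    obtain ⟨F, hF, hx⟩ := hx
    refine ⟨(y, x, F), ⟨hyS, hF, hx⟩, fun a ha => ⟨fun z hz => ?_, ?_⟩⟩
    · exact hy z (Finset.mem_biUnion.2 ⟨a, ha, hz⟩)
    · exact hxs _ (Finset.mem_image_of_mem _ ha))
  set y : ℕ → Y := fun n => (a n).1 with hy
  set x : ℕ → X := fun n => (a n).2.1 with hx
  set M : Set X := ⋃ n, ((a n).2.2 : Set X) with hM
  have hyS : ∀ n, (y n : X →L[ℝ] ℝ) ∈ S := fun n => (haP n).1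
  have hMC : M ⊆ C := iUnion_subset fun n => (haP n).2.1
  have hxM : ∀ n, x n ∈ convexHull ℝ M := fun n =>
    convexHull_mono (subset_iUnion (fun n => ((a n).2.2 : Set X)) n) (haP n).2.2
  have hxR : ∀ n, ‖x n‖ ≤ R := fun n => hR _ (convexHull_mono hMC (hxM n))
  have hMne : M.Nonempty := convexHull_nonempty_iff.1 ⟨_, hxM 0⟩
  have hMcount : M.Countable := countable_iUnion fun n => Finset.countable_toSet _
  have hyx : ∀ m n, m < n → (y n : X →L[ℝ] ℝ) (x m) ≤ φ (y n) - ε := by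
    intro m n hmn
    have : convexHull ℝ ((a m).2.2 : Set X) ⊆
        {z | (y n : X →L[ℝ] ℝ) z ≤ φ (y n) - ε} := by
      refine convexHull_min (fun z hz => ?_)
        (convex_halfSpace_le (y n : X →L[ℝ] ℝ).toLinearMap.isLinear _)
      have := (har m n hmn).1 z hz
      simp only [mem_ofPred_eq]
      linarith
    exact this (haP m).2.2
  have hφx : ∀ m n, m < n → |φ (y m) - (y m : X →L[ℝ] ℝ) (x n)| ≤ ε / 8 :=
    fun m n hmn => (har m n hmn).2
  -- A subsequence converges pointwise on the countable set `M`, and so do its `φ`-values.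
  have : Countable M := hMcount
  obtain ⟨⟨ℓ, L⟩, -, ψ, hψ, hlim⟩ := IsCompact.tendsto_subseq
    (s := (univ.pi fun _ : M => Icc (-(B * R)) (B * R)) ×ˢ Icc (-(B * R)) (B * R))
    (x := fun n => ((fun z : M => (y n : X →L[ℝ] ℝ) z), φ (y n)))
    ((isCompact_univ_pi fun _ => isCompact_Icc).prod isCompact_Icc) (by
      refine fun n => ⟨fun z _ => abs_le.1 ?_, abs_le.1 (hφabs _ (hyS n))⟩
      refine ((y n : X →L[ℝ] ℝ).le_opNorm z).trans ?_
      exact mul_le_mul (hB _ (hyS n)) (hR _ (subset_convexHull ℝ C (hMC z.2)))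
        (norm_nonneg _) hB0)
  rw [nhds_prod_eq, tendsto_prod_iff'] at hlim
  obtain ⟨hlimM, hlimφ⟩ := hlim
  have hlimM' : ∀ z (hz : z ∈ M), Tendsto (fun k => (y (ψ k) : X →L[ℝ] ℝ) z) atTop
      (𝓝 (ℓ ⟨z, hz⟩)) := fun z hz => (tendsto_pi_nhds.1 hlimM) ⟨z, hz⟩
  set K : Set X := @closure X (sigmaTop (Y : Set (X →L[ℝ] ℝ))) M with hKdef
  have hMK : M ⊆ K := @subset_closure X (sigmaTop (Y : Set (X →L[ℝ] ℝ))) M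
  have hKcpt : @IsCompact X (sigmaTop (Y : Set (X →L[ℝ] ℝ))) K :=
    @IsCompact.of_isClosed_subset X (sigmaTop (Y : Set (X →L[ℝ] ℝ))) _ _ hcpt
      (@isClosed_closure X (sigmaTop (Y : Set (X →L[ℝ] ℝ))) M)
      (@closure_mono X (sigmaTop (Y : Set (X →L[ℝ] ℝ))) _ _ hMC)
  have hKmax : ∀ y ∈ Y, ∃ x ∈ K, ∀ z ∈ K, y z ≤ y x := by
    intro y hy
    exact @IsCompact.exists_isMaxOn _ _ _ _ (sigmaTop (Y : Set (X →L[ℝ] ℝ))) _ K hKcpt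
      (hMne.mono hMK) _ (@Continuous.continuousOn _ _ (sigmaTop (Y : Set (X →L[ℝ] ℝ))) _ _ _
        (sigma_continuous hy))
  have hultra : ∀ U : Ultrafilter ℕ, (U : Filter ℕ) ≤ atTop → ∃ g ∈ S,
      (∀ z, Tendsto (fun k => (y (ψ k) : X →L[ℝ] ℝ) z) U (𝓝 (g z))) ∧
      ∀ z (hz : z ∈ M), g z = ℓ ⟨z, hz⟩ := by
    intro U hU
    obtain ⟨g, hg, hgl⟩ := weakStar_ultrafilter hScpt (U.map fun k => (y (ψ k) : X →L[ℝ] ℝ))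
      (Ultrafilter.mem_map.2 (univ_mem' fun k => hyS (ψ k)))
    refine ⟨g, hg, fun z => ?_, fun z hz => ?_⟩
    · exact hgl z
    · exact tendsto_nhds_unique (hgl z) ((hlimM' z hz).mono_left hU)
  obtain ⟨g, hgS, -, hgM⟩ := hultra (hyperfilter ℕ) (by
    rw [← Nat.cofinite_eq_atTop]; exact hyperfilter_le_cofinite)
  -- All weak* cluster points agree on `M`, hence on its `σ(X, Y)`-closure.
  have hKlim : ∀ z ∈ K, Tendsto (fun k => (y (ψ k) : X →L[ℝ] ℝ) z) atTop (𝓝 (g z)) := by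
    intro z hz
    rw [tendsto_iff_ultrafilter]
    intro U hU
    obtain ⟨g', hg'S, hg'l, hg'M⟩ := hultra U hU
    have heq : K ⊆ {w | (g' - g) w = 0} := by
      refine @closure_minimal X (sigmaTop (Y : Set (X →L[ℝ] ℝ))) _ _ (fun w hw => ?_)
        (@IsClosed.preimage _ _ (sigmaTop (Y : Set (X →L[ℝ] ℝ))) _ _
          (sigma_continuous (Y.sub_mem (hSY hg'S) (hSY hgS))) _ (isClosed_singleton (x := (0 : ℝ))))
      simp [hg'M w hw, hgM w hw]
    have : g' z = g z := by
      have := heq hz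
      simpa [sub_eq_zero] using this
    rw [← this]
    exact hg'l z
  obtain ⟨k₀, hk₀⟩ := eventually_atTop.1 (hlimφ.eventually (lt_mem_nhds
    (show L - ε / 8 < L by linarith)))
  -- Simons' inequality on the tail of the subsequence, recentred at `g`.
  set f : ℕ → X →L[ℝ] ℝ := fun k => (y (ψ (k₀ + k)) : X →L[ℝ] ℝ) - g with hf
  have hfsub : closure (convexHull ℝ (range f)) ⊆ (fun v => v + g) ⁻¹' S := by
    refine closure_minimal (convexHull_min ?_ ?_)
      ((weakStar_norm_closed hScpt).preimage (by fun_prop))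
    · rintro _ ⟨k, rfl⟩
      simpa [hf] using hyS _
    · exact hSconv.translate_preimage_left g
  obtain ⟨v, hv, hvK⟩ := simons Y hKmax (f := f) (B := B + ‖g‖)
    (fun k => (norm_sub_le _ _).trans (by gcongr; exact hB _ (hyS _)))
    (fun v hv => by
      have := Y.sub_mem (hSY (hfsub hv)) (hSY hgS)
      simpa using this)
    (fun z hz => by
      have := (hKlim z hz).comp (tendsto_add_atTop_nat k₀)
      have := this.sub_const (g z)
      rw [sub_self] at this
      refine this.congr fun k => ?_
      simp [hf, add_comm])
    (δ := ε / 8) (by positivity)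
  obtain ⟨w, hw, hvw⟩ := Metric.mem_closure_iff.1 hv (ε / (8 * (R + 1))) (by positivity)
  have hgx : ∀ m, g (x m) ≤ L - ε := by
    intro m
    have hxlim : Tendsto (fun k => (y (ψ k) : X →L[ℝ] ℝ) (x m)) atTop (𝓝 (g (x m))) := by
      have : convexHull ℝ M ⊆
          {z | Tendsto (fun k => (y (ψ k) : X →L[ℝ] ℝ) z) atTop (𝓝 (g z))} := by
        refine convexHull_min (fun z hz => hKlim z (hMK hz)) ?_
        intro p hp q hq s t _ _ _
        simp only [mem_ofPred_eq, map_add, map_smul] at hp hq ⊢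
        exact (hp.const_smul s).add (hq.const_smul t)
      exact this (hxM m)
    refine le_of_tendsto_of_tendsto hxlim (hlimφ.sub_const ε) ?_
    filter_upwards [eventually_gt_atTop m] with k hk
    exact hyx m (ψ k) (hk.trans_le hψ.le_apply)
  have hwlow : convexHull ℝ (range f) ⊆
      {w | ∃ m₀, ∀ m ≥ m₀, L - ε / 4 ≤ w (x m) + g (x m)} := by
    refine convexHull_min ?_ ?_
    · rintro _ ⟨k, rfl⟩
      refine ⟨ψ (k₀ + k) + 1, fun m hm => ?_⟩
      have h1 := (abs_le.1 (hφx _ m hm)).2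
      have h2 : L - ε / 8 < φ (y (ψ (k₀ + k))) := hk₀ (k₀ + k) (Nat.le_add_right _ _)
      simp only [hf, sub_apply]
      linarith
    · rintro p ⟨m₁, hp⟩ q ⟨m₂, hq⟩ s t hs ht hst
      refine ⟨max m₁ m₂, fun m hm => ?_⟩
      have h1 := hp m (le_of_max_le_left hm)
      have h2 := hq m (le_of_max_le_right hm)
      have : t = 1 - s := by linarith
      subst this
      simp only [add_apply, smul_apply, smul_eq_mul]
      nlinarith
  obtain ⟨m, hm⟩ := hwlow hw
  have h1 := hm m le_rfl
  have h2 : v (x m) ≤ ε / 8 := by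
    have : convexHull ℝ M ⊆ {z | v z ≤ ε / 8} :=
      convexHull_min (fun z hz => hvK z (hMK hz))
        (convex_halfSpace_le v.toLinearMap.isLinear _)
    exact this (hxM m)
  have h3 : w (x m) - v (x m) ≤ ε / 8 := by
    rw [dist_comm, dist_eq_norm] at hvw
    calc w (x m) - v (x m) = (w - v) (x m) := rfl
      _ ≤ ‖w - v‖ * ‖x m‖ := (le_abs_self _).trans ((w - v).le_opNorm _)
      _ ≤ (ε / (8 * (R + 1))) * (R + 1) := by
        gcongr
        exact (hxR m).trans (by linarith)
      _ = ε / 8 := by field_simp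
  have h4 := hgx m
  linarith

lemma mackeyFamily_segment {X : Type*} [NormedAddCommGroup X] [NormedSpace ℝ X]
    {Y : Submodule ℝ (X →L[ℝ] ℝ)} {y : X →L[ℝ] ℝ} (hy : y ∈ Y) :
    (fun t : ℝ => t • y) '' Icc (-1) 1 ∈ mackeyFamily Y := by
  refine ⟨?_, ?_, ?_, ?_⟩
  · rintro _ ⟨t, -, rfl⟩
    exact Y.smul_mem t hy
  · exact (convex_Icc (-1 : ℝ) 1).linear_image (LinearMap.toSpanSingleton ℝ _ y)
  · rintro a ha _ ⟨_, ⟨t, ht, rfl⟩, rfl⟩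
    refine ⟨a * t, ?_, mul_smul a t y⟩
    have h1 : |t| ≤ 1 := abs_le.2 ht
    have h2 : |a| ≤ 1 := ha
    refine abs_le.1 ?_
    rw [abs_mul]
    exact mul_le_one₀ h2 (abs_nonneg t) h1
  · let _ := weakStarTop X
    have hc : Continuous fun t : ℝ => t • y := by
      refine continuous_induced_rng.2 (continuous_pi fun x => ?_)
      show Continuous fun t : ℝ => t * y x
      fun_prop
    exact isCompact_Icc.image hc

lemma mackeyFamily_directed_s13 {X : Type*} [NormedAddCommGroup X] [NormedSpace ℝ X]
    (Y : Submodule ℝ (X →L[ℝ] ℝ)) : DirectedOn (· ⊆ ·) (mackeyFamily Y) := by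
  intro S hS T hT
  rcases S.eq_empty_or_nonempty with rfl | hSne
  · exact ⟨T, hT, empty_subset _, Subset.rfl⟩
  rcases T.eq_empty_or_nonempty with rfl | hTne
  · exact ⟨S, hS, Subset.rfl, empty_subset _⟩
  obtain ⟨hSY, hSc, hSb, hSk⟩ := hS
  obtain ⟨hTY, hTc, hTb, hTk⟩ := hT
  have hT0 : (0 : X →L[ℝ] ℝ) ∈ T := by
    obtain ⟨t, ht⟩ := hTne
    simpa using hTb.smul_mem (by simp : ‖(0 : ℝ)‖ ≤ 1) ht
  have hS0 : (0 : X →L[ℝ] ℝ) ∈ S := by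
    obtain ⟨t, ht⟩ := hSne
    simpa using hSb.smul_mem (by simp : ‖(0 : ℝ)‖ ≤ 1) ht
  refine ⟨S + T, ⟨?_, hSc.add hTc, hSb.add hTb, ?_⟩, ?_, ?_⟩
  · rintro _ ⟨s, hs, t, ht, rfl⟩
    exact Y.add_mem (hSY hs) (hTY ht)
  · exact IsCompact.add (N := WeakDual ℝ X) hSk hTk
  · intro s hs
    exact Set.mem_add.2 ⟨s, hs, 0, hT0, add_zero s⟩
  · intro t ht
    exact Set.mem_add.2 ⟨0, hS0, t, ht, zero_add t⟩

/-- Krein's theorem in dual form: if `(X, μ(X, Y))` is quasi-complete and `C` is relatively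
`σ(X, Y)`-compact, then every linear functional on `Y` that is dominated by the support function
of `C` is the evaluation at a point of `X`. -/
lemma krein {X : Type*} [NormedAddCommGroup X] [NormedSpace ℝ X] [CompleteSpace X]
    {Y : Submodule ℝ (X →L[ℝ] ℝ)}
    (hqc : ∀ S : Set X, @IsClosed X (mackeyTop Y) S →
      @Bornology.IsVonNBounded ℝ X _ _ _ (mackeyTop Y) S →
      @IsComplete X (mackeyUniformity Y) S)
    {C : Set X} (hne : C.Nonempty) (hbd : Bornology.IsBounded C)
    (hcpt : @IsCompact X (sigmaTop (Y : Set (X →L[ℝ] ℝ)))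
        (@closure X (sigmaTop (Y : Set (X →L[ℝ] ℝ))) C))
    (φ : Y →ₗ[ℝ] ℝ) (hφ : ∀ y : Y, φ y ≤ supportFn (y : X →L[ℝ] ℝ) C) :
    ∃ x : X, ∀ y : Y, (y : X →L[ℝ] ℝ) x = φ y := by
  classical
  obtain ⟨R₀, hR₀⟩ := hbd.exists_norm_le
  set R := max R₀ 0 with hRdef
  have hR0 : 0 ≤ R := le_max_right _ _
  have hR : ∀ x ∈ convexHull ℝ C, ‖x‖ ≤ R := by
    have : convexHull ℝ C ⊆ Metric.closedBall 0 R :=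
      convexHull_min (fun x hx => mem_closedBall_zero_iff.2 ((hR₀ x hx).trans (le_max_left _ _)))
        (convex_closedBall 0 R)
    intro x hx
    simpa using this hx
  set e : X → UniformOnFun (X →L[ℝ] ℝ) ℝ (mackeyFamily Y) :=
    fun x => UniformOnFun.ofFun (mackeyFamily Y) (fun f : X →L[ℝ] ℝ => f x) with he
  have hfne : (mackeyFamily Y).Nonempty := ⟨_, mackeyFamily_segment Y.zero_mem⟩
  have hbasis := fun F => UniformOnFun.hasBasis_nhds_of_basis (X →L[ℝ] ℝ) ℝ (mackeyFamily Y) F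
    hfne (mackeyFamily_directed_s13 Y) Metric.uniformity_basis_dist
  have heval : ∀ y ∈ Y, Continuous fun F : UniformOnFun (X →L[ℝ] ℝ) ℝ (mackeyFamily Y) =>
      UniformOnFun.toFun (mackeyFamily Y) F y := fun y hy =>
    (UniformOnFun.uniformContinuous_eval_of_mem ℝ (mackeyFamily Y)
      (⟨1, by norm_num, one_smul ℝ y⟩ : y ∈ (fun t : ℝ => t • y) '' Icc (-1) 1)
      (mackeyFamily_segment hy)).continuous
  have hnhds : ∀ x, @nhds X (mackeyTop Y) x = comap e (𝓝 (e x)) := fun x =>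
    @nhds_induced _ _ UniformSpace.toTopologicalSpace e x
  have heC : @Continuous _ _ (mackeyTop Y) _ e := @continuous_induced_dom _ _ e _
  -- A `σ(X, Y)`-closed, Mackey bounded set that contains the convex hull of `C`.
  set D : Set X := ⋂ y ∈ Y, {x | |y x| ≤ R * ‖y‖} with hD
  have hDcl : @IsClosed X (mackeyTop Y) D := by
    let _ := mackeyTop Y
    refine isClosed_biInter fun y hy => ?_
    have h1 : Continuous fun x : X => y x := (heval y hy).comp heC
    exact isClosed_le h1.abs continuous_const
  have hDbd : @Bornology.IsVonNBounded ℝ X _ _ _ (mackeyTop Y) D := by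
    intro V hV
    rw [hnhds, mem_comap] at hV
    obtain ⟨W, hW, hWV⟩ := hV
    obtain ⟨⟨S, ε⟩, ⟨hS, hε⟩, hSW⟩ := (hbasis (e 0)).mem_iff.1 hW
    simp only at hS hε
    obtain ⟨B₀, hB₀⟩ := weakStar_norm_bounded hS.2.2.2
    have hB : ∀ y ∈ S, ‖y‖ ≤ max B₀ 0 := fun y hy => (hB₀ y hy).trans (le_max_left _ _)
    have hB0 : 0 ≤ max B₀ 0 := le_max_right _ _
    refine absorbs_iff_norm.2 ⟨(R * max B₀ 0 + 1) / ε, fun c hc x hx => ?_⟩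
    have hcpos : 0 < ‖c‖ := lt_of_lt_of_le (by positivity) hc
    have hc0 : c ≠ 0 := norm_pos_iff.1 hcpos
    refine (mem_smul_set_iff_inv_smul_mem₀ hc0 _ _).2 (hWV (hSW ?_))
    intro y hy
    have hxy : |y x| ≤ R * ‖y‖ := by
      have := mem_iInter₂.1 hx y (hS.1 hy)
      exact this
    show dist (y (c⁻¹ • x)) (y 0) < ε
    rw [map_zero, dist_zero_right, map_smul, norm_smul, norm_inv, inv_mul_lt_iff₀ hcpos]
    rw [div_le_iff₀ hε] at hc
    have : R * ‖y‖ ≤ R * max B₀ 0 := by gcongr; exact hB y hy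
    rw [Real.norm_eq_abs (y x)]
    linarith
  have hDcomp := hqc D hDcl hDbd
  let Φ : UniformOnFun (X →L[ℝ] ℝ) ℝ (mackeyFamily Y) :=
    UniformOnFun.ofFun (mackeyFamily Y) fun f => if h : f ∈ Y then φ ⟨f, h⟩ else 0
  have hneBot : (comap e (𝓝 Φ) ⊓ 𝓟 (convexHull ℝ C)).NeBot := by
    rw [((hbasis Φ).comap e).inf_principal_neBot_iff]
    rintro ⟨S, ε⟩ ⟨hS, hε⟩
    simp only at hS hε
    obtain ⟨x, hx, hxS⟩ := krein_approx hne hbd hcpt φ hφ hS (half_pos hε)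
    refine ⟨x, ?_, hx⟩
    intro y hy
    show dist (y x) (if h : y ∈ Y then φ ⟨y, h⟩ else 0) < ε
    rw [dif_pos (show y ∈ Y from hS.1 hy), dist_comm, Real.dist_eq]
    have := hxS ⟨y, hS.1 hy⟩ hy
    simp only at this
    linarith
  have hneBot' : (comap e (𝓝 Φ)).NeBot := hneBot.mono inf_le_left
  have hcauchy : @Cauchy X (mackeyUniformity Y) (comap e (𝓝 Φ) ⊓ 𝓟 (convexHull ℝ C)) := by
    refine @Cauchy.mono _ (mackeyUniformity Y) _ _ hneBot ?_ inf_le_left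
    exact @Cauchy.comap _ _ (mackeyUniformity Y) _ _ e cauchy_nhds le_rfl hneBot'
  obtain ⟨x, -, hx⟩ := hDcomp _ hcauchy (inf_le_right.trans (principal_mono.2 fun z hz => by
    refine mem_iInter₂.2 fun y _ => ?_
    show |y z| ≤ R * ‖y‖
    rw [mul_comm]
    exact (y.le_opNorm z).trans (by gcongr; exact hR z hz)))
  have hx' : comap e (𝓝 Φ) ⊓ 𝓟 (convexHull ℝ C) ≤ comap e (𝓝 (e x)) := by
    rw [← hnhds]; exact hx
  refine ⟨x, fun y => ?_⟩
  have h1 : Tendsto e (comap e (𝓝 Φ) ⊓ 𝓟 (convexHull ℝ C)) (𝓝 Φ) :=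
    tendsto_comap.mono_left inf_le_left
  have h2 : Tendsto e (comap e (𝓝 Φ) ⊓ 𝓟 (convexHull ℝ C)) (𝓝 (e x)) :=
    tendsto_comap.mono_left hx'
  have h3 := tendsto_nhds_unique (((heval y y.2).tendsto _).comp h2)
    (((heval y y.2).tendsto _).comp h1)
  have h4 : UniformOnFun.toFun (mackeyFamily Y) Φ (y : X →L[ℝ] ℝ) = φ y := by
    show (if h : (y : X →L[ℝ] ℝ) ∈ Y then φ ⟨y, h⟩ else 0) = φ y
    rw [dif_pos y.2]
  rw [h4] at h3
  exact h3

/-! ### Selectors of a multimeasure along a disjoint sequence -/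

/-- The properties of `(f, T) ↦ s(f, M(⋃_{n ∈ T} A n))`, for disjoint measurable sets `A n`, from
which the behaviour of points dominated by this function is derived: sublinearity in `f`,
representability of dominated functionals on `Y`, and countable additivity in `T` for `f ∈ Y`. -/
structure SupportSystem {X : Type*} [NormedAddCommGroup X] [NormedSpace ℝ X]
    (Y : Submodule ℝ (X →L[ℝ] ℝ)) (m : (X →L[ℝ] ℝ) → Set ℕ → ℝ) : Prop where
  add_le : ∀ T f g, m (f + g) T ≤ m f T + m g T
  smul : ∀ T f, ∀ c : ℝ, 0 ≤ c → m (c • f) T = c * m f T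
  repr : ∀ T, ∀ φ : Y →ₗ[ℝ] ℝ, (∀ y : Y, φ y ≤ m y T) →
    ∃ x : X, ∀ y : Y, (y : X →L[ℝ] ℝ) x = φ y
  empty : ∀ y ∈ Y, m y ∅ = 0
  union : ∀ y ∈ Y, ∀ T T' : Set ℕ, Disjoint T T' → m y (T ∪ T') = m y T + m y T'
  hasSum : ∀ y ∈ Y, ∀ I : ℕ → Set ℕ, Pairwise (Function.onFun Disjoint I) →
    HasSum (fun k => m y (I k)) (m y (⋃ k, I k))

/-- The points of `X` dominated on `Y` by `m(·, T)`; for `m(f, T) = s(f, M(⋃_{n ∈ T} A n))` this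
is the `σ(X, Y)`-closed convex hull of `M(⋃_{n ∈ T} A n)`. -/
def domPts {X : Type*} [NormedAddCommGroup X] [NormedSpace ℝ X]
    (Y : Submodule ℝ (X →L[ℝ] ℝ)) (m : (X →L[ℝ] ℝ) → Set ℕ → ℝ) (T : Set ℕ) : Set X :=
  {x | ∀ y ∈ Y, y x ≤ m y T}

lemma eq_of_total {X : Type*} [NormedAddCommGroup X] [NormedSpace ℝ X]
    {Y : Submodule ℝ (X →L[ℝ] ℝ)} (hYtotal : ∀ x : X, (∀ f ∈ Y, f x = 0) → x = 0)
    {x x' : X} (h : ∀ f ∈ Y, f x = f x') : x = x' :=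
  sub_eq_zero.1 (hYtotal _ fun f hf => by rw [map_sub, h f hf, sub_self])

lemma abs_le_of_mem_domPts {X : Type*} [NormedAddCommGroup X] [NormedSpace ℝ X]
    {Y : Submodule ℝ (X →L[ℝ] ℝ)} {m : (X →L[ℝ] ℝ) → Set ℕ → ℝ} {T : Set ℕ} {x : X}
    (hx : x ∈ domPts Y m T) {y : X →L[ℝ] ℝ} (hy : y ∈ Y) :
    |y x| ≤ |m y T| + |m (-y) T| := by
  have h1 := hx y hy
  have h2 := hx (-y) (Y.neg_mem hy)
  rw [neg_apply] at h2
  have h3 := le_abs_self (m y T)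
  have h4 := le_abs_self (m (-y) T)
  have h5 := abs_nonneg (m y T)
  have h6 := abs_nonneg (m (-y) T)
  exact abs_le.2 ⟨by linarith, by linarith⟩

lemma add_mem_domPts {X : Type*} [NormedAddCommGroup X] [NormedSpace ℝ X]
    {Y : Submodule ℝ (X →L[ℝ] ℝ)} {m : (X →L[ℝ] ℝ) → Set ℕ → ℝ} (hm : SupportSystem Y m)
    {T T' : Set ℕ} (hT : Disjoint T T') {x x' : X}
    (hx : x ∈ domPts Y m T) (hx' : x' ∈ domPts Y m T') : x + x' ∈ domPts Y m (T ∪ T') := by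
  intro y hy
  rw [map_add, hm.union y hy T T' hT]
  exact add_le_add (hx y hy) (hx' y hy)

/-- Selectors over disjoint index sets are norm summable: all their subseries are represented by
points of `X`, so they define a `Y`-countably additive vector measure on the subsets of `ℕ`, to
which the Orlicz–Thomas property applies. -/
lemma summable_of_mem_domPts {X : Type*} [NormedAddCommGroup X] [NormedSpace ℝ X]
    {Y : Submodule ℝ (X →L[ℝ] ℝ)} (hYtotal : ∀ x : X, (∀ f ∈ Y, f x = 0) → x = 0)
    (hOT : HasOrliczThomas (Y : Set (X →L[ℝ] ℝ)))
    {m : (X →L[ℝ] ℝ) → Set ℕ → ℝ} (hm : SupportSystem Y m)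
    {I : ℕ → Set ℕ} (hI : Pairwise (Function.onFun Disjoint I)) {z : ℕ → X}
    (hz : ∀ k, z k ∈ domPts Y m (I k)) : Summable z := by
  classical
  have hsum : ∀ y ∈ Y, Summable fun k => y (z k) := by
    intro y hy
    refine Summable.of_norm_bounded (((hm.hasSum y hy I hI).summable.abs).add
      ((hm.hasSum (-y) (Y.neg_mem hy) I hI).summable.abs)) fun k => ?_
    exact abs_le_of_mem_domPts (hz k) hy
  let φ : Set ℕ → Y →ₗ[ℝ] ℝ := fun S =>
    { toFun := fun y => ∑' k : S, (y : X →L[ℝ] ℝ) (z k)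
      map_add' := fun y y' =>
        ((hsum y y.2).subtype S).tsum_add ((hsum y' y'.2).subtype S)
      map_smul' := fun c y => tsum_mul_left }
  have hφ : ∀ S, ∃ x : X, ∀ y : Y, (y : X →L[ℝ] ℝ) x = φ S y := by
    intro S
    refine hm.repr (⋃ k, if k ∈ S then I k else ∅) (φ S) fun y => ?_
    have hJ : Pairwise (Function.onFun Disjoint fun k => if k ∈ S then I k else ∅) := by
      intro i j hij
      simp only [Function.onFun]
      split_ifs
      · exact hI hij
      all_goals simp
    have h1 : φ S y = ∑' k, S.indicator (fun k => (y : X →L[ℝ] ℝ) (z k)) k :=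
      tsum_subtype S (fun k => (y : X →L[ℝ] ℝ) (z k))
    rw [h1]
    refine hasSum_le (fun k => ?_) ((hsum y y.2).indicator S).hasSum
      (hm.hasSum y y.2 _ hJ)
    by_cases hk : k ∈ S
    · simp only [hk, indicator_of_mem, if_true]
      exact hz k y y.2
    · simp only [hk, not_false_eq_true, indicator_of_notMem, if_false]
      exact (hm.empty y y.2).ge
  choose ν hν using hφ
  have hνca : @CountablyAdditive ℕ X ⊤ _ _ ν := by
    refine hOT ℕ ⊤ ν fun y hy A _ hA => ?_
    have h0 : ∀ S, y (ν S) = ∑' k : S, y (z k) := fun S => hν S ⟨y, hy⟩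
    simp only [h0]
    have h1 : HasSum (fun k : ↥(⋃ n, A n) => y (z k)) (∑' k : ↥(⋃ n, A n), y (z k)) :=
      ((hsum y hy).subtype _).hasSum
    rw [← (Set.unionEqSigmaOfDisjoint hA).symm.hasSum_iff] at h1
    exact h1.sigma fun n => ((hsum y hy).subtype (A n)).hasSum
  have hνs : ∀ k, ν {k} = z k := fun k => eq_of_total hYtotal fun y hy =>
    (hν {k} ⟨y, hy⟩).trans (tsum_singleton k fun k => y (z k))
  have := hνca (fun k => {k}) (fun _ => trivial) fun i j hij => by
    simpa [Function.onFun] using hij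
  simp only [hνs] at this
  exact this.summable

/-- A dominated point over a disjoint union splits; the two summands come from the Hahn–Banach
theorem on `Y × Y`, extending from the diagonal. -/
lemma exists_add_domPts {X : Type*} [NormedAddCommGroup X] [NormedSpace ℝ X]
    {Y : Submodule ℝ (X →L[ℝ] ℝ)} (hYtotal : ∀ x : X, (∀ f ∈ Y, f x = 0) → x = 0)
    {m : (X →L[ℝ] ℝ) → Set ℕ → ℝ} (hm : SupportSystem Y m)
    {T T' : Set ℕ} (hT : Disjoint T T') {x : X} (hx : x ∈ domPts Y m (T ∪ T')) :
    ∃ x₁ ∈ domPts Y m T, ∃ x₂ ∈ domPts Y m T', x₁ + x₂ = x := by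
  let L : (Y × Y) →ₗ[ℝ] ℝ :=
    { toFun := fun p => (p.1 : X →L[ℝ] ℝ) x
      map_add' := fun _ _ => rfl
      map_smul' := fun _ _ => rfl }
  let D : Submodule ℝ (Y × Y) := LinearMap.range (LinearMap.id.prod LinearMap.id : Y →ₗ[ℝ] Y × Y)
  obtain ⟨g, hgD, hgN⟩ := exists_extension_of_le_sublinear ⟨D, L ∘ₗ D.subtype⟩
    (fun p : Y × Y => m p.1 T + m p.2 T')
    (fun c hc p => by
      show m (c • (p.1 : X →L[ℝ] ℝ)) T + m (c • (p.2 : X →L[ℝ] ℝ)) T' = _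
      rw [hm.smul _ _ _ hc.le, hm.smul _ _ _ hc.le, mul_add])
    (fun p q => by
      have h1 := hm.add_le T (p.1 : X →L[ℝ] ℝ) q.1
      have h2 := hm.add_le T' (p.2 : X →L[ℝ] ℝ) q.2
      show m ((p.1 : X →L[ℝ] ℝ) + q.1) T + m ((p.2 : X →L[ℝ] ℝ) + q.2) T' ≤ _
      linarith)
    (by
      rintro ⟨_, ⟨y, rfl⟩⟩
      show (y : X →L[ℝ] ℝ) x ≤ m y T + m y T'
      rw [← hm.union y y.2 T T' hT]
      exact hx y y.2)
  have h0 : ∀ S, m 0 S = 0 := fun S => by simpa using hm.smul S 0 0 le_rfl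
  have hg1 : ∀ y : Y, g (y, 0) ≤ m y T := fun y => by simpa [h0] using hgN (y, 0)
  have hg2 : ∀ y : Y, g (0, y) ≤ m y T' := fun y => by simpa [h0] using hgN (0, y)
  obtain ⟨x₁, hx₁⟩ := hm.repr T (g ∘ₗ LinearMap.inl ℝ Y Y) hg1
  obtain ⟨x₂, hx₂⟩ := hm.repr T' (g ∘ₗ LinearMap.inr ℝ Y Y) hg2
  refine ⟨x₁, fun y hy => (hx₁ ⟨y, hy⟩).trans_le (hg1 _), x₂,
    fun y hy => (hx₂ ⟨y, hy⟩).trans_le (hg2 _), eq_of_total hYtotal fun y hy => ?_⟩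
  have h1 : y x₁ = g (⟨y, hy⟩, 0) := hx₁ ⟨y, hy⟩
  have h2 : y x₂ = g (0, ⟨y, hy⟩) := hx₂ ⟨y, hy⟩
  have h3 : g (⟨y, hy⟩, ⟨y, hy⟩) = y x := hgD ⟨(⟨y, hy⟩, ⟨y, hy⟩), ⟨⟨y, hy⟩, rfl⟩⟩
  rw [map_add, h1, h2, ← map_add, ← h3]
  simp

lemma SupportSystem.tendsto_Ici {X : Type*} [NormedAddCommGroup X] [NormedSpace ℝ X]
    {Y : Submodule ℝ (X →L[ℝ] ℝ)} {m : (X →L[ℝ] ℝ) → Set ℕ → ℝ} (hm : SupportSystem Y m)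
    {y : X →L[ℝ] ℝ} (hy : y ∈ Y) : Tendsto (fun k => m y (Ici k)) atTop (𝓝 0) := by
  have hs := (hm.hasSum y hy (fun k => {k}) fun i j hij => by
    simpa [Function.onFun] using hij).tendsto_sum_nat
  have hk : ∀ k, m y (Ici k) = m y (⋃ k : ℕ, {k}) - ∑ i ∈ Finset.range k, m y {i} := by
    intro k
    induction k with
    | zero =>
      have h1 : Ici 0 = ⋃ k : ℕ, {k} := by ext i; simp
      simp [h1]
    | succ k ih =>
      have h1 : Ici k = {k} ∪ Ici (k + 1) := by
        ext i; simp only [mem_Ici, mem_union, mem_singleton_iff]; omega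
      have h2 : Disjoint {k} (Ici (k + 1)) := by simp
      rw [h1, hm.union y hy _ _ h2] at ih
      rw [Finset.sum_range_succ]
      linarith
  simp only [hk]
  simpa using (tendsto_const_nhds (x := m y (⋃ k : ℕ, {k}))).sub hs

/-- A dominated point over `[N, ∞)` is the norm limit of dominated points over finite blocks
`[N, K)`, so every `δ` below its norm is exceeded by the norm of a point over such a block. -/
lemma exists_block {X : Type*} [NormedAddCommGroup X] [NormedSpace ℝ X]
    {Y : Submodule ℝ (X →L[ℝ] ℝ)} (hYtotal : ∀ x : X, (∀ f ∈ Y, f x = 0) → x = 0)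
    (hOT : HasOrliczThomas (Y : Set (X →L[ℝ] ℝ)))
    {m : (X →L[ℝ] ℝ) → Set ℕ → ℝ} (hm : SupportSystem Y m) {N : ℕ} {x : X}
    (hx : x ∈ domPts Y m (Ici N)) {δ : ℝ} (hδ : δ < ‖x‖) :
    ∃ K, N ≤ K ∧ ∃ z ∈ domPts Y m (Ico N K), δ < ‖z‖ := by
  have hstep : ∀ (k : ℕ) (r : domPts Y m (Ici (N + k))), ∃ y ∈ domPts Y m {N + k},
      ∃ r' : domPts Y m (Ici (N + (k + 1))), y + r' = (r : X) := by
    intro k r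
    have h1 : Ici (N + k) = {N + k} ∪ Ici (N + (k + 1)) := by
      ext i; simp only [mem_Ici, mem_union, mem_singleton_iff]; omega
    have h2 : Disjoint {N + k} (Ici (N + (k + 1))) := by simp
    obtain ⟨y, hy, r', hr', h⟩ := exists_add_domPts hYtotal hm h2 (x := (r : X))
      (by rw [← h1]; exact r.2)
    exact ⟨y, hy, ⟨r', hr'⟩, h⟩
  choose y hy next hnext using hstep
  let r : (k : ℕ) → domPts Y m (Ici (N + k)) := fun k => Nat.rec ⟨x, hx⟩ next k
  let z : ℕ → X := fun k => y k (r k)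
  have hr : ∀ k : ℕ, z k + (r (k + 1)).1 = (r k).1 := fun k => hnext k (r k)
  have hpart : ∀ k : ℕ, ∑ i ∈ Finset.range k, z i + (r k).1 = x := by
    intro k
    induction k with
    | zero => simp [r]
    | succ k ih => rw [Finset.sum_range_succ, add_assoc, hr, ih]
  have hmem : ∀ k, ∑ i ∈ Finset.range k, z i ∈ domPts Y m (Ico N (N + k)) := by
    intro k
    induction k with
    | zero =>
      intro f hf
      simp [hm.empty f hf]
    | succ k ih =>
      have h1 : Ico N (N + (k + 1)) = Ico N (N + k) ∪ {N + k} := by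
        ext i; simp only [mem_Ico, mem_union, mem_singleton_iff]; omega
      rw [Finset.sum_range_succ, h1]
      exact add_mem_domPts hm (by simp) ih (hy k (r k))
  have hsum : Summable z := summable_of_mem_domPts hYtotal hOT hm (I := fun k => {N + k})
    (fun i j hij => by simpa [Function.onFun] using hij) fun k => hy k (r k)
  have hlim := hsum.hasSum.tendsto_sum_nat
  have hx' : ∑' i, z i = x := by
    refine eq_of_total hYtotal fun f hf => ?_
    have h1 := (f.continuous.tendsto _).comp hlim
    have h2 : Tendsto (fun k => f (r k).1) atTop (𝓝 0) := by
      have hsh : Tendsto (fun k => N + k) atTop atTop := by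
        simpa only [add_comm] using tendsto_add_atTop_nat N
      have h3 := (((hm.tendsto_Ici hf).comp hsh).abs).add
        (((hm.tendsto_Ici (Y.neg_mem hf)).comp hsh).abs)
      simp only [abs_zero, add_zero] at h3
      exact squeeze_zero_norm (fun k => abs_le_of_mem_domPts (r k).2 hf) h3
    have h3 := h1.add h2
    have h4 : ∀ k, f (∑ i ∈ Finset.range k, z i) + f (r k).1 = f x := fun k => by
      rw [← map_add, hpart]
    simp only [Function.comp_def, h4, add_zero] at h3
    exact tendsto_nhds_unique h3 tendsto_const_nhds
  rw [hx'] at hlim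
  obtain ⟨k, hk⟩ := (hlim.norm.eventually (lt_mem_nhds hδ)).exists
  exact ⟨N + k, Nat.le_add_right N k, _, hmem k, hk⟩

/-- Gliding hump: otherwise infinitely many disjoint blocks would carry dominated points with norms
bounded away from `0`, against their summability. -/
lemma tendsto_zero_of_mem_domPts {X : Type*} [NormedAddCommGroup X] [NormedSpace ℝ X]
    {Y : Submodule ℝ (X →L[ℝ] ℝ)} (hYtotal : ∀ x : X, (∀ f ∈ Y, f x = 0) → x = 0)
    (hOT : HasOrliczThomas (Y : Set (X →L[ℝ] ℝ)))
    {m : (X →L[ℝ] ℝ) → Set ℕ → ℝ} (hm : SupportSystem Y m) {x : ℕ → X}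
    (hx : ∀ N, x N ∈ domPts Y m (Ici N)) : Tendsto x atTop (𝓝 0) := by
  rw [Metric.tendsto_atTop]
  by_contra hcon
  push Not at hcon
  obtain ⟨ε, hε, hfreq⟩ := hcon
  have hblock : ∀ n, ∃ a, n ≤ a ∧ ∃ b, a ≤ b ∧ ∃ z ∈ domPts Y m (Ico a b), ε / 2 < ‖z‖ := by
    intro n
    obtain ⟨a, hna, ha⟩ := hfreq n
    rw [dist_zero_right] at ha
    obtain ⟨b, hb⟩ := exists_block hYtotal hOT hm (hx a) (lt_of_lt_of_le (half_lt_self hε) ha)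
    exact ⟨a, hna, b, hb⟩
  choose a ha b hab z hz hzε using hblock
  let s : ℕ → ℕ := fun j => Nat.rec 0 (fun _ n => b n) j
  have hs : ∀ j, s (j + 1) = b (s j) := fun _ => rfl
  have hmono : Monotone s := monotone_nat_of_le_succ fun j => by
    rw [hs]; exact (ha _).trans (hab _)
  have hlt : ∀ i j, i < j → Disjoint (Ico (a (s i)) (b (s i))) (Ico (a (s j)) (b (s j))) := by
    intro i j hij
    rw [Set.disjoint_left]
    intro t ht ht'
    have h1 : s (i + 1) ≤ s j := hmono hij
    rw [hs] at h1
    have h2 := ha (s j)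
    have h3 := ht.2
    have h4 := ht'.1
    omega
  have hsum := summable_of_mem_domPts hYtotal hOT hm
    (I := fun j => Ico (a (s j)) (b (s j)))
    (fun i j hij => (lt_or_gt_of_ne hij).elim (hlt i j) fun h => (hlt j i h).symm)
    fun j => hz (s j)
  have h0 := hsum.tendsto_atTop_zero.norm
  rw [norm_zero] at h0
  obtain ⟨j, hj⟩ := (h0.eventually (gt_mem_nhds (half_pos hε))).exists
  exact lt_asymm hj (hzε _)

/-- Let `X` be a Banach space and `Y ⊆ X*` a total linear subspace
with the Orlicz–Thomas property such that `(X, μ(X,Y))` is quasi-complete. If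
`M : Σ → b(X)` has relatively `σ(X,Y)`-compact values, `s(x*, M)` is countably additive
for every `x* ∈ Y`, and `s(x*, M)` is finitely additive for every `x* ∈ X*`, then `M`
is a multimeasure: `s(x*, M)` is countably additive for every `x* ∈ X*`. -/
theorem statement13 {Ω X : Type*} [MeasurableSpace Ω]
    [NormedAddCommGroup X] [NormedSpace ℝ X] [CompleteSpace X]
    (Y : Submodule ℝ (X →L[ℝ] ℝ))
    (hYtotal : ∀ x : X, (∀ f ∈ Y, f x = 0) → x = 0)
    (hOT : HasOrliczThomas (Y : Set (X →L[ℝ] ℝ)))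
    (hqc : ∀ S : Set X, @IsClosed X (mackeyTop Y) S →
      @Bornology.IsVonNBounded ℝ X _ _ _ (mackeyTop Y) S →
      @IsComplete X (mackeyUniformity Y) S)
    (M : Set Ω → Set X)
    (hne : ∀ A : Set Ω, MeasurableSet A → (M A).Nonempty)
    (hbd : ∀ A : Set Ω, MeasurableSet A → Bornology.IsBounded (M A))
    (hcpt : ∀ A : Set Ω, MeasurableSet A →
      @IsCompact X (sigmaTop (Y : Set (X →L[ℝ] ℝ)))
        (@closure X (sigmaTop (Y : Set (X →L[ℝ] ℝ))) (M A)))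
    (hca : ∀ f ∈ Y, CountablyAdditive (fun A => supportFn f (M A)))
    (hfa : ∀ f : X →L[ℝ] ℝ, FinitelyAdditive (fun A => supportFn f (M A))) :
    ∀ f : X →L[ℝ] ℝ, CountablyAdditive (fun A => supportFn f (M A)) := by
  intro f A hA hdisj
  let U : Set ℕ → Set Ω := fun T => ⋃ n ∈ T, A n
  have hU : ∀ T, MeasurableSet (U T) := fun T => MeasurableSet.biUnion T.to_countable fun n _ => hA n
  have hUd : ∀ T T' : Set ℕ, Disjoint T T' → Disjoint (U T) (U T') := by
    intro T T' h
    refine Set.disjoint_iUnion₂_left.2 fun i hi => Set.disjoint_iUnion₂_right.2 fun j hj => ?_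
    exact hdisj fun hij => Set.disjoint_left.1 h hi (hij ▸ hj)
  let m : (X →L[ℝ] ℝ) → Set ℕ → ℝ := fun g T => supportFn g (M (U T))
  have hunion : ∀ g (T T' : Set ℕ), Disjoint T T' → m g (T ∪ T') = m g T + m g T' := by
    intro g T T' h
    have h1 : U (T ∪ T') = U T ∪ U T' := biUnion_union T T' A
    show supportFn g (M (U (T ∪ T'))) = _
    rw [h1]
    exact hfa g _ _ (hU T) (hU T') (hUd T T' h)
  have hempty : ∀ g, m g ∅ = 0 := by
    intro g
    have := hunion g ∅ ∅ (by simp)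
    rw [union_self] at this
    linarith
  have hm : SupportSystem Y m :=
    { add_le := fun T g g' => supportFn_add_le (hne _ (hU T)) (hbd _ (hU T)) g g'
      smul := fun T g c hc => supportFn_smul hc g
      repr := fun T φ hφ => krein hqc (hne _ (hU T)) (hbd _ (hU T)) (hcpt _ (hU T)) φ hφ
      empty := fun y _ => hempty y
      union := fun y _ => hunion y
      hasSum := fun y hy I hI => by
        have h1 : U (⋃ k, I k) = ⋃ k, U (I k) := by
          ext w
          simp only [U, mem_iUnion, exists_prop]
          tauto
        show HasSum (fun k => supportFn y (M (U (I k)))) (supportFn y (M (U (⋃ k, I k))))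
        rw [h1]
        exact hca y hy (fun k => U (I k)) (fun k => hU _) fun i j hij => hUd _ _ (hI hij) }
  have hsub : ∀ T, ∀ x ∈ M (U T), x ∈ domPts Y m T := fun T x hx y _ =>
    le_supportFn (hbd _ (hU T)) y hx
  have hsel : ∀ T, ∀ ε > 0, ∃ x ∈ M (U T), m f T - ε < f x := by
    intro T ε hε
    by_contra! h
    have := supportFn_le (f := f) (hne _ (hU T)) h
    have h' : supportFn f (M (U T)) = m f T := rfl
    linarith
  have hpow : ∀ n : ℕ, (0 : ℝ) < (1 / 2) ^ n := fun n => by positivity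
  have hgeo : Summable fun n : ℕ => ((1 : ℝ) / 2) ^ n := summable_geometric_two
  -- The tails `m f [N, ∞)` tend to zero.
  have htail : Tendsto (fun N => m f (Ici N)) atTop (𝓝 0) := by
    choose x hx hfx using fun N : ℕ => hsel (Ici N) ((1 / 2) ^ N) (hpow N)
    have h0 := tendsto_zero_of_mem_domPts hYtotal hOT hm fun N => hsub _ _ (hx N)
    have h1 := (f.continuous.tendsto 0).comp h0
    rw [map_zero] at h1
    have h2 := h1.add hgeo.tendsto_atTop_zero
    rw [add_zero] at h2
    refine tendsto_of_tendsto_of_tendsto_of_le_of_le h1 h2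
      (fun N => le_supportFn (hbd _ (hU _)) f (hx N)) fun N => ?_
    have := hfx N
    simp only [Function.comp_apply]
    linarith
  have hsum : Summable fun n => m f {n} := by
    choose x hx hfx using fun n : ℕ => hsel {n} ((1 / 2) ^ n) (hpow n)
    have h0 := summable_of_mem_domPts hYtotal hOT hm (I := fun n => {n})
      (fun i j hij => by simpa [Function.onFun] using hij) fun n => hsub _ _ (hx n)
    have h1 : Summable fun n => f (x n) := f.summable h0
    have h2 : Summable fun n => m f {n} - f (x n) := by
      refine Summable.of_nonneg_of_le (fun n => ?_) (fun n => ?_) hgeo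
      · exact sub_nonneg.2 (le_supportFn (hbd _ (hU _)) f (hx n))
      · linarith [hfx n]
    simpa using h2.add h1
  have hpart : ∀ N, ∑ n ∈ Finset.range N, m f {n} + m f (Ici N) = m f univ := by
    intro N
    induction N with
    | zero =>
      have : Ici 0 = (univ : Set ℕ) := by ext; simp
      simp [this]
    | succ N ih =>
      have h1 : Ici N = {N} ∪ Ici (N + 1) := by
        ext i; simp only [mem_Ici, mem_union, mem_singleton_iff]; omega
      rw [h1, hunion f _ _ (by simp)] at ih
      rw [Finset.sum_range_succ, add_assoc, ih]
  have hlim : ∑' n, m f {n} = m f univ := by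
    have h1 := hsum.hasSum.tendsto_sum_nat.add htail
    simp only [hpart, add_zero] at h1
    exact tendsto_nhds_unique h1 tendsto_const_nhds
  have hfinal := hsum.hasSum
  rw [hlim] at hfinal
  simpa [m, U] using hfinal
end
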